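/- Let ω be an irrational number of bounded type. For every κ > 0 there exist a 1-periodic C^∞ map D : ℝ → SL(2,ℝ) and a sequence of 1-periodic C^∞ maps C_k : ℝ → SL(2,ℝ) such that: (i) L(D) ≥ κ; (ii) for every k, L(C_k) = 0, i.e. the sequence (1/m)∫₀¹ log‖C_k^m(x)‖ dx tends to 0 as m → ∞; and (iii) for every j ∈ ℕ, sup_x ‖(d^j/dx^j)(C_k − D)(x)‖ → 0 as k → ∞ (derivatives taken entrywise). -/

import Mathlib

open Real MeasureTheory Filter

attribute [local instance] Matrix.normedAddCommGroup Matrix.normedSpace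

/-- Operator norm of a 2×2 real matrix, acting on Euclidean space. -/
noncomputable def opNorm (A : Matrix (Fin 2) (Fin 2) ℝ) : ℝ :=
  ‖(Matrix.toEuclideanCLM (𝕜 := ℝ) A : EuclideanSpace ℝ (Fin 2) →L[ℝ] EuclideanSpace ℝ (Fin 2))‖

/-- Iterates of the quasi-periodic cocycle: A^n(x) = A(x+(n-1)ω)⋯A(x+ω)A(x). -/
noncomputable def cocycle (ω : ℝ) (A : ℝ → Matrix (Fin 2) (Fin 2) ℝ) :
    ℕ → ℝ → Matrix (Fin 2) (Fin 2) ℝ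
  | 0, _ => 1
  | n + 1, x => A (x + n * ω) * cocycle ω A n x

/-- Finite Lyapunov exponents L_n(A) = (1/n) ∫₀¹ log ‖A^n(x)‖ dx. -/
noncomputable def LEn (ω : ℝ) (A : ℝ → Matrix (Fin 2) (Fin 2) ℝ) (n : ℕ) : ℝ :=
  (1 / n) * ∫ x in (0:ℝ)..1, Real.log (opNorm (cocycle ω A n x))

/-- The Schrödinger cocycle S_v(x) = [[v(x), -1],[1,0]]. -/
def SchrodingerCocycle (v : ℝ → ℝ) (x : ℝ) : Matrix (Fin 2) (Fin 2) ℝ := !![v x, -1; 1, 0]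

/-- The denominators of the continued fraction convergents of ω. -/
noncomputable def cfDen (ω : ℝ) (k : ℕ) : ℝ := (GenContFract.of ω).dens k

/-!
Start from the constant cocycle `diag(e^λ, e^{-λ})` and build approximations
`D_k(y) = V_k(y + ω) diag(e^{g_k(y)}, e^{-g_k(y)}) V_k(y)⁻¹`, whose Lyapunov exponent is the mean
`Λ_k` of `g_k`. Step `k` perturbs `D_k` on a tiny interval `{χ_k ≠ 0}` along a fixed nilpotent
direction which `V_k` contracts by `exp(-∑_{i<k} a_i)`; the intervals shrink slowly enough for this
factor to beat the derivatives of `χ_k`, so the perturbation is small in every `C^j`. It is undone,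
up to a truncation error, by a further conjugacy given by a series along the orbit, at the price of
lowering the mean of `g_k`: `Λ_{k+1} = Λ_k - a_k ∫ χ_k`. Bad approximability of `ω`
keeps the translates of the support of `χ_k` disjoint and makes the Birkhoff sums of `g_k` grow
linearly, so that the truncation errors are negligible.

Any two sequences of weights `a` that agree up to step `k` give `C^∞` limits that are close. The
smallest admissible weights lose a summable part of the exponent, so the limit keeps exponent at
least `κ`; the largest ones lose a fixed proportion of it at each step and force it to zero.
Switching from the former to the latter at step `k` gives the cocycles `C_k`.
-/

/-! ### Badly approximable frequencies -/

section BadlyApproximable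

/-- `ω` is badly approximable with constant `c`. The distance of `n * ω` to the integers is measured
by `|sin (π * (n * ω))|`, which is comparable to it and smooth in the angle. -/
structure BadlyApproximable (ω c : ℝ) : Prop where
  pos : 0 < c
  le_one : c ≤ 1
  div_le_abs_sin : ∀ n : ℕ, 1 ≤ n → c / n ≤ |sin (π * (n * ω))|

variable {ω : ℝ}

theorem not_terminatedAt_of_irrational (hω : Irrational ω) (n : ℕ) :
    ¬ (GenContFract.of ω).TerminatedAt n := fun h => by
  obtain ⟨q, hq⟩ := (GenContFract.terminates_iff_rat ω).1 ⟨n, h⟩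
  exact hω ⟨q, hq.symm⟩

theorem exists_int_get?_eq_of_irrational (hω : Irrational ω) (n : ℕ) :
    ∃ z : ℤ, (GenContFract.of ω).s.get? n = some ⟨1, (z : ℝ)⟩ := by
  obtain ⟨⟨a, b⟩, hab⟩ := Option.ne_none_iff_exists'.1 (not_terminatedAt_of_irrational hω n)
  obtain ⟨rfl, z, rfl⟩ := GenContFract.of_partNum_eq_one_and_exists_int_partDen_eq hab
  exact ⟨z, hab⟩

theorem exists_int_nums_dens_eq (hω : Irrational ω) (n : ℕ) :
    ∃ a b : ℤ, (GenContFract.of ω).nums n = a ∧ (GenContFract.of ω).dens n = b := by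
  induction n using Nat.twoStepInduction with
  | zero => exact ⟨⌊ω⌋, 1, by simp, by simp⟩
  | one =>
    obtain ⟨z, hz⟩ := exists_int_get?_eq_of_irrational hω 0
    refine ⟨z * ⌊ω⌋ + 1, z, ?_, GenContFract.first_den_eq hz⟩
    simp [GenContFract.first_num_eq hz]
  | more n ih₀ ih₁ =>
    obtain ⟨z, hz⟩ := exists_int_get?_eq_of_irrational hω (n + 1)
    obtain ⟨a₀, b₀, ha₀, hb₀⟩ := ih₀
    obtain ⟨a₁, b₁, ha₁, hb₁⟩ := ih₁
    refine ⟨z * a₁ + a₀, z * b₁ + b₀, ?_, ?_⟩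
    · rw [GenContFract.nums_recurrence hz ha₀ ha₁]; push_cast; ring
    · rw [GenContFract.dens_recurrence hz hb₀ hb₁]; push_cast; ring

theorem one_le_dens (ω : ℝ) (n : ℕ) : 1 ≤ (GenContFract.of ω).dens n := by
  induction n with
  | zero => simp
  | succ n ih => exact ih.trans GenContFract.of_den_mono

theorem exists_le_dens_of_irrational (hω : Irrational ω) (R : ℝ) :
    ∃ k, R ≤ (GenContFract.of ω).dens k := by
  obtain ⟨N, hN⟩ := exists_nat_ge R
  refine ⟨N + 5, hN.trans ?_⟩
  have fib_le_den := GenContFract.succ_nth_fib_le_of_nth_den (v := ω) (n := N + 5)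
    (Or.inr (not_terminatedAt_of_irrational hω _))
  have le_fib : N ≤ Nat.fib (N + 5 + 1) :=
    (by omega : N ≤ N + 5).trans ((Nat.le_fib_self (by omega)).trans Nat.fib_le_fib_succ)
  exact (by exact_mod_cast le_fib : (N : ℝ) ≤ Nat.fib (N + 5 + 1)).trans fib_le_den

theorem abs_dens_mul_sub_nums_le (hω : Irrational ω) (i : ℕ) :
    |(GenContFract.of ω).dens i * ω - (GenContFract.of ω).nums i| ≤
      1 / (GenContFract.of ω).dens i := by
  have dens_pos := fun k => zero_lt_one.trans_le (one_le_dens ω k)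
  set A := (GenContFract.of ω).nums
  set B := (GenContFract.of ω).dens
  have approx : |ω - A i / B i| ≤ 1 / (B i * B (i + 1)) := by
    have h := GenContFract.abs_sub_convs_le (not_terminatedAt_of_irrational hω i)
    rwa [GenContFract.conv_eq_num_div_den] at h
  have hB : 0 < B i := dens_pos i
  have hB' : 0 < B (i + 1) := dens_pos (i + 1)
  have hmono : B i ≤ B (i + 1) := GenContFract.of_den_mono
  calc |B i * ω - A i| = B i * |ω - A i / B i| := by
        rw [← abs_of_pos hB, ← abs_mul, abs_of_pos hB]; congr 1; field_simp
    _ ≤ B i * (1 / (B i * B (i + 1))) := by gcongr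
    _ = 1 / B (i + 1) := by field_simp
    _ ≤ 1 / B i := by gcongr

theorem one_div_two_mul_dens_le_abs_mul_sub (hω : Irrational ω) {n i : ℕ} (hn : 1 ≤ n) {p : ℤ}
    (hi : 2 * n ≤ (GenContFract.of ω).dens i)
    (hne : n * (GenContFract.of ω).nums i - p * (GenContFract.of ω).dens i ≠ 0) :
    1 / (2 * (GenContFract.of ω).dens i) ≤ |n * ω - p| := by
  have approx := abs_dens_mul_sub_nums_le hω i
  have hB : 0 < (GenContFract.of ω).dens i := zero_lt_one.trans_le (one_le_dens ω i)
  obtain ⟨a, b, ha, hb⟩ := exists_int_nums_dens_eq hω i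
  simp only [ha, hb] at hne approx hi hB ⊢
  have : (0 : ℝ) < n := by exact_mod_cast hn
  have one_le : (1 : ℝ) ≤ |(n : ℝ) * a - p * b| := by
    have hne' : (n : ℤ) * a - p * b ≠ 0 := by exact_mod_cast hne
    exact_mod_cast Int.one_le_abs hne'
  have split : (1 : ℝ) ≤ b * |n * ω - p| + n * |b * ω - a| := calc
    (1 : ℝ) ≤ |b * (n * ω - p) - n * (b * ω - a)| := by convert one_le using 2; ring
    _ ≤ |b * (n * ω - p)| + |n * (b * ω - a)| := abs_sub _ _
    _ = _ := by rw [abs_mul, abs_mul, abs_of_pos hB, Nat.abs_cast]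
  have small : n * |b * ω - a| ≤ 1 / 2 := calc
    n * |b * ω - a| ≤ n * (1 / (2 * n)) := by gcongr; exact approx.trans (by gcongr)
    _ = 1 / 2 := by field_simp
  rw [div_le_iff₀ (by positivity)]
  linarith

theorem mul_nums_sub_mul_dens_ne_zero_or_succ (hω : Irrational ω) {x : ℝ} (hx : x ≠ 0) (y : ℝ)
    (k : ℕ) :
    x * (GenContFract.of ω).nums k - y * (GenContFract.of ω).dens k ≠ 0 ∨
      x * (GenContFract.of ω).nums (k + 1) - y * (GenContFract.of ω).dens (k + 1) ≠ 0 := by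
  have det : (GenContFract.of ω).nums k * (GenContFract.of ω).dens (k + 1) -
      (GenContFract.of ω).dens k * (GenContFract.of ω).nums (k + 1) = (-1) ^ (k + 1) :=
    SimpContFract.determinant (s := ⟨_, GenContFract.of_isSimpContFract ω⟩)
      (not_terminatedAt_of_irrational hω k)
  by_contra! h
  have : x * (-1) ^ (k + 1) = 0 := by
    rw [← det]
    linear_combination (GenContFract.of ω).dens (k + 1) * h.1 - (GenContFract.of ω).dens k * h.2
  simp [hx] at this

variable {M : ℝ}

theorem exists_dens_near_of_boundedType (hω : Irrational ω) (hM : 1 ≤ M)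
    (hbt : ∀ k : ℕ, cfDen ω (k + 1) ≤ M * cfDen ω k) {R : ℝ} (hR : 1 ≤ R) :
    ∃ k, R ≤ cfDen ω k ∧ cfDen ω k ≤ M * R := by
  classical
  have hex : ∃ k, R ≤ cfDen ω k := exists_le_dens_of_irrational hω R
  refine ⟨Nat.find hex, Nat.find_spec hex, ?_⟩
  rcases h : Nat.find hex with _ | k
  · have : cfDen ω 0 = 1 := by simp [cfDen]
    rw [this]
    nlinarith
  · have hk : cfDen ω k < R := not_le.1 (Nat.find_min hex (by omega))
    exact (hbt k).trans (by gcongr)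

theorem one_div_le_abs_mul_sub_of_boundedType (hω : Irrational ω) (hM : 1 ≤ M)
    (hbt : ∀ k : ℕ, cfDen ω (k + 1) ≤ M * cfDen ω k) {n : ℕ} (hn : 1 ≤ n) (p : ℤ) :
    1 / (4 * M ^ 2 * n) ≤ |n * ω - p| := by
  have hn' : (1 : ℝ) ≤ n := by exact_mod_cast hn
  obtain ⟨k, hk, hkM⟩ := exists_dens_near_of_boundedType hω hM hbt (R := 2 * n) (by linarith)
  have hmono : cfDen ω k ≤ cfDen ω (k + 1) := GenContFract.of_den_mono
  have hstep : cfDen ω (k + 1) ≤ M * (M * (2 * n)) := (hbt k).trans (by gcongr)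
  have bound : ∀ i, 2 * n ≤ cfDen ω i → cfDen ω i ≤ M * (M * (2 * n)) →
      n * (GenContFract.of ω).nums i - p * (GenContFract.of ω).dens i ≠ 0 →
      1 / (4 * M ^ 2 * n) ≤ |n * ω - p| := fun i hi hiM hne => by
    refine le_trans ?_ (one_div_two_mul_dens_le_abs_mul_sub hω hn hi hne)
    exact one_div_le_one_div_of_le (mul_pos two_pos (by linarith [one_le_dens ω i]))
      (by change 2 * cfDen ω i ≤ _; linarith)
  rcases mul_nums_sub_mul_dens_ne_zero_or_succ hω (by positivity : (n : ℝ) ≠ 0) p k with h | h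
  · exact bound k hk (hmono.trans hstep) h
  · exact bound (k + 1) (hk.trans hmono) hstep h

theorem two_mul_abs_sub_round_le_abs_sin (x : ℝ) : 2 * |x - round x| ≤ |sin (π * x)| := by
  have hround : |π * (x - round x)| ≤ π / 2 := by
    rw [abs_mul, abs_of_pos pi_pos]
    nlinarith [pi_pos, abs_sub_round x]
  calc 2 * |x - round x| = 2 / π * |π * (x - round x)| := by
        rw [abs_mul, abs_of_pos pi_pos]; field_simp
    _ ≤ |sin (π * (x - round x))| := mul_abs_le_abs_sin hround
    _ = |sin (π * x)| := by
        rw [mul_sub, mul_comm π (round x : ℝ), sin_sub_int_mul_pi, abs_mul]; simp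

theorem badlyApproximable_of_boundedType (hω : Irrational ω) (hM : 1 ≤ M)
    (hbt : ∀ k : ℕ, cfDen ω (k + 1) ≤ M * cfDen ω k) :
    BadlyApproximable ω (1 / (2 * M ^ 2)) where
  pos := by positivity
  le_one := by rw [div_le_one (by positivity)]; nlinarith
  div_le_abs_sin n hn := calc
    1 / (2 * M ^ 2) / n = 2 * (1 / (4 * M ^ 2 * n)) := by
      have : (n : ℝ) ≠ 0 := by positivity
      field_simp; norm_num
    _ ≤ 2 * |n * ω - round (n * ω)| := by
      gcongr; exact one_div_le_abs_mul_sub_of_boundedType hω hM hbt hn _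
    _ ≤ |sin (π * (n * ω))| := two_mul_abs_sub_round_le_abs_sin _

end BadlyApproximable

/-! ### Equidistribution of orbits of a badly approximable rotation -/

section Equidistribution

open scoped NNReal

theorem integral_comp_add_of_periodic {F : ℝ → ℝ} (hF : Function.Periodic F 1) (a : ℝ) :
    ∫ x in (0 : ℝ)..1, F (x + a) = ∫ x in (0 : ℝ)..1, F x := by
  rw [intervalIntegral.integral_comp_add_right]
  simpa [add_comm] using hF.intervalIntegral_add_eq (0 + a) 0

theorem birkhoffSum_add_right (ω : ℝ) (F : ℝ → ℝ) (n : ℕ) (x : ℝ) :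
    birkhoffSum (· + ω) F n x = ∑ i ∈ Finset.range n, F (x + i * ω) := by
  simp [birkhoffSum, add_right_iterate]

variable {F : ℝ → ℝ} {K : ℝ≥0} {ω : ℝ}

theorem periodic_birkhoffSum (hF : Function.Periodic F 1) (ω : ℝ) (n : ℕ) :
    Function.Periodic (birkhoffSum (· + ω) F n) 1 := fun x => by
  simp only [birkhoffSum_add_right, add_right_comm x 1, hF _]

theorem continuous_birkhoffSum_add_right (hF : Continuous F) (ω : ℝ) (n : ℕ) :
    Continuous (birkhoffSum (· + ω) F n) := by
  simp only [funext (birkhoffSum_add_right ω F n)]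
  fun_prop

theorem integral_birkhoffSum (hF : Function.Periodic F 1) (hFc : Continuous F) (ω : ℝ) (n : ℕ) :
    ∫ x in (0 : ℝ)..1, birkhoffSum (· + ω) F n x = n * ∫ x in (0 : ℝ)..1, F x := by
  simp only [birkhoffSum_add_right]
  rw [intervalIntegral.integral_finsetSum fun i _ =>
    (Continuous.intervalIntegrable (by fun_prop) _ _)]
  simp [integral_comp_add_of_periodic hF]

theorem abs_sub_integral_le {C : ℝ} (hF : Continuous F) {x : ℝ} (hosc : ∀ y, |F x - F y| ≤ C) :
    |F x - ∫ y in (0 : ℝ)..1, F y| ≤ C := by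
  have hconst : F x - ∫ y in (0 : ℝ)..1, F y = ∫ y in (0 : ℝ)..1, (F x - F y) := by
    rw [intervalIntegral.integral_sub (by simp) (hF.intervalIntegrable _ _)]
    simp
  rw [hconst]
  simpa using intervalIntegral.norm_integral_le_of_norm_le_const (a := 0) (b := 1)
    (f := fun y => F x - F y) fun y _ => hosc y

theorem abs_sub_le_of_periodic {d : ℝ} (hd : 0 < d) (hF : Function.Periodic F d)
    (hK : LipschitzWith K F) (x y : ℝ) : |F x - F y| ≤ K * d := by
  obtain ⟨z, hz, hyz⟩ := hF.exists_mem_Ico hd y x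
  rw [hyz]
  refine (hK.dist_le_mul x z).trans ?_
  gcongr
  rw [dist_eq, abs_le]
  constructor <;> linarith [hz.1, hz.2]

theorem abs_birkhoffSum_sub_birkhoffSum_le {ω₁ ω₂ δ : ℝ} (hK : LipschitzWith K F) {n : ℕ}
    (hδ : n * |ω₁ - ω₂| ≤ δ) (x₁ x₂ : ℝ) :
    |birkhoffSum (· + ω₁) F n x₁ - birkhoffSum (· + ω₂) F n x₂| ≤ n * K * (|x₁ - x₂| + δ) := by
  simp only [birkhoffSum_add_right, ← Finset.sum_sub_distrib]
  have hterm : ∀ i ∈ Finset.range n,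
      |F (x₁ + i * ω₁) - F (x₂ + i * ω₂)| ≤ K * (|x₁ - x₂| + δ) := fun i hi => by
    have hin : (i : ℝ) ≤ n := by exact_mod_cast (Finset.mem_range.1 hi).le
    refine (hK.dist_le_mul _ _).trans ?_
    gcongr
    calc |x₁ + i * ω₁ - (x₂ + i * ω₂)| = |(x₁ - x₂) + i * (ω₁ - ω₂)| := by congr 1; ring
      _ ≤ |x₁ - x₂| + i * |ω₁ - ω₂| := by
        simpa [abs_mul] using abs_add_le (x₁ - x₂) (i * (ω₁ - ω₂))
      _ ≤ |x₁ - x₂| + δ := by gcongr; exact le_trans (by gcongr) hδ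
  calc |∑ i ∈ Finset.range n, (F (x₁ + i * ω₁) - F (x₂ + i * ω₂))|
      ≤ ∑ i ∈ Finset.range n, |F (x₁ + i * ω₁) - F (x₂ + i * ω₂)| := Finset.abs_sum_le_sum_abs _ _
    _ ≤ ∑ _i ∈ Finset.range n, (K * (|x₁ - x₂| + δ) : ℝ) := Finset.sum_le_sum hterm
    _ = n * K * (|x₁ - x₂| + δ) := by simp [mul_assoc]

theorem periodic_birkhoffSum_rat (hF : Function.Periodic F 1) (r : ℚ) :
    Function.Periodic (birkhoffSum (· + (r : ℝ)) F r.den) (1 / r.den) := by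
  have hden : (r.den : ℝ) ≠ 0 := by exact_mod_cast r.den_ne_zero
  have hr : (r : ℝ) = r.num / r.den := by exact_mod_cast (Rat.num_div_den r).symm
  have period_r : Function.Periodic (birkhoffSum (· + (r : ℝ)) F r.den) r := fun y => by
    have hperiod : F (y + r.den * r) = F y := by
      rw [hr, mul_div_cancel₀ _ hden]
      simpa using hF.int_mul r.num y
    have := birkhoffSum_apply_sub_birkhoffSum (· + (r : ℝ)) F r.den y
    rw [add_right_iterate, nsmul_eq_mul, hperiod, sub_self] at this
    exact sub_eq_zero.1 this
  obtain ⟨a, b, hab⟩ : IsCoprime r.num (r.den : ℤ) := Int.isCoprime_iff_gcd_eq_one.2 r.reduced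
  have hdecomp : (1 / r.den : ℝ) = a * r + b * 1 := by
    rw [hr]
    field_simp
    rw [mul_comm (r.den : ℝ)]
    exact_mod_cast hab.symm
  rw [hdecomp]
  exact (period_r.int_mul a).add_period ((periodic_birkhoffSum hF r r.den).int_mul b)

theorem lipschitzWith_birkhoffSum (hK : LipschitzWith K F) (ω : ℝ) (n : ℕ) :
    LipschitzWith (n * K) (birkhoffSum (· + ω) F n) :=
  LipschitzWith.of_dist_le_mul fun x y => by
    simpa [dist_eq] using abs_birkhoffSum_sub_birkhoffSum_le hK (ω₁ := ω) (ω₂ := ω) (n := n)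
      (δ := 0) (by simp) x y

theorem abs_birkhoffSum_rat_sub_le (hF : Function.Periodic F 1) (hK : LipschitzWith K F) (r : ℚ)
    (x : ℝ) :
    |birkhoffSum (· + (r : ℝ)) F r.den x - r.den * ∫ y in (0 : ℝ)..1, F y| ≤ K := by
  have hden : (0 : ℝ) < r.den := by exact_mod_cast r.den_pos
  rw [← integral_birkhoffSum hF hK.continuous (r : ℝ)]
  refine abs_sub_integral_le (continuous_birkhoffSum_add_right hK.continuous r r.den) fun y => ?_
  have := abs_sub_le_of_periodic (one_div_pos.2 hden) (periodic_birkhoffSum_rat hF r)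
    (lipschitzWith_birkhoffSum hK r r.den) x y
  convert this using 1
  push_cast
  field_simp

theorem abs_birkhoffSum_den_sub_le (hF : Function.Periodic F 1) (hK : LipschitzWith K F) {r : ℚ}
    (hr : (r.den : ℝ) ^ 2 * |ω - r| ≤ 1) (x : ℝ) :
    |birkhoffSum (· + ω) F r.den x - r.den * ∫ y in (0 : ℝ)..1, F y| ≤ 2 * K := by
  have hden : (0 : ℝ) < r.den := by exact_mod_cast r.den_pos
  have hclose : r.den * |ω - r| ≤ 1 / r.den := by
    rw [le_div_iff₀ hden]; linarith
  have hrat := abs_birkhoffSum_rat_sub_le hF hK r x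
  have hdiff := abs_birkhoffSum_sub_birkhoffSum_le hK hclose x x
  have hone : (r.den : ℝ) * K * (|x - x| + 1 / r.den) = K := by
    rw [sub_self, abs_zero]; field_simp; ring
  rw [hone] at hdiff
  linarith [abs_sub_le (birkhoffSum (· + ω) F r.den x) (birkhoffSum (· + (r : ℝ)) F r.den x)
    (r.den * ∫ y in (0 : ℝ)..1, F y)]

theorem abs_birkhoffSum_mul_sub_le {q : ℕ} {I C : ℝ}
    (hblock : ∀ x, |birkhoffSum (· + ω) F q x - q * I| ≤ C) (b : ℕ) (x : ℝ) :
    |birkhoffSum (· + ω) F (b * q) x - (b * q : ℕ) * I| ≤ b * C := by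
  induction b with
  | zero => simp
  | succ b ih =>
    rw [Nat.succ_mul, birkhoffSum_add]
    have hlast := hblock ((· + ω)^[b * q] x)
    push_cast at ih ⊢
    rw [abs_le] at ih hlast ⊢
    constructor <;> linarith

theorem BadlyApproximable.mul_le_pi_mul_den {c : ℝ} (hω : BadlyApproximable ω c) {Q : ℕ}
    (hQ : 0 < Q) {r : ℚ} (hr : |ω - r| ≤ 1 / ((Q + 1) * r.den)) : c * Q ≤ π * r.den := by
  have hden : (0 : ℝ) < r.den := by exact_mod_cast r.den_pos
  have hQ' : (0 : ℝ) < Q := by exact_mod_cast hQ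
  have hr' : (r.den : ℝ) * r = r.num := by exact_mod_cast Rat.den_mul_eq_num r
  have : c / r.den ≤ π / Q := calc
    c / r.den ≤ |sin (π * (r.den * ω))| := hω.div_le_abs_sin _ r.den_pos
    _ = |sin (π * (r.den * ω) - r.num * π)| := by rw [sin_sub_int_mul_pi, abs_mul]; simp
    _ ≤ |π * (r.den * ω) - r.num * π| := abs_sin_le_abs
    _ = π * (r.den * |ω - r|) := by
      rw [← hr', show π * (r.den * ω) - r.den * r * π = π * (r.den * (ω - r)) by ring, abs_mul,
        abs_mul, abs_of_pos pi_pos, Nat.abs_cast]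
    _ ≤ π * (r.den * (1 / ((Q + 1) * r.den))) := by gcongr
    _ = π / (Q + 1) := by field_simp
    _ ≤ π / Q := by gcongr; linarith
  rwa [div_le_div_iff₀ hden hQ'] at this

theorem abs_birkhoffSum_sub_le_of_block {I A B : ℝ} {q : ℕ}
    (hblock : ∀ x, |birkhoffSum (· + ω) F q x - q * I| ≤ A) (hF : ∀ x, |F x - I| ≤ B)
    (n : ℕ) (x : ℝ) :
    |birkhoffSum (· + ω) F n x - n * I| ≤ (n / q : ℕ) * A + (n % q : ℕ) * B := by
  have blocks := abs_birkhoffSum_mul_sub_le hblock (n / q) x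
  have single : ∀ y, |birkhoffSum (· + ω) F 1 y - (1 : ℕ) * I| ≤ B := by simpa using hF
  have rest := abs_birkhoffSum_mul_sub_le single (n % q) ((· + ω)^[n / q * q] x)
  rw [mul_one] at rest
  have hn : (n : ℝ) * I = (n / q * q : ℕ) * I + (n % q : ℕ) * I := by
    rw [← add_mul]; congr 1; exact_mod_cast (Nat.div_add_mod' n q).symm
  have hsum : birkhoffSum (· + ω) F n x = birkhoffSum (· + ω) F (n / q * q) x +
      birkhoffSum (· + ω) F (n % q) ((· + ω)^[n / q * q] x) := by
    rw [← birkhoffSum_add, Nat.div_add_mod']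
  rw [hsum, hn, add_sub_add_comm]
  exact (abs_add_le _ _).trans (add_le_add blocks rest)

/- The orbit is cut into blocks of length the denominator `q` of a Dirichlet approximation with
`q ≤ Q`; bad approximability makes `q` comparable to `Q`, so there are few blocks. -/
theorem BadlyApproximable.abs_birkhoffSum_sub_le {c : ℝ} (hω : BadlyApproximable ω c)
    (hF : Function.Periodic F 1) (hK : LipschitzWith K F) {Q : ℕ} (hQ : 0 < Q) (n : ℕ) (x : ℝ) :
    |birkhoffSum (· + ω) F n x - n * ∫ y in (0 : ℝ)..1, F y| ≤ K * (2 * π * n / (c * Q) + Q) := by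
  have hc := hω.pos
  obtain ⟨r, hr, hrQ⟩ := exists_rat_abs_sub_le_and_den_le ω hQ
  have _ : (0 : ℝ) < r.den := by exact_mod_cast r.den_pos
  have _ : (0 : ℝ) < Q := by exact_mod_cast hQ
  have hrQ' : (r.den : ℝ) ≤ Q := by exact_mod_cast hrQ
  have hclose : (r.den : ℝ) ^ 2 * |ω - r| ≤ 1 := calc
    (r.den : ℝ) ^ 2 * |ω - r| ≤ (r.den : ℝ) ^ 2 * (1 / ((Q + 1) * r.den)) := by gcongr
    _ = (r.den : ℝ) / (Q + 1) := by field_simp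
    _ ≤ 1 := by rw [div_le_one (by positivity)]; linarith
  have hsingle (y : ℝ) : |F y - ∫ z in (0 : ℝ)..1, F z| ≤ K :=
    abs_sub_integral_le hK.continuous fun z => by
      simpa using abs_sub_le_of_periodic one_pos hF hK y z
  have hcount : ((n / r.den : ℕ) : ℝ) * (c * Q) ≤ π * n := calc
    ((n / r.den : ℕ) : ℝ) * (c * Q) ≤ (n / r.den : ℕ) * (π * r.den) :=
      mul_le_mul_of_nonneg_left (hω.mul_le_pi_mul_den hQ hr) (Nat.cast_nonneg _)
    _ = π * (n / r.den * r.den : ℕ) := by push_cast; ring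
    _ ≤ π * n := by gcongr; exact_mod_cast Nat.div_mul_le_self n r.den
  calc |birkhoffSum (· + ω) F n x - n * ∫ y in (0 : ℝ)..1, F y|
      ≤ (n / r.den : ℕ) * (2 * K) + (n % r.den : ℕ) * K :=
        abs_birkhoffSum_sub_le_of_block (abs_birkhoffSum_den_sub_le hF hK hclose) hsingle n x
    _ ≤ K * (2 * π * n / (c * Q)) + Q * K := by
        refine add_le_add ?_ ?_
        · rw [mul_div_assoc', le_div_iff₀ (by positivity)]
          nlinarith [K.2]
        · gcongr
          exact (Nat.mod_lt n r.den_pos).le.trans hrQ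
    _ = K * (2 * π * n / (c * Q) + Q) := by ring

end Equidistribution

/-! ### Smooth bumps with pairwise disjoint translates along the orbit -/

section Bump

/-- Any two of the `n + 1` translates of the support of `f` by `0, ω, …, n ω` are disjoint. -/
def OrbitSeparated (ω : ℝ) (n : ℕ) (f : ℝ → ℝ) : Prop :=
  ∀ y, ∀ d : ℕ, 1 ≤ d → d ≤ n → f y = 0 ∨ f (y + d * ω) = 0

/-- A smooth `1`-periodic bump of width of order `ℓ` around the integers: it is `1` where
`|sin (π x)| ≤ ℓ` and `0` where `|sin (π x)| ≥ √2 ℓ`. -/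
noncomputable def bump (ℓ x : ℝ) : ℝ :=
  smoothTransition (2 - sin (π * x) ^ 2 / ℓ ^ 2)

variable {ω : ℝ} {n : ℕ} {f : ℝ → ℝ}

theorem OrbitSeparated.const_mul (hf : OrbitSeparated ω n f) (a : ℝ) :
    OrbitSeparated ω n fun y => a * f y :=
  fun y d hd hdn => by
    rcases hf y d hd hdn with h | h <;> simp [h]

theorem OrbitSeparated.indicator_support (hf : OrbitSeparated ω n f) :
    OrbitSeparated ω n ((Function.support f).indicator 1) :=
  fun y d hd hdn => by
    rcases hf y d hd hdn with h | h <;> simp [h]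

theorem OrbitSeparated.birkhoffSum_le_one (hf : OrbitSeparated ω n f) (hf1 : ∀ x, f x ≤ 1)
    (y : ℝ) : birkhoffSum (· + ω) f (n + 1) y ≤ 1 := by
  rw [birkhoffSum_add_right]
  by_cases hzero : ∀ j ∈ Finset.range (n + 1), f (y + j * ω) = 0
  · simp [Finset.sum_eq_zero hzero]
  push Not at hzero
  obtain ⟨i, hi, hfi⟩ := hzero
  rw [Finset.sum_eq_single_of_mem i hi]
  · exact hf1 _
  intro j hj hji
  rw [Finset.mem_range] at hi hj
  rcases lt_or_gt_of_ne hji with hlt | hlt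
  · have := hf (y + j * ω) (i - j) (by lia) (by lia)
    rw [Nat.cast_sub hlt.le, show y + j * ω + ((i : ℝ) - j) * ω = y + i * ω by ring] at this
    tauto
  · have := hf (y + i * ω) (j - i) (by lia) (by lia)
    rw [Nat.cast_sub hlt.le, show y + i * ω + ((j : ℝ) - i) * ω = y + j * ω by ring] at this
    tauto

theorem OrbitSeparated.integral_le (hf : OrbitSeparated ω n f) (hfp : Function.Periodic f 1)
    (hfm : Measurable f) (hf0 : ∀ x, 0 ≤ f x) (hf1 : ∀ x, f x ≤ 1) :
    ∫ x in (0 : ℝ)..1, f x ≤ 1 / (n + 1) := by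
  have integrable (a : ℝ) : IntervalIntegrable (fun x => f (x + a)) volume 0 1 := by
    rw [intervalIntegrable_iff]
    refine Measure.integrableOn_of_bounded (M := 1) (by simp)
      (hfm.comp (measurable_add_const a)).aestronglyMeasurable (ae_of_all _ fun x => ?_)
    rw [norm_eq_abs, abs_of_nonneg (hf0 _)]
    exact hf1 _
  have total : (n + 1) * ∫ x in (0 : ℝ)..1, f x =
      ∫ x in (0 : ℝ)..1, birkhoffSum (· + ω) f (n + 1) x := by
    simp only [birkhoffSum_add_right]
    rw [intervalIntegral.integral_finsetSum fun _ _ => integrable _]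
    simp [integral_comp_add_of_periodic hfp]
  have total_le : ∫ x in (0 : ℝ)..1, birkhoffSum (· + ω) f (n + 1) x ≤ ∫ _ in (0 : ℝ)..1, 1 := by
    refine intervalIntegral.integral_mono_on zero_le_one ?_ (by simp)
      fun x _ => hf.birkhoffSum_le_one hf1 x
    simp only [funext (birkhoffSum_add_right ω f (n + 1)), ← Finset.sum_fn]
    exact IntervalIntegrable.sum _ fun _ _ => integrable _
  rw [le_div_iff₀ (by positivity), mul_comm, total]
  simpa using total_le

theorem OrbitSeparated.volume_support_le (hf : OrbitSeparated ω n f)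
    (hfp : Function.Periodic f 1) (hfc : Continuous f) :
    ∫ x in (0 : ℝ)..1, (Function.support f).indicator 1 x ≤ 1 / ((n : ℝ) + 1) := by
  refine hf.indicator_support.integral_le (fun x => ?_)
    (measurable_one.indicator (isOpen_ne_fun hfc continuous_const).measurableSet)
    (Set.indicator_nonneg fun _ _ => zero_le_one)
    (Set.indicator_le_self' (f := fun _ => (1 : ℝ)) (by simp))
  simp [Set.indicator, hfp x]

variable {ℓ : ℝ}

theorem periodic_bump (ℓ : ℝ) : Function.Periodic (bump ℓ) 1 := fun x => by
  rw [bump, bump, mul_add, mul_one, sin_add_pi, neg_sq]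

theorem bump_nonneg (ℓ x : ℝ) : 0 ≤ bump ℓ x := smoothTransition.nonneg _

theorem bump_le_one (ℓ x : ℝ) : bump ℓ x ≤ 1 := smoothTransition.le_one _

theorem contDiff_bump (ℓ : ℝ) : ContDiff ℝ (⊤ : ℕ∞) (bump ℓ) :=
  smoothTransition.contDiff.comp (by fun_prop)

theorem abs_sin_lt_of_bump_ne_zero (hℓ : 0 < ℓ) {x : ℝ} (hx : bump ℓ x ≠ 0) :
    |sin (π * x)| < 2 * ℓ := by
  contrapose! hx
  have : (2 * ℓ) ^ 2 ≤ sin (π * x) ^ 2 := by rw [← sq_abs (sin _)]; gcongr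
  refine smoothTransition.zero_of_nonpos ?_
  rw [sub_nonpos, le_div_iff₀ (by positivity)]
  nlinarith

theorem bump_eq_one (hℓ : 0 < ℓ) {x : ℝ} (hx : |sin (π * x)| ≤ ℓ) : bump ℓ x = 1 := by
  have : sin (π * x) ^ 2 / ℓ ^ 2 ≤ 1 := by
    rw [div_le_one (by positivity), ← sq_abs]
    gcongr
  exact smoothTransition.one_of_one_le (by linarith)

theorem bump_eq_one_of_bump_ne_zero {ℓ' : ℝ} (hℓ : 0 < ℓ) (hℓ' : 2 * ℓ ≤ ℓ') {x : ℝ}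
    (hx : bump ℓ x ≠ 0) : bump ℓ' x = 1 :=
  bump_eq_one (by linarith) ((abs_sin_lt_of_bump_ne_zero hℓ hx).le.trans hℓ')

theorem abs_sin_sub_le (x y : ℝ) : |sin (x - y)| ≤ |sin x| + |sin y| := by
  rw [sin_sub]
  calc |sin x * cos y - cos x * sin y| ≤ |sin x * cos y| + |cos x * sin y| := abs_sub _ _
    _ = |sin x| * |cos y| + |cos x| * |sin y| := by rw [abs_mul, abs_mul]
    _ ≤ |sin x| * 1 + 1 * |sin y| := by
      gcongr
      · exact abs_cos_le_one y
      · exact abs_cos_le_one x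
    _ = |sin x| + |sin y| := by ring

theorem BadlyApproximable.orbitSeparated_bump {c : ℝ} (hω : BadlyApproximable ω c) (hℓ : 0 < ℓ)
    (hn : 4 * ℓ * n ≤ c) : OrbitSeparated ω n (bump ℓ) := by
  intro y d hd hdn
  by_contra! hne
  have hd' : (0 : ℝ) < d := by exact_mod_cast hd
  have far : 4 * ℓ ≤ c / d := by
    rw [le_div_iff₀ hd']
    exact le_trans (by gcongr) hn
  have diff := abs_sin_sub_le (π * (y + d * ω)) (π * y)
  rw [show π * (y + d * ω) - π * y = π * (d * ω) by ring] at diff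
  linarith [abs_sin_lt_of_bump_ne_zero hℓ hne.1, abs_sin_lt_of_bump_ne_zero hℓ hne.2,
    hω.div_le_abs_sin d hd]

theorem le_integral_bump (hℓ : 0 < ℓ) (hℓ1 : ℓ ≤ 1) : ℓ / 4 ≤ ∫ x in (0 : ℝ)..1, bump ℓ x := by
  have integrable (a b : ℝ) : IntervalIntegrable (bump ℓ) volume a b :=
    (contDiff_bump ℓ).continuous.intervalIntegrable a b
  have plateau : ∫ x in (0 : ℝ)..(ℓ / 4), bump ℓ x = ∫ _ in (0 : ℝ)..(ℓ / 4), 1 := by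
    refine intervalIntegral.integral_congr fun x hx => bump_eq_one hℓ ?_
    rw [Set.uIcc_of_le (by positivity)] at hx
    calc |sin (π * x)| ≤ |π * x| := abs_sin_le_abs
      _ = π * x := abs_of_nonneg (mul_nonneg pi_pos.le hx.1)
      _ ≤ 4 * (ℓ / 4) := mul_le_mul pi_lt_four.le hx.2 hx.1 (by norm_num)
      _ = ℓ := by ring
  have rest : 0 ≤ ∫ x in (ℓ / 4)..1, bump ℓ x :=
    intervalIntegral.integral_nonneg (by linarith) fun x _ => bump_nonneg ℓ x
  rw [← intervalIntegral.integral_add_adjacent_intervals (integrable 0 (ℓ / 4)) (integrable _ 1),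
    plateau]
  simpa using rest

end Bump

/-! ### One conjugation step -/

section ConjugationStep

/-- Real `2 × 2` matrices. -/
abbrev Mat2 := Matrix (Fin 2) (Fin 2) ℝ

/-- The upper unipotent matrix with off-diagonal entry `r`. -/
def upperUnip (r : ℝ) : Mat2 := !![1, r; 0, 1]

/-- The lower unipotent matrix with off-diagonal entry `t`. -/
def lowerUnip (t : ℝ) : Mat2 := !![1, 0; t, 1]

/-- The hyperbolic matrix `diag (e ^ s, e ^ (-s))`. -/
noncomputable def expDiag (s : ℝ) : Mat2 := !![exp s, 0; 0, exp (-s)]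

/-- The nilpotent direction in which every conjugation step perturbs the cocycle. -/
def nilp : Mat2 := !![-1, -1; 1, 1]

/-- The off-diagonal error caused by truncating the series for the conjugacy. -/
def offDiag (ρ τ : ℝ) : Mat2 := !![0, ρ; -τ, 0]

/-- The `j`-th term of the series, over the forward orbit, for the upper unipotent factor of the
conjugacy. -/
noncomputable def upperTerm (ω : ℝ) (f g : ℝ → ℝ) (j : ℕ) (y : ℝ) : ℝ :=
  (exp (f (y + j * ω)) - 1) * exp (-2 * birkhoffSum (· + ω) g j y)

/-- The `j`-th term of the series, over the backward orbit, for the lower unipotent factor of the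
conjugacy. -/
noncomputable def lowerTerm (ω : ℝ) (f g : ℝ → ℝ) (j : ℕ) (y : ℝ) : ℝ :=
  (exp (f (y - j * ω)) - 1) * exp (-2 * birkhoffSum (· + ω) g j (y - j * ω))

/-- The truncated series `∑_{0 ≤ j ≤ m} upperTerm j`. -/
noncomputable def upperCoeff (ω : ℝ) (f g : ℝ → ℝ) (m : ℕ) (y : ℝ) : ℝ :=
  ∑ j ∈ Finset.range (m + 1), upperTerm ω f g j y

/-- The truncated series `∑_{1 ≤ j ≤ m} lowerTerm j`. -/
noncomputable def lowerCoeff (ω : ℝ) (f g : ℝ → ℝ) (m : ℕ) (y : ℝ) : ℝ :=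
  ∑ j ∈ Finset.range m, lowerTerm ω f g (j + 1) y

/-- The conjugacy which lowers the diagonal exponent `g` to `g - f / 2 - f (· + ω) / 2`, up to an
error along `nilp` and a truncation error. -/
noncomputable def stepConj (ω : ℝ) (f g : ℝ → ℝ) (m : ℕ) (y : ℝ) : Mat2 :=
  upperUnip (upperCoeff ω f g m y) * lowerUnip (lowerCoeff ω f g m y) * expDiag (f y / 2)

theorem mat2_ext {A B : Mat2} (h00 : A 0 0 = B 0 0) (h01 : A 0 1 = B 0 1) (h10 : A 1 0 = B 1 0)
    (h11 : A 1 1 = B 1 1) : A = B := by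
  ext i j; fin_cases i <;> fin_cases j <;> assumption

theorem det_upperUnip (r : ℝ) : (upperUnip r).det = 1 := by
  simp [upperUnip, Matrix.det_fin_two]

theorem det_lowerUnip (t : ℝ) : (lowerUnip t).det = 1 := by
  simp [lowerUnip, Matrix.det_fin_two]

theorem det_expDiag (s : ℝ) : (expDiag s).det = 1 := by
  simp [expDiag, Matrix.det_fin_two, ← exp_add]

theorem adjugate_upperUnip (r : ℝ) : (upperUnip r).adjugate = upperUnip (-r) := by
  simp [upperUnip, Matrix.adjugate_fin_two]

theorem adjugate_lowerUnip (t : ℝ) : (lowerUnip t).adjugate = lowerUnip (-t) := by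
  simp [lowerUnip, Matrix.adjugate_fin_two]

theorem adjugate_expDiag (s : ℝ) : (expDiag s).adjugate = expDiag (-s) := by
  simp [expDiag, Matrix.adjugate_fin_two]

theorem expDiag_add (r s : ℝ) : expDiag (r + s) = expDiag r * expDiag s := by
  apply mat2_ext <;> simp [expDiag, Matrix.mul_apply, Fin.sum_univ_two, exp_add, mul_comm]

theorem expDiag_zero : expDiag 0 = 1 := by
  apply mat2_ext <;> simp [expDiag]

theorem nilp_mul_nilp : nilp * nilp = 0 := by
  apply mat2_ext <;> simp [nilp, Matrix.mul_apply, Fin.sum_univ_two]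

theorem offDiag_zero : offDiag 0 0 = 0 := by
  apply mat2_ext <;> simp [offDiag]

theorem det_stepConj (ω : ℝ) (f g : ℝ → ℝ) (m : ℕ) (y : ℝ) : (stepConj ω f g m y).det = 1 := by
  simp [stepConj, det_upperUnip, det_lowerUnip, det_expDiag]

variable {ω : ℝ} {f g : ℝ → ℝ} {m j : ℕ} {y : ℝ}

theorem upperTerm_zero (ω : ℝ) (f g : ℝ → ℝ) (y : ℝ) :
    upperTerm ω f g 0 y = exp (f y) - 1 := by
  simp [upperTerm]

theorem lowerTerm_zero (ω : ℝ) (f g : ℝ → ℝ) (y : ℝ) :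
    lowerTerm ω f g 0 y = exp (f y) - 1 := by
  simp [lowerTerm]

theorem upperTerm_eq_zero (h : f (y + j * ω) = 0) : upperTerm ω f g j y = 0 := by
  simp [upperTerm, h]

theorem lowerTerm_eq_zero (h : f (y - j * ω) = 0) : lowerTerm ω f g j y = 0 := by
  simp [lowerTerm, h]

theorem periodic_upperTerm (hf : Function.Periodic f 1) (hg : Function.Periodic g 1) (j : ℕ) :
    Function.Periodic (upperTerm ω f g j) 1 := fun y => by
  rw [upperTerm, upperTerm, add_right_comm, hf, periodic_birkhoffSum hg ω j y]

theorem periodic_lowerTerm (hf : Function.Periodic f 1) (hg : Function.Periodic g 1) (j : ℕ) :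
    Function.Periodic (lowerTerm ω f g j) 1 := fun y => by
  rw [lowerTerm, lowerTerm, add_sub_right_comm, hf, periodic_birkhoffSum hg ω j]

theorem periodic_stepConj (hf : Function.Periodic f 1) (hg : Function.Periodic g 1) (m : ℕ) :
    Function.Periodic (stepConj ω f g m) 1 := fun y => by
  simp only [stepConj, upperCoeff, lowerCoeff, hf y, periodic_upperTerm hf hg _ y,
    periodic_lowerTerm hf hg _ y]

theorem exp_mul_upperTerm (ω : ℝ) (f g : ℝ → ℝ) (j : ℕ) (y : ℝ) :
    exp (-2 * g y) * upperTerm ω f g j (y + ω) = upperTerm ω f g (j + 1) y := by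
  rw [upperTerm, upperTerm, birkhoffSum_succ', mul_add, exp_add]
  push_cast
  ring_nf

theorem exp_mul_lowerTerm (ω : ℝ) (f g : ℝ → ℝ) (j : ℕ) (y : ℝ) :
    exp (2 * g y) * lowerTerm ω f g (j + 1) (y + ω) = lowerTerm ω f g j y := by
  have hcancel : exp (2 * g y) * exp (-2 * g y) = 1 := by rw [← exp_add]; simp
  rw [lowerTerm, lowerTerm, show y + ω - (j + 1 : ℕ) * ω = y - j * ω by push_cast; ring,
    birkhoffSum_succ, add_right_iterate, nsmul_eq_mul]
  beta_reduce
  rw [sub_add_cancel, mul_add, exp_add]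
  linear_combination
    ((exp (f (y - j * ω)) - 1) * exp (-2 * birkhoffSum (· + ω) g j (y - j * ω))) * hcancel

theorem exp_mul_upperCoeff (ω : ℝ) (f g : ℝ → ℝ) (m : ℕ) (y : ℝ) :
    exp (-2 * g y) * upperCoeff ω f g m (y + ω) =
      upperCoeff ω f g m y - (exp (f y) - 1) + upperTerm ω f g (m + 1) y := by
  have split_last := Finset.sum_range_succ (fun j => upperTerm ω f g j y) (m + 1)
  have split_first := Finset.sum_range_succ' (fun j => upperTerm ω f g j y) (m + 1)
  rw [upperTerm_zero] at split_first
  simp only [upperCoeff, Finset.mul_sum, exp_mul_upperTerm]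
  linarith

theorem exp_mul_lowerCoeff (ω : ℝ) (f g : ℝ → ℝ) (m : ℕ) (y : ℝ) :
    exp (2 * g y) * lowerCoeff ω f g m (y + ω) =
      (exp (f y) - 1) + lowerCoeff ω f g m y - lowerTerm ω f g m y := by
  have split_last := Finset.sum_range_succ (fun j => lowerTerm ω f g j y) m
  have split_first := Finset.sum_range_succ' (fun j => lowerTerm ω f g j y) m
  rw [lowerTerm_zero] at split_first
  simp only [lowerCoeff, Finset.mul_sum, exp_mul_lowerTerm]
  linarith

theorem OrbitSeparated.eq_zero_of_ne_zero {n : ℕ} (hf : OrbitSeparated ω n f) (hy : f y ≠ 0)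
    (hj : 1 ≤ j) (hjn : j ≤ n) : f (y + j * ω) = 0 ∧ f (y - j * ω) = 0 :=
  ⟨(hf y j hj hjn).resolve_left hy, (hf (y - j * ω) j hj hjn).resolve_right (by simpa using hy)⟩

theorem upperCoeff_of_ne_zero (hf : OrbitSeparated ω (2 * m + 1) f) (hy : f y ≠ 0) :
    upperCoeff ω f g m y = exp (f y) - 1 := by
  rw [upperCoeff, Finset.sum_range_succ', Finset.sum_eq_zero, zero_add, upperTerm_zero]
  intro j hj
  rw [Finset.mem_range] at hj
  exact upperTerm_eq_zero (hf.eq_zero_of_ne_zero hy (by lia) (by lia)).1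

theorem lowerCoeff_of_ne_zero (hf : OrbitSeparated ω (2 * m + 1) f) (hy : f y ≠ 0) :
    lowerCoeff ω f g m y = 0 := by
  refine Finset.sum_eq_zero fun j hj => ?_
  rw [Finset.mem_range] at hj
  exact lowerTerm_eq_zero (hf.eq_zero_of_ne_zero hy (by lia) (by lia)).2

theorem upperTerm_last_of_ne_zero (hf : OrbitSeparated ω (2 * m + 1) f) (hy : f y ≠ 0) :
    upperTerm ω f g (m + 1) y = 0 :=
  upperTerm_eq_zero (hf.eq_zero_of_ne_zero hy (by lia) (by lia)).1

theorem lowerTerm_last_of_ne_zero (hm : 1 ≤ m) (hf : OrbitSeparated ω (2 * m + 1) f)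
    (hy : f y ≠ 0) : lowerTerm ω f g m y = 0 :=
  lowerTerm_eq_zero (hf.eq_zero_of_ne_zero hy hm (by lia)).2

theorem upperCoeff_mul_lowerTerm (hm : 1 ≤ m) (hf : OrbitSeparated ω (2 * m + 1) f) :
    upperCoeff ω f g m y * lowerTerm ω f g m y = 0 ∧
      upperTerm ω f g (m + 1) y * lowerTerm ω f g m y = 0 := by
  by_cases hback : f (y - m * ω) = 0
  · simp [lowerTerm_eq_zero hback]
  have hforw {i : ℕ} (hi : i ≤ m + 1) : upperTerm ω f g i y = 0 := by
    have := (hf.eq_zero_of_ne_zero hback (j := m + i) (by lia) (by lia)).1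
    refine upperTerm_eq_zero ?_
    rwa [show y - m * ω + (m + i : ℕ) * ω = y + i * ω by push_cast; ring] at this
  have hupper : upperCoeff ω f g m y = 0 :=
    Finset.sum_eq_zero fun i hi => hforw (Finset.mem_range.1 hi).le
  simp [hupper, hforw le_rfl]

theorem conj_expDiag_of_eq_one_sub_exp {s a t : ℝ} (ht : exp (2 * s) * t = exp a - 1) :
    lowerUnip t * expDiag (s - a) * upperUnip (-(exp a - 1)) =
      expDiag s * (1 + (1 - exp (-a)) • nilp) := by
  have hs : exp s * exp (-s) = 1 := by rw [← exp_add]; simp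
  have ha : exp a * exp (-a) = 1 := by rw [← exp_add]; simp
  rw [two_mul, exp_add] at ht
  have ht' : t * exp s = exp (-s) * (exp a - 1) := by
    linear_combination exp (-s) * ht - exp s * t * hs
  unfold upperUnip lowerUnip expDiag nilp
  rw [neg_sub, sub_eq_add_neg s, sub_eq_neg_add a, exp_add, exp_add]
  apply mat2_ext <;> simp [Matrix.mul_apply, Fin.sum_univ_two]
  · linear_combination (-exp s) * ha
  · linear_combination exp (-a) * ht' + exp (-s) * ha
  · linear_combination (-exp (-a) * (exp a - 1)) * ht' + (-exp (-s) * exp a + 2 * exp (-s)) * ha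

theorem unip_mul_expDiag {s r t r' t' : ℝ} (hr : exp (-2 * s) * r' = r)
    (ht : exp (2 * s) * t' = t) :
    upperUnip r' * lowerUnip t' * expDiag s = expDiag s * (upperUnip r * lowerUnip t) := by
  have hs : exp s * exp (-s) = 1 := by rw [← exp_add]; simp
  rw [neg_mul, two_mul, neg_add, exp_add] at hr
  rw [two_mul, exp_add] at ht
  subst hr ht
  unfold upperUnip lowerUnip expDiag
  generalize exp s = p at *
  generalize exp (-s) = q at *
  apply mat2_ext <;> simp [Matrix.mul_apply, Fin.sum_univ_two]
  · linear_combination (-(p * r' * t' * (1 + p * q))) * hs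
  · linear_combination (-(q * r')) * hs
  · linear_combination (-(p * t')) * hs

theorem unip_mul_unip_neg {r t ρ τ : ℝ} (hr : r * τ = 0) (hρ : ρ * τ = 0) :
    upperUnip (r + ρ) * lowerUnip (t - τ) * (lowerUnip (-t) * upperUnip (-r)) =
      1 + offDiag ρ τ := by
  unfold upperUnip lowerUnip offDiag
  apply mat2_ext <;> simp [Matrix.mul_apply, Fin.sum_univ_two]
  · linear_combination -hr - hρ
  · linear_combination r * (hr + hρ)
  · ring
  · linear_combination hr

theorem conj_nilp (a : ℝ) :
    upperUnip (exp a - 1) * expDiag (a / 2) * nilp *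
      (expDiag (-(a / 2)) * upperUnip (-(exp a - 1))) = exp (-a) • nilp := by
  have ha : exp a = exp (a / 2) * exp (a / 2) := by rw [← exp_add, add_halves]
  have ha' : exp (-a) = exp (-(a / 2)) * exp (-(a / 2)) := by rw [← exp_add]; ring_nf
  have hcancel : exp (a / 2) * exp (-(a / 2)) = 1 := by rw [← exp_add]; simp
  rw [ha, ha']
  unfold upperUnip expDiag nilp
  rw [neg_neg]
  generalize exp (a / 2) = p at *
  generalize exp (-(a / 2)) = q at *
  apply mat2_ext <;> simp [Matrix.mul_apply, Fin.sum_univ_two]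
  · linear_combination (p * q) * hcancel
  · linear_combination (2 * p * q + p * p - p * p * (p * q)) * hcancel
  · linear_combination (-(p * q)) * hcancel

theorem stepConj_mul_nilp_mul_adjugate (hf : OrbitSeparated ω (2 * m + 1) f) (hy : f y ≠ 0) :
    stepConj ω f g m y * nilp * (stepConj ω f g m y).adjugate = exp (-f y) • nilp := by
  rw [← conj_nilp]
  simp [stepConj, upperCoeff_of_ne_zero hf hy, lowerCoeff_of_ne_zero hf hy,
    Matrix.adjugate_mul_distrib, adjugate_upperUnip, adjugate_expDiag,
    show lowerUnip 0 = 1 by apply mat2_ext <;> simp [lowerUnip]]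

theorem stepConj_mul_expDiag_mul_adjugate_eq_unip (m : ℕ) (f g : ℝ → ℝ) (y : ℝ) :
    stepConj ω f g m (y + ω) * expDiag (g y - f y / 2 - f (y + ω) / 2) *
        (stepConj ω f g m y).adjugate =
      upperUnip (upperCoeff ω f g m (y + ω)) * lowerUnip (lowerCoeff ω f g m (y + ω)) *
        expDiag (g y - f y) *
        (lowerUnip (-lowerCoeff ω f g m y) * upperUnip (-upperCoeff ω f g m y)) := by
  have hdiag : expDiag (f (y + ω) / 2) * expDiag (g y - f y / 2 - f (y + ω) / 2) *
      expDiag (-(f y / 2)) = expDiag (g y - f y) := by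
    rw [← expDiag_add, ← expDiag_add]
    congr 1
    ring
  rw [← hdiag]
  simp only [stepConj, Matrix.adjugate_mul_distrib, adjugate_upperUnip, adjugate_lowerUnip,
    adjugate_expDiag, Matrix.mul_assoc]

theorem stepConj_mul_expDiag_mul_adjugate (hm : 1 ≤ m) (hf : OrbitSeparated ω (2 * m + 1) f)
    (g : ℝ → ℝ) (y : ℝ) :
    stepConj ω f g m (y + ω) * expDiag (g y - f y / 2 - f (y + ω) / 2) *
        (stepConj ω f g m y).adjugate =
      expDiag (g y) * (1 + (1 - exp (-f y)) • nilp +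
        offDiag (upperTerm ω f g (m + 1) y) (lowerTerm ω f g m y)) := by
  have hupper := exp_mul_upperCoeff ω f g m y
  have hlower := exp_mul_lowerCoeff ω f g m y
  rw [stepConj_mul_expDiag_mul_adjugate_eq_unip]
  by_cases hy : f y = 0
  · obtain ⟨hr, hρ⟩ := upperCoeff_mul_lowerTerm (g := g) (y := y) hm hf
    simp only [hy, exp_zero, sub_self, sub_zero, zero_add] at hupper hlower
    rw [hy, sub_zero, unip_mul_expDiag hupper hlower, Matrix.mul_assoc, unip_mul_unip_neg hr hρ]
    simp
  · simp only [upperCoeff_of_ne_zero hf hy, lowerCoeff_of_ne_zero hf hy, sub_self,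
      upperTerm_last_of_ne_zero hf hy, lowerTerm_last_of_ne_zero hm hf hy, add_zero, sub_zero,
      mul_eq_zero, exp_ne_zero, false_or, offDiag_zero] at hupper hlower ⊢
    rw [hupper, ← conj_expDiag_of_eq_one_sub_exp hlower]
    congr 1 <;>
    · apply mat2_ext <;> simp [upperUnip, lowerUnip, Matrix.mul_apply]

end ConjugationStep

/-! ### Uniform bounds on derivatives -/

section DerivBound

variable {E F G ι : Type*} [NormedAddCommGroup E] [NormedSpace ℝ E] [NormedAddCommGroup F]
  [NormedSpace ℝ F] [NormedAddCommGroup G] [NormedSpace ℝ G]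

/-- `f` is smooth and its derivatives of order at most `j` are bounded by `A`: a bound on the
`C^j` norm. -/
structure DerivBound (j : ℕ) (f : ℝ → E) (A : ℝ) : Prop where
  contDiff : ContDiff ℝ (⊤ : ℕ∞) f
  norm_le : ∀ i ≤ j, ∀ x, ‖iteratedDeriv i f x‖ ≤ A

variable {j : ℕ} {f : ℝ → E} {g : ℝ → F} {A B : ℝ}

namespace DerivBound

theorem nonneg (hf : DerivBound j f A) : 0 ≤ A :=
  (norm_nonneg _).trans (hf.norm_le 0 j.zero_le 0)

theorem mono (hf : DerivBound j f A) (hAB : A ≤ B) : DerivBound j f B :=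
  ⟨hf.contDiff, fun i hi x => (hf.norm_le i hi x).trans hAB⟩

theorem norm_apply_le (hf : DerivBound j f A) (x : ℝ) : ‖f x‖ ≤ A := by
  simpa using hf.norm_le 0 j.zero_le x

theorem contDiffAt (hf : DerivBound j f A) (i : ℕ) (x : ℝ) : ContDiffAt ℝ i f x :=
  (hf.contDiff.of_le (mod_cast le_top)).contDiffAt

theorem const (j : ℕ) (b : E) : DerivBound j (fun _ => b) ‖b‖ := by
  refine ⟨contDiff_const, fun i _ x => ?_⟩
  rw [iteratedDeriv_const]
  split_ifs <;> simp

theorem add {f' : ℝ → E} (hf : DerivBound j f A) (hf' : DerivBound j f' B) :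
    DerivBound j (fun x => f x + f' x) (A + B) := by
  refine ⟨hf.contDiff.add hf'.contDiff, fun i hi x => ?_⟩
  rw [iteratedDeriv_fun_add (hf.contDiffAt i x) (hf'.contDiffAt i x)]
  exact norm_add_le_of_le (hf.norm_le i hi x) (hf'.norm_le i hi x)

theorem sum {f : ι → ℝ → E} {A : ι → ℝ} {s : Finset ι} (hf : ∀ i ∈ s, DerivBound j (f i) (A i)) :
    DerivBound j (fun x => ∑ i ∈ s, f i x) (∑ i ∈ s, A i) := by
  classical
  induction s using Finset.induction_on with
  | empty => simpa using const j (0 : E)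
  | insert b s hb ih =>
    simp only [Finset.sum_insert hb]
    exact (hf b (by simp)).add (ih fun i hi => hf i (by simp [hi]))

theorem comp_add_const (hf : DerivBound j f A) (b : ℝ) : DerivBound j (fun x => f (x + b)) A := by
  refine ⟨hf.contDiff.comp (contDiff_id.add contDiff_const), fun i hi x => ?_⟩
  rw [iteratedDeriv_comp_add_const]
  exact hf.norm_le i hi _

theorem clm (L : E →L[ℝ] F) (hf : DerivBound j f A) :
    DerivBound j (fun x => L (f x)) (‖L‖ * A) := by
  refine ⟨L.contDiff.comp hf.contDiff, fun i hi x => ?_⟩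
  rw [← norm_iteratedFDeriv_eq_norm_iteratedDeriv]
  refine (L.norm_iteratedFDeriv_comp_left (hf.contDiffAt i x) le_rfl).trans ?_
  rw [norm_iteratedFDeriv_eq_norm_iteratedDeriv]
  gcongr
  exact hf.norm_le i hi x

theorem neg (hf : DerivBound j f A) : DerivBound j (fun x => -f x) A := by
  refine ⟨hf.contDiff.neg, fun i hi x => ?_⟩
  rw [iteratedDeriv_fun_neg, norm_neg]
  exact hf.norm_le i hi x

theorem sub {f' : ℝ → E} (hf : DerivBound j f A) (hf' : DerivBound j f' B) :
    DerivBound j (fun x => f x - f' x) (A + B) := by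
  simpa only [sub_eq_add_neg] using hf.add hf'.neg

theorem const_smul (hf : DerivBound j f A) (b : ℝ) : DerivBound j (fun x => b • f x) (|b| * A) := by
  refine ⟨contDiff_const.smul hf.contDiff, fun i hi x => ?_⟩
  rw [iteratedDeriv_fun_const_smul (hf.contDiffAt i x), norm_smul]
  exact mul_le_mul_of_nonneg_left (hf.norm_le i hi x) (abs_nonneg b)

theorem bilin (L : E →L[ℝ] F →L[ℝ] G) (hf : DerivBound j f A) (hg : DerivBound j g B) :
    DerivBound j (fun x => L (f x) (g x)) (‖L‖ * 2 ^ j * (A * B)) := by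
  refine ⟨(L.isBoundedBilinearMap.contDiff (n := (⊤ : ℕ∞))).comp₂ hf.contDiff hg.contDiff,
    fun i hi x => ?_⟩
  have hA := hf.nonneg
  have hB := hg.nonneg
  calc ‖iteratedDeriv i (fun x => L (f x) (g x)) x‖
    _ ≤ ‖L‖ * ∑ l ∈ Finset.range (i + 1), (i.choose l : ℝ) * ‖iteratedFDeriv ℝ l f x‖ *
          ‖iteratedFDeriv ℝ (i - l) g x‖ := by
        rw [← norm_iteratedFDeriv_eq_norm_iteratedDeriv]
        exact L.norm_iteratedFDeriv_le_of_bilinear hf.contDiff hg.contDiff x (mod_cast le_top)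
    _ ≤ ‖L‖ * ∑ l ∈ Finset.range (i + 1), (i.choose l : ℝ) * A * B := by
        gcongr with l hl <;> rw [norm_iteratedFDeriv_eq_norm_iteratedDeriv]
        · exact hf.norm_le l (by grind) x
        · exact hg.norm_le (i - l) (by lia) x
    _ = ‖L‖ * (2 ^ i * (A * B)) := by
        simp only [mul_assoc, ← Finset.sum_mul]
        norm_cast
        rw [Nat.sum_range_choose]
    _ ≤ ‖L‖ * 2 ^ j * (A * B) := by
        rw [← mul_assoc]
        gcongr
        norm_num

theorem comp {h : ℝ → ℝ} (hg : ContDiff ℝ (⊤ : ℕ∞) g) (hh : DerivBound j h A) (hA : 1 ≤ A)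
    (hB : ∀ i ≤ j, ∀ x, ‖iteratedDeriv i g (h x)‖ ≤ B) :
    DerivBound j (fun x => g (h x)) (j.factorial * B * A ^ j) := by
  refine ⟨hg.comp hh.contDiff, fun i hi x => ?_⟩
  have hB0 : 0 ≤ B := (norm_nonneg _).trans (hB 0 j.zero_le 0)
  calc ‖iteratedDeriv i (fun x => g (h x)) x‖
    _ ≤ i.factorial * B * A ^ i := by
        rw [← norm_iteratedFDeriv_eq_norm_iteratedDeriv]
        refine norm_iteratedFDeriv_comp_le hg hh.contDiff (mod_cast le_top) x ?_ ?_ <;> intro l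
        all_goals rw [norm_iteratedFDeriv_eq_norm_iteratedDeriv]
        · exact fun hl => hB l (hl.trans hi) x
        · exact fun hl hli =>
            (hh.norm_le l (hli.trans hi) x).trans (le_self_pow₀ hA (Nat.one_le_iff_ne_zero.1 hl))
    _ ≤ j.factorial * B * A ^ j := by gcongr

theorem exp {h : ℝ → ℝ} (hh : DerivBound j h A) (hA : 1 ≤ A) (hB : ∀ x, h x ≤ B) :
    DerivBound j (fun x => exp (h x)) (j.factorial * exp B * A ^ j) := by
  refine comp contDiff_exp hh hA fun i _ x => ?_
  rw [iteratedDeriv_eq_iterate, iter_deriv_exp, norm_eq_abs, abs_exp]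
  exact exp_le_exp.2 (hB x)

theorem lipschitzWith (hf : DerivBound 1 f A) : LipschitzWith A.toNNReal f := by
  refine lipschitzWith_of_nnnorm_deriv_le (hf.contDiff.differentiable (by simp)) fun x => ?_
  rw [← NNReal.coe_le_coe, coe_nnnorm, Real.coe_toNNReal _ hf.nonneg, ← iteratedDeriv_one]
  exact hf.norm_le 1 le_rfl x

end DerivBound

theorem exists_derivBound (hf : ContDiff ℝ (⊤ : ℕ∞) f)
    (hb : ∀ i, ∃ A, ∀ x, ‖iteratedDeriv i f x‖ ≤ A) (j : ℕ) : ∃ A, DerivBound j f A := by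
  choose A hA using hb
  refine ⟨∑ i ∈ Finset.range (j + 1), A i, hf, fun i hi x => (hA i x).trans ?_⟩
  exact Finset.single_le_sum (f := A) (fun l _ => (norm_nonneg _).trans (hA l 0))
    (Finset.mem_range.2 (by lia))

theorem periodic_iteratedDeriv {f : ℝ → E} {T : ℝ} (hf : Function.Periodic f T) (i : ℕ) :
    Function.Periodic (iteratedDeriv i f) T := by
  intro x
  rw [← congrFun (iteratedDeriv_comp_add_const i f T) x, funext hf]

theorem exists_derivBound_of_periodic (hf : ContDiff ℝ (⊤ : ℕ∞) f) (hp : Function.Periodic f 1)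
    (j : ℕ) : ∃ A, DerivBound j f A := by
  refine exists_derivBound hf (fun i => ?_) j
  have hcont : Continuous (iteratedDeriv i f) :=
    hf.continuous_iteratedDeriv i (mod_cast le_top)
  obtain ⟨A, hA⟩ := isCompact_Icc.exists_bound_of_continuousOn (s := Set.Icc 0 1) hcont.continuousOn
  refine ⟨A, fun x => ?_⟩
  obtain ⟨y, hy, hxy⟩ := (periodic_iteratedDeriv hp i).exists_mem_Ico₀ one_pos x
  exact hxy ▸ hA y ⟨hy.1, hy.2.le⟩

theorem exists_smoothTransition_eventuallyEq_const {x : ℝ} (hx : x ∉ Set.Icc (0 : ℝ) 1) :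
    ∃ b : ℝ, |b| ≤ 1 ∧ smoothTransition =ᶠ[nhds x] fun _ => b := by
  rcases lt_or_ge x 0 with hx0 | hx0
  · refine ⟨0, by simp, ?_⟩
    filter_upwards [Iio_mem_nhds hx0] with y hy
    exact smoothTransition.zero_of_nonpos (le_of_lt hy)
  · have hx1 : 1 < x := not_le.1 fun hx1 => hx ⟨hx0, hx1⟩
    refine ⟨1, by simp, ?_⟩
    filter_upwards [Ioi_mem_nhds hx1] with y hy
    exact smoothTransition.one_of_one_le (le_of_lt hy)

theorem exists_derivBound_smoothTransition (j : ℕ) : ∃ A, DerivBound j smoothTransition A := by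
  have hsmooth : ContDiff ℝ (⊤ : ℕ∞) smoothTransition := smoothTransition.contDiff
  refine exists_derivBound hsmooth (fun i => ?_) j
  have hcont : Continuous (iteratedDeriv i smoothTransition) :=
    hsmooth.continuous_iteratedDeriv i (mod_cast le_top)
  obtain ⟨A, hA⟩ := isCompact_Icc.exists_bound_of_continuousOn (s := Set.Icc 0 1) hcont.continuousOn
  refine ⟨max A 1, fun x => ?_⟩
  by_cases hx : x ∈ Set.Icc (0 : ℝ) 1
  · exact (hA x hx).trans (le_max_left _ _)
  · obtain ⟨b, hb, hxb⟩ := exists_smoothTransition_eventuallyEq_const hx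
    rw [hxb.iteratedDeriv_eq]
    exact (((DerivBound.const i b).norm_le i le_rfl x).trans hb).trans (le_max_right _ _)

end DerivBound

/-! ### Families of functions of controlled growth -/

section Growth

/-- A family `Φ p` of growth rates on `[2, ∞)` which absorbs constants and products. -/
structure IsGrowthScale (Φ : ℕ → ℝ → ℝ) : Prop where
  one_le : ∀ p x, 2 ≤ x → 1 ≤ Φ p x
  mono : ∀ p x y, 2 ≤ x → x ≤ y → Φ p x ≤ Φ p y
  exists_ge : ∀ C, ∃ p, ∀ x, 2 ≤ x → C ≤ Φ p x
  exists_mul_le : ∀ p q, ∃ r, ∀ x, 2 ≤ x → Φ p x * Φ q x ≤ Φ r x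

/-- The growth rates of polynomials. -/
def polyScale (p : ℕ) (x : ℝ) : ℝ := x ^ p

/-- The growth rates of exponentials of polynomials. -/
noncomputable def expScale (p : ℕ) (x : ℝ) : ℝ := exp (x ^ p)

theorem pow_add_pow_le_pow_add_succ {x : ℝ} (hx : 2 ≤ x) (p q : ℕ) :
    x ^ p + x ^ q ≤ x ^ (p + q + 1) := by
  have hx1 : 1 ≤ x := by linarith
  calc x ^ p + x ^ q ≤ x ^ (p + q) + x ^ (p + q) := by gcongr <;> first | exact hx1 | lia
    _ = 2 * x ^ (p + q) := by ring
    _ ≤ x * x ^ (p + q) := by gcongr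
    _ = x ^ (p + q + 1) := by ring

theorem isGrowthScale_polyScale : IsGrowthScale polyScale where
  one_le p x hx := one_le_pow₀ (by linarith)
  mono p x y hx hxy := pow_le_pow_left₀ (by linarith) hxy p
  exists_ge C := by
    obtain ⟨p, hp⟩ := pow_unbounded_of_one_lt C one_lt_two
    exact ⟨p, fun x hx => hp.le.trans (pow_le_pow_left₀ zero_le_two hx p)⟩
  exists_mul_le p q := ⟨p + q, fun x _ => (pow_add x p q).ge⟩

theorem polyScale_le_expScale (p : ℕ) (x : ℝ) : polyScale p x ≤ expScale p x :=
  (lt_add_one _).le.trans (add_one_le_exp _)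

theorem isGrowthScale_expScale : IsGrowthScale expScale where
  one_le p x hx := one_le_exp (by positivity)
  mono p x y hx hxy := exp_le_exp.2 (isGrowthScale_polyScale.mono p x y hx hxy)
  exists_ge C := by
    obtain ⟨p, hp⟩ := isGrowthScale_polyScale.exists_ge C
    exact ⟨p, fun x hx => (hp x hx).trans (polyScale_le_expScale p x)⟩
  exists_mul_le p q := ⟨p + q + 1, fun x hx => by
    rw [expScale, expScale, ← exp_add]
    exact exp_le_exp.2 (pow_add_pow_le_pow_add_succ hx p q)⟩

namespace IsGrowthScale

variable {Φ : ℕ → ℝ → ℝ}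

theorem exists_const_mul_mul_le (hΦ : IsGrowthScale Φ) (C : ℝ) (p q : ℕ) :
    ∃ r, ∀ x, 2 ≤ x → C * (Φ p x * Φ q x) ≤ Φ r x := by
  obtain ⟨s, hs⟩ := hΦ.exists_ge C
  obtain ⟨t, ht⟩ := hΦ.exists_mul_le p q
  obtain ⟨r, hr⟩ := hΦ.exists_mul_le s t
  refine ⟨r, fun x hx => le_trans ?_ (hr x hx)⟩
  have hp := zero_le_one.trans (hΦ.one_le p x hx)
  have hq := zero_le_one.trans (hΦ.one_le q x hx)
  have hs0 := zero_le_one.trans (hΦ.one_le s x hx)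
  exact mul_le_mul (hs x hx) (ht x hx) (mul_nonneg hp hq) hs0

theorem exists_const_mul_le (hΦ : IsGrowthScale Φ) (C : ℝ) (p : ℕ) :
    ∃ r, ∀ x, 2 ≤ x → C * Φ p x ≤ Φ r x := by
  obtain ⟨r, hr⟩ := hΦ.exists_const_mul_mul_le |C| p 0
  refine ⟨r, fun x hx => le_trans ?_ (hr x hx)⟩
  have hp := zero_le_one.trans (hΦ.one_le p x hx)
  calc C * Φ p x ≤ |C| * Φ p x := by gcongr; exact le_abs_self C
    _ ≤ |C| * (Φ p x * Φ 0 x) := by gcongr; exact le_mul_of_one_le_right hp (hΦ.one_le 0 x hx)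

theorem exists_add_le (hΦ : IsGrowthScale Φ) (p q : ℕ) :
    ∃ r, ∀ x, 2 ≤ x → Φ p x + Φ q x ≤ Φ r x := by
  obtain ⟨r, hr⟩ := hΦ.exists_const_mul_mul_le 2 p q
  exact ⟨r, fun x hx => le_trans (by nlinarith [hΦ.one_le p x hx, hΦ.one_le q x hx]) (hr x hx)⟩

end IsGrowthScale

variable {E F G ι : Type*} [NormedAddCommGroup E] [NormedSpace ℝ E] [NormedAddCommGroup F]
  [NormedSpace ℝ F] [NormedAddCommGroup G] [NormedSpace ℝ G]

/-- The `C^j` norms of the functions `f i` are bounded by one growth rate `Φ p`, evaluated at the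
sizes `X i`. -/
structure HasGrowth (Φ : ℕ → ℝ → ℝ) (X : ι → ℝ) (j : ℕ) (f : ι → ℝ → E) : Prop where
  two_le : ∀ i, 2 ≤ X i
  exists_derivBound : ∃ p, ∀ i, DerivBound j (f i) (Φ p (X i))

namespace HasGrowth

variable {Φ : ℕ → ℝ → ℝ} {X : ι → ℝ} {j : ℕ} {f f' : ι → ℝ → E} {g : ι → ℝ → F} {h : ι → ℝ → ℝ}

theorem of_derivBound (hΦ : IsGrowthScale Φ) (hX : ∀ i, 2 ≤ X i) {A : ℝ}
    (hf : ∀ i, DerivBound j (f i) A) : HasGrowth Φ X j f := by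
  obtain ⟨p, hp⟩ := hΦ.exists_ge A
  exact ⟨hX, p, fun i => (hf i).mono (hp _ (hX i))⟩

theorem const (hΦ : IsGrowthScale Φ) (hX : ∀ i, 2 ≤ X i) (j : ℕ) (b : E) :
    HasGrowth Φ X j fun _ _ => b :=
  of_derivBound hΦ hX fun _ => DerivBound.const j b

theorem reindex {ι' : Type*} (hf : HasGrowth Φ X j f) (e : ι' → ι) :
    HasGrowth Φ (fun i => X (e i)) j fun i => f (e i) :=
  ⟨fun i => hf.two_le (e i), hf.exists_derivBound.imp fun _ hp i => hp (e i)⟩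

theorem mono {Y : ι → ℝ} (hf : HasGrowth Φ X j f) (hΦ : IsGrowthScale Φ) (hXY : ∀ i, X i ≤ Y i) :
    HasGrowth Φ Y j f :=
  ⟨fun i => (hf.two_le i).trans (hXY i), hf.exists_derivBound.imp fun p hp i =>
    (hp i).mono (hΦ.mono p _ _ (hf.two_le i) (hXY i))⟩

theorem comp_add_const (hf : HasGrowth Φ X j f) (b : ι → ℝ) :
    HasGrowth Φ X j fun i x => f i (x + b i) :=
  ⟨hf.two_le, hf.exists_derivBound.imp fun _ hp i => (hp i).comp_add_const (b i)⟩

theorem comp_sub_const (hf : HasGrowth Φ X j f) (b : ι → ℝ) :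
    HasGrowth Φ X j fun i x => f i (x - b i) := by
  simpa only [sub_eq_add_neg] using hf.comp_add_const fun i => -b i

theorem neg (hf : HasGrowth Φ X j f) : HasGrowth Φ X j fun i x => -f i x :=
  ⟨hf.two_le, hf.exists_derivBound.imp fun _ hp i => (hp i).neg⟩

theorem add (hΦ : IsGrowthScale Φ) (hf : HasGrowth Φ X j f) (hf' : HasGrowth Φ X j f') :
    HasGrowth Φ X j fun i x => f i x + f' i x := by
  obtain ⟨p, hp⟩ := hf.exists_derivBound
  obtain ⟨q, hq⟩ := hf'.exists_derivBound
  obtain ⟨r, hr⟩ := hΦ.exists_add_le p q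
  exact ⟨hf.two_le, r, fun i => ((hp i).add (hq i)).mono (hr _ (hf.two_le i))⟩

theorem sub (hΦ : IsGrowthScale Φ) (hf : HasGrowth Φ X j f) (hf' : HasGrowth Φ X j f') :
    HasGrowth Φ X j fun i x => f i x - f' i x := by
  simpa only [sub_eq_add_neg] using hf.add hΦ hf'.neg

theorem clm (hΦ : IsGrowthScale Φ) (L : E →L[ℝ] F) (hf : HasGrowth Φ X j f) :
    HasGrowth Φ X j fun i x => L (f i x) := by
  obtain ⟨p, hp⟩ := hf.exists_derivBound
  obtain ⟨r, hr⟩ := hΦ.exists_const_mul_le ‖L‖ p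
  exact ⟨hf.two_le, r, fun i => ((hp i).clm L).mono (hr _ (hf.two_le i))⟩

theorem bilin (hΦ : IsGrowthScale Φ) (L : E →L[ℝ] F →L[ℝ] G) (hf : HasGrowth Φ X j f)
    (hg : HasGrowth Φ X j g) : HasGrowth Φ X j fun i x => L (f i x) (g i x) := by
  obtain ⟨p, hp⟩ := hf.exists_derivBound
  obtain ⟨q, hq⟩ := hg.exists_derivBound
  obtain ⟨r, hr⟩ := hΦ.exists_const_mul_mul_le (‖L‖ * 2 ^ j) p q
  exact ⟨hf.two_le, r, fun i => ((hp i).bilin L (hq i)).mono (hr _ (hf.two_le i))⟩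

theorem mul (hΦ : IsGrowthScale Φ) {h' : ι → ℝ → ℝ} (hh : HasGrowth Φ X j h)
    (hh' : HasGrowth Φ X j h') : HasGrowth Φ X j fun i x => h i x * h' i x :=
  hh.bilin hΦ (ContinuousLinearMap.mul ℝ ℝ) hh'

theorem const_mul (hΦ : IsGrowthScale Φ) (b : ℝ) (hh : HasGrowth Φ X j h) :
    HasGrowth Φ X j fun i x => b * h i x :=
  (const hΦ hh.two_le j b).mul hΦ hh

theorem smul_const (hΦ : IsGrowthScale Φ) (hh : HasGrowth Φ X j h) (b : E) :
    HasGrowth Φ X j fun i x => h i x • b :=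
  hh.clm hΦ ((ContinuousLinearMap.lsmul ℝ ℝ).flip b)

theorem sum_range (hΦ : IsGrowthScale Φ) {n : ι → ℕ} {q : ℕ} (hX : ∀ i, 2 ≤ X i)
    (hn : ∀ i, (n i : ℝ) ≤ Φ q (X i)) {f : ι → ℕ → ℝ → E}
    (hf : HasGrowth Φ (fun s : Σ i, Fin (n i) => X s.1) j fun s => f s.1 s.2) :
    HasGrowth Φ X j fun i x => ∑ l ∈ Finset.range (n i), f i l x := by
  obtain ⟨p, hp⟩ := hf.exists_derivBound
  obtain ⟨r, hr⟩ := hΦ.exists_mul_le q p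
  refine ⟨hX, r, fun i => ?_⟩
  have hsum : DerivBound j (fun x => ∑ l ∈ Finset.range (n i), f i l x)
      (∑ _l ∈ Finset.range (n i), Φ p (X i)) :=
    DerivBound.sum fun l hl => hp ⟨i, l, Finset.mem_range.1 hl⟩
  refine hsum.mono (le_trans ?_ (hr _ (hX i)))
  rw [Finset.sum_const, Finset.card_range, nsmul_eq_mul]
  exact mul_le_mul_of_nonneg_right (hn i) (zero_le_one.trans (hΦ.one_le p _ (hX i)))

theorem comp {G : ℝ → F} (hG : ContDiff ℝ (⊤ : ℕ∞) G) {A : ℝ} (hh : HasGrowth polyScale X j h)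
    (hA : ∀ i, ∀ l ≤ j, ∀ x, ‖iteratedDeriv l G (h i x)‖ ≤ A) :
    HasGrowth polyScale X j fun i x => G (h i x) := by
  obtain ⟨p, hp⟩ := hh.exists_derivBound
  obtain ⟨r, hr⟩ := isGrowthScale_polyScale.exists_const_mul_le (j.factorial * A) (p * j)
  refine ⟨hh.two_le, r, fun i => ?_⟩
  have hone := isGrowthScale_polyScale.one_le p _ (hh.two_le i)
  refine (DerivBound.comp hG (hp i) hone (hA i)).mono ?_
  simpa only [polyScale, pow_mul] using hr _ (hh.two_le i)

theorem exp_of_nonpos (hh : HasGrowth polyScale X j h) (h0 : ∀ i x, h i x ≤ 0) :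
    HasGrowth polyScale X j fun i x => exp (h i x) := by
  refine hh.comp (A := 1) contDiff_exp fun i l _ x => ?_
  rw [iteratedDeriv_eq_iterate, iter_deriv_exp, norm_eq_abs, abs_exp]
  exact exp_le_one_iff.2 (h0 i x)

theorem exp (hh : HasGrowth polyScale X j h) : HasGrowth expScale X j fun i x => exp (h i x) := by
  obtain ⟨p, hp⟩ := hh.exists_derivBound
  obtain ⟨r, hr⟩ := isGrowthScale_expScale.exists_const_mul_mul_le j.factorial p (p * j)
  refine ⟨hh.two_le, r, fun i => ?_⟩
  have hone := isGrowthScale_polyScale.one_le p _ (hh.two_le i)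
  have hle : ∀ x, h i x ≤ X i ^ p := fun x => (le_abs_self _).trans ((hp i).norm_apply_le x)
  refine ((hp i).exp hone hle).mono (le_trans ?_ (hr _ (hh.two_le i)))
  rw [mul_assoc]
  gcongr
  · exact (exp_pos _).le
  · exact le_rfl
  · simpa only [polyScale, pow_mul] using polyScale_le_expScale (p * j) (X i)

end HasGrowth

end Growth

/-! ### Growth of the conjugation step -/

section StepGrowth

/-- Multiplication of matrices as a continuous bilinear map. -/
noncomputable def mulCLM : Mat2 →L[ℝ] Mat2 →L[ℝ] Mat2 :=
  (LinearMap.mul ℝ Mat2).toContinuousBilinearMap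

/-- The adjugate, which is linear on `2 × 2` matrices, as a continuous linear map. -/
noncomputable def adjugateCLM : Mat2 →L[ℝ] Mat2 :=
  LinearMap.toContinuousLinearMap
    { toFun := Matrix.adjugate
      map_add' := fun A B => by
        apply mat2_ext <;> simp [Matrix.adjugate_fin_two, add_comm]
      map_smul' := fun r A => by
        apply mat2_ext <;> simp [Matrix.adjugate_fin_two] }

theorem upperUnip_eq (r : ℝ) : upperUnip r = 1 + r • !![0, 1; 0, 0] := by
  apply mat2_ext <;> simp [upperUnip]

theorem lowerUnip_eq (t : ℝ) : lowerUnip t = 1 + t • !![0, 0; 1, 0] := by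
  apply mat2_ext <;> simp [lowerUnip]

theorem expDiag_eq (s : ℝ) : expDiag s = exp s • !![1, 0; 0, 0] + exp (-s) • !![0, 0; 0, 1] := by
  apply mat2_ext <;> simp [expDiag]

theorem offDiag_eq (ρ τ : ℝ) : offDiag ρ τ = ρ • !![0, 1; 0, 0] + τ • !![0, 0; -1, 0] := by
  apply mat2_ext <;> simp [offDiag]

variable {ι : Type*} {Φ : ℕ → ℝ → ℝ} {X : ι → ℝ} {j q : ℕ} {A B : ι → ℝ → Mat2} {f g : ι → ℝ → ℝ}
  {m n : ι → ℕ}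

theorem exists_derivBound_matMul (j : ℕ) : ∃ C, ∀ {f g : ℝ → Mat2} {a b : ℝ},
    DerivBound j f a → DerivBound j g b → DerivBound j (fun x => f x * g x) (C * (a * b)) :=
  ⟨_, fun hf hg => hf.bilin mulCLM hg⟩

namespace HasGrowth

theorem matMul (hΦ : IsGrowthScale Φ) (hA : HasGrowth Φ X j A) (hB : HasGrowth Φ X j B) :
    HasGrowth Φ X j fun i x => A i x * B i x :=
  hA.bilin hΦ mulCLM hB

theorem adjugate (hΦ : IsGrowthScale Φ) (hA : HasGrowth Φ X j A) :
    HasGrowth Φ X j fun i x => (A i x).adjugate :=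
  hA.clm hΦ adjugateCLM

theorem upperUnip (hΦ : IsGrowthScale Φ) (hf : HasGrowth Φ X j f) :
    HasGrowth Φ X j fun i x => upperUnip (f i x) := by
  simpa only [upperUnip_eq] using (const hΦ hf.two_le j (1 : Mat2)).add hΦ (hf.smul_const hΦ _)

theorem lowerUnip (hΦ : IsGrowthScale Φ) (hf : HasGrowth Φ X j f) :
    HasGrowth Φ X j fun i x => lowerUnip (f i x) := by
  simpa only [lowerUnip_eq] using (const hΦ hf.two_le j (1 : Mat2)).add hΦ (hf.smul_const hΦ _)

theorem offDiag (hΦ : IsGrowthScale Φ) (hf : HasGrowth Φ X j f) (hg : HasGrowth Φ X j g) :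
    HasGrowth Φ X j fun i x => offDiag (f i x) (g i x) := by
  simpa only [offDiag_eq] using (hf.smul_const hΦ _).add hΦ (hg.smul_const hΦ _)

theorem expDiag (hf : HasGrowth polyScale X j f) :
    HasGrowth expScale X j fun i x => expDiag (f i x) := by
  have hΦ := isGrowthScale_expScale
  simpa only [expDiag_eq] using (hf.exp.smul_const hΦ _).add hΦ (hf.neg.exp.smul_const hΦ _)

theorem birkhoffSum (ω : ℝ) (hg : HasGrowth polyScale X j g)
    (hn : ∀ i, (n i : ℝ) ≤ polyScale q (X i)) :
    HasGrowth polyScale X j fun i => birkhoffSum (· + ω) (g i) (n i) := by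
  have hshift := (hg.reindex fun s : Σ i, Fin (n i) => s.1).comp_add_const fun s => (s.2 : ℕ) * ω
  have hsum := sum_range (f := fun i l x => g i (x + l * ω)) isGrowthScale_polyScale hg.two_le hn
    hshift
  simpa only [funext (birkhoffSum_add_right ω _ _)] using hsum

theorem upperTerm (ω : ℝ) (hf : HasGrowth polyScale X j f) (hg : HasGrowth polyScale X j g)
    (hn : ∀ i, (n i : ℝ) ≤ polyScale q (X i)) :
    HasGrowth expScale X j fun i => upperTerm ω (f i) (g i) (n i) :=
  have hΦ := isGrowthScale_expScale
  ((hf.comp_add_const fun i => n i * ω).exp.sub hΦ (const hΦ hf.two_le j 1)).mul hΦ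
    ((hg.birkhoffSum ω hn).const_mul isGrowthScale_polyScale (-2)).exp

theorem lowerTerm (ω : ℝ) (hf : HasGrowth polyScale X j f) (hg : HasGrowth polyScale X j g)
    (hn : ∀ i, (n i : ℝ) ≤ polyScale q (X i)) :
    HasGrowth expScale X j fun i => lowerTerm ω (f i) (g i) (n i) :=
  have hΦ := isGrowthScale_expScale
  ((hf.comp_sub_const fun i => n i * ω).exp.sub hΦ (const hΦ hf.two_le j 1)).mul hΦ
    (((hg.birkhoffSum ω hn).comp_sub_const fun i => n i * ω).const_mul
      isGrowthScale_polyScale (-2)).exp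

theorem upperCoeff (ω : ℝ) (hf : HasGrowth polyScale X j f) (hg : HasGrowth polyScale X j g)
    (hm : ∀ i, ((m i + 1 : ℕ) : ℝ) ≤ polyScale q (X i)) :
    HasGrowth expScale X j fun i => upperCoeff ω (f i) (g i) (m i) := by
  let e := fun s : Σ i, Fin (m i + 1) => s.1
  have hterm := (hf.reindex e).upperTerm (n := fun s => s.2) ω (hg.reindex e)
    fun s => le_trans (mod_cast s.2.2.le) (hm s.1)
  exact sum_range (f := fun i l => _root_.upperTerm ω (f i) (g i) l) isGrowthScale_expScale
    hf.two_le (fun i => (hm i).trans (polyScale_le_expScale q _)) hterm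

theorem lowerCoeff (ω : ℝ) (hf : HasGrowth polyScale X j f) (hg : HasGrowth polyScale X j g)
    (hm : ∀ i, (m i : ℝ) ≤ polyScale q (X i)) :
    HasGrowth expScale X j fun i => lowerCoeff ω (f i) (g i) (m i) := by
  let e := fun s : Σ i, Fin (m i) => s.1
  have hterm := (hf.reindex e).lowerTerm (n := fun s => s.2 + 1) ω (hg.reindex e)
    fun s => le_trans (mod_cast s.2.2) (hm s.1)
  exact sum_range (f := fun i l => _root_.lowerTerm ω (f i) (g i) (l + 1)) isGrowthScale_expScale
    hf.two_le (fun i => (hm i).trans (polyScale_le_expScale q _)) hterm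

theorem stepConj (ω : ℝ) (hf : HasGrowth polyScale X j f) (hg : HasGrowth polyScale X j g)
    (hm : ∀ i, ((m i + 1 : ℕ) : ℝ) ≤ polyScale q (X i)) :
    HasGrowth expScale X j fun i => stepConj ω (f i) (g i) (m i) := by
  have hΦ := isGrowthScale_expScale
  have hupper := (hf.upperCoeff ω hg hm).upperUnip hΦ
  have hlower := (hf.lowerCoeff ω hg fun i => le_trans (mod_cast (m i).le_succ) (hm i)).lowerUnip hΦ
  have hdiag := (hf.const_mul isGrowthScale_polyScale 2⁻¹).expDiag
  simp only [inv_mul_eq_div] at hdiag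
  exact (hupper.matMul hΦ hlower).matMul hΦ hdiag

theorem self_const (hX : ∀ i, 2 ≤ X i) (j : ℕ) : HasGrowth polyScale X j fun i _ => X i := by
  refine ⟨hX, 1, fun i => (DerivBound.const j (X i)).mono ?_⟩
  have := hX i
  rw [polyScale, pow_one, norm_eq_abs, abs_of_nonneg (by linarith)]

/- Expanding the product leaves two exponentials whose exponents are at most `-X i`; bounding the
factors separately would lose this smallness. -/
theorem exp_mul_exp_sub_one_mul_exp (hf : HasGrowth polyScale X j f)
    (hg : HasGrowth polyScale X j g) (hf0 : ∀ i x, 0 ≤ f i x)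
    (hfg : ∀ i x, X i + f i x + g i x ≤ 0) :
    HasGrowth polyScale X j fun i x => Real.exp (X i) * ((Real.exp (f i x) - 1) *
      Real.exp (g i x)) := by
  have hΦ := isGrowthScale_polyScale
  have hXg := (self_const hf.two_le j).add hΦ hg
  have hsum := ((hXg.add hΦ hf).exp_of_nonpos fun i x => by linarith [hfg i x]).sub hΦ
    (hXg.exp_of_nonpos fun i x => by linarith [hfg i x, hf0 i x])
  convert hsum using 3 with i x
  simp only [Real.exp_add]
  ring

theorem exp_mul_upperTerm (ω : ℝ) (hf : HasGrowth polyScale X j f) (hg : HasGrowth polyScale X j g)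
    (hn : ∀ i, (n i : ℝ) ≤ polyScale q (X i)) (hf0 : ∀ i x, 0 ≤ f i x)
    (hfg : ∀ i x y, X i + f i x ≤ 2 * _root_.birkhoffSum (· + ω) (g i) (n i) y) :
    HasGrowth polyScale X j fun i x => Real.exp (X i) * _root_.upperTerm ω (f i) (g i) (n i) x :=
  exp_mul_exp_sub_one_mul_exp (hf.comp_add_const fun i => n i * ω)
    ((hg.birkhoffSum ω hn).const_mul isGrowthScale_polyScale (-2)) (fun i _ => hf0 i _)
    fun i x => by linarith [hfg i (x + n i * ω) x]

theorem exp_mul_lowerTerm (ω : ℝ) (hf : HasGrowth polyScale X j f) (hg : HasGrowth polyScale X j g)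
    (hn : ∀ i, (n i : ℝ) ≤ polyScale q (X i)) (hf0 : ∀ i x, 0 ≤ f i x)
    (hfg : ∀ i x y, X i + f i x ≤ 2 * _root_.birkhoffSum (· + ω) (g i) (n i) y) :
    HasGrowth polyScale X j fun i x => Real.exp (X i) * _root_.lowerTerm ω (f i) (g i) (n i) x :=
  exp_mul_exp_sub_one_mul_exp (hf.comp_sub_const fun i => n i * ω)
    (((hg.birkhoffSum ω hn).comp_sub_const fun i => n i * ω).const_mul
      isGrowthScale_polyScale (-2)) (fun i _ => hf0 i _)
    fun i x => by linarith [hfg i (x - n i * ω) (x - n i * ω)]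

theorem bump {ℓ : ι → ℝ} (hX : ∀ i, 2 ≤ X i) (hℓ : ∀ i, ((ℓ i) ^ 2)⁻¹ ≤ polyScale q (X i)) (j : ℕ) :
    HasGrowth polyScale X j fun i => bump (ℓ i) := by
  have hΦ := isGrowthScale_polyScale
  have hper : Function.Periodic (fun x => sin (π * x) ^ 2) 1 := fun x => by
    simp only [mul_add, mul_one, sin_add_pi, neg_sq]
  obtain ⟨A, hA⟩ := exists_derivBound_of_periodic (by fun_prop) hper j
  have hcoeff : HasGrowth polyScale X j fun i _ => (ℓ i ^ 2)⁻¹ :=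
    ⟨hX, q, fun i => (DerivBound.const j _).mono (by
      rw [norm_eq_abs, abs_of_nonneg (by positivity)]
      exact hℓ i)⟩
  have hinner := (const hΦ hX j (2 : ℝ)).sub hΦ (hcoeff.mul hΦ (of_derivBound hΦ hX fun _ => hA))
  obtain ⟨C, hC⟩ := exists_derivBound_smoothTransition j
  have houter := hinner.comp hC.contDiff (A := C) fun i l hl x => hC.norm_le l hl _
  simp only [inv_mul_eq_div] at houter
  exact houter

end HasGrowth

end StepGrowth

/-! ### The inductive construction -/

/-- The scales `N_k` of the construction. They grow superexponentially, yet `log N_{k+1}` is small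
compared with `N_k`. -/
def scaleSeq : ℕ → ℕ
  | 0 => 2
  | k + 1 => scaleSeq k ^ (k + 2)

/-- The number `m_k = N_{k+1} ^ 2` of terms kept in the `k`-th conjugacy. -/
def truncOrder (k : ℕ) : ℕ := scaleSeq (k + 1) ^ 2

section Scales

theorem two_pow_succ_le_scaleSeq (k : ℕ) : 2 ^ (k + 1) ≤ scaleSeq k := by
  induction k with
  | zero => rfl
  | succ k ih =>
    calc 2 ^ (k + 1 + 1) ≤ 2 ^ (k + 2) := le_rfl
      _ ≤ scaleSeq k ^ (k + 2) :=
        Nat.pow_le_pow_left ((Nat.le_self_pow k.succ_ne_zero 2).trans ih) _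

theorem two_le_scaleSeq (k : ℕ) : 2 ≤ scaleSeq k :=
  (Nat.le_self_pow k.succ_ne_zero 2).trans (two_pow_succ_le_scaleSeq k)

theorem two_mul_scaleSeq_le (k : ℕ) : 2 * scaleSeq k ≤ scaleSeq (k + 1) := by
  calc 2 * scaleSeq k ≤ scaleSeq k * scaleSeq k := Nat.mul_le_mul_right _ (two_le_scaleSeq k)
    _ = scaleSeq k ^ 2 := (sq _).symm
    _ ≤ scaleSeq k ^ (k + 2) :=
      Nat.pow_le_pow_right (zero_lt_two.trans_le (two_le_scaleSeq k)) (by lia)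

theorem strictMono_scaleSeq : StrictMono scaleSeq :=
  strictMono_nat_of_lt_succ fun k => by linarith [two_mul_scaleSeq_le k, two_le_scaleSeq k]

theorem cast_truncOrder (k : ℕ) : (truncOrder k : ℝ) = (scaleSeq (k + 1) : ℝ) ^ 2 := by
  rw [truncOrder, Nat.cast_pow]

theorem truncOrder_pos (k : ℕ) : 0 < truncOrder k :=
  pow_pos (zero_lt_two.trans_le (two_le_scaleSeq _)) 2

theorem two_mul_truncOrder_le {i k : ℕ} (hik : i < k) : 2 * truncOrder i ≤ truncOrder k := by
  have hstep : 2 * scaleSeq (i + 1) ≤ scaleSeq (k + 1) :=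
    (two_mul_scaleSeq_le _).trans (strictMono_scaleSeq.monotone (by lia))
  calc 2 * truncOrder i ≤ (2 * scaleSeq (i + 1)) ^ 2 := by rw [truncOrder, mul_pow]; lia
    _ ≤ truncOrder k := Nat.pow_le_pow_left hstep 2

theorem two_le_cast_scaleSeq (k : ℕ) : (2 : ℝ) ≤ scaleSeq k := by
  exact_mod_cast two_le_scaleSeq k

theorem two_mul_cast_scaleSeq_le (k : ℕ) : 2 * (scaleSeq k : ℝ) ≤ scaleSeq (k + 1) := by
  exact_mod_cast two_mul_scaleSeq_le k

theorem two_pow_le_cast_scaleSeq (k : ℕ) : (2 : ℝ) ^ k ≤ scaleSeq k := by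
  exact_mod_cast (Nat.pow_le_pow_right zero_lt_two k.le_succ).trans (two_pow_succ_le_scaleSeq k)

theorem cast_scaleSeq_succ (k : ℕ) : (scaleSeq (k + 1) : ℝ) = (scaleSeq k : ℝ) ^ (k + 2) := by
  rw [scaleSeq, Nat.cast_pow]

theorem tendsto_cast_scaleSeq : Tendsto (fun k => (scaleSeq k : ℝ)) atTop atTop :=
  tendsto_natCast_atTop_atTop.comp strictMono_scaleSeq.tendsto_atTop

theorem const_mul_pow_le_scaleSeq_succ (C : ℝ) (p : ℕ) :
    ∀ᶠ k in atTop, C * (scaleSeq k : ℝ) ^ p * 2 ^ k ≤ scaleSeq (k + 1) := by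
  obtain ⟨r, hr⟩ := isGrowthScale_polyScale.exists_ge |C|
  filter_upwards [eventually_ge_atTop (r + p)] with k hk
  have hk2 := two_le_cast_scaleSeq k
  calc C * (scaleSeq k : ℝ) ^ p * 2 ^ k
      ≤ (scaleSeq k : ℝ) ^ r * (scaleSeq k : ℝ) ^ p * scaleSeq k := by
        gcongr
        · exact (le_abs_self C).trans (hr _ hk2)
        · exact two_pow_le_cast_scaleSeq k
    _ = (scaleSeq k : ℝ) ^ (r + p + 1) := by ring
    _ ≤ (scaleSeq k : ℝ) ^ (k + 2) := pow_le_pow_right₀ (by linarith) (by lia)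
    _ = scaleSeq (k + 1) := (cast_scaleSeq_succ k).symm

-- This is where `log N_{k+1} = (k + 2) log N_k = O((log N_k) ^ 2)` enters.
theorem const_mul_pow_scaleSeq_succ_le_exp (C : ℝ) (p : ℕ) :
    ∀ᶠ k in atTop, C * (scaleSeq (k + 1) : ℝ) ^ p * 2 ^ k ≤ exp (scaleSeq k) := by
  have hlog := (isLittleO_pow_log_id_atTop (n := 2)).bound
    (c := 1 / (|C| + 4 * p + 1)) (by positivity)
  filter_upwards [tendsto_cast_scaleSeq.eventually hlog,
    tendsto_cast_scaleSeq.eventually_ge_atTop (exp 1)] with k hlog hexp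
  have h2k := two_pow_le_cast_scaleSeq k
  have hsucc := cast_scaleSeq_succ k
  have hx : (0 : ℝ) < scaleSeq k := (exp_pos 1).trans_le hexp
  generalize (scaleSeq k : ℝ) = x at *
  have hl : 1 ≤ log x := (le_log_iff_exp_le hx).2 hexp
  have hk : (k : ℝ) ≤ 2 * log x := by
    have hk_log := log_le_log (by positivity) h2k
    rw [log_pow] at hk_log
    nlinarith [log_two_gt_d9, (Nat.cast_nonneg k : (0 : ℝ) ≤ k)]
  rw [norm_eq_abs, norm_eq_abs, abs_of_nonneg (by positivity), id, abs_of_pos hx,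
    one_div, inv_mul_eq_div, le_div_iff₀ (by positivity)] at hlog
  calc C * (scaleSeq (k + 1) : ℝ) ^ p * 2 ^ k
      ≤ exp |C| * (x ^ (k + 2)) ^ p * x := by
        rw [hsucc]
        gcongr
        linarith [add_one_le_exp |C|, le_abs_self C]
    _ = exp (|C| + (k + 2) * p * log x + log x) := by
        rw [exp_add, exp_add, exp_log hx, ← pow_mul, mul_comm _ (log x), exp_mul, exp_log hx]
        norm_cast
    _ ≤ exp x := by
        refine exp_le_exp.2 (le_trans ?_ hlog)
        have hkp : (k + 2) * (p : ℝ) * log x ≤ (2 * log x + 2 * log x) * p * log x := by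
          gcongr
          linarith
        nlinarith [mul_nonneg (abs_nonneg C) (sub_nonneg.2 (one_le_pow₀ (n := 2) hl))]

theorem const_mul_expScale_mul_pow_le_exp (C : ℝ) (q p : ℕ) :
    ∀ᶠ k in atTop, C * (expScale q (scaleSeq k) * (scaleSeq (k + 1) : ℝ) ^ p) * 2 ^ k ≤
      exp (scaleSeq (k + 1)) := by
  have hpow := (isLittleO_pow_exp_pos_mul_atTop (p + 1) one_half_pos).bound
    (c := 1 / (|C| + 1)) (by positivity)
  filter_upwards [(tendsto_cast_scaleSeq.comp (tendsto_add_atTop_nat 1)).eventually hpow,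
    const_mul_pow_le_scaleSeq_succ 2 q] with k hpow hscale
  have hx := two_le_cast_scaleSeq k
  have hy := two_le_cast_scaleSeq (k + 1)
  have h2k : (2 : ℝ) ^ k ≤ scaleSeq (k + 1) :=
    (two_pow_le_cast_scaleSeq k).trans (by linarith [two_mul_cast_scaleSeq_le k])
  simp only [Function.comp_apply] at hpow
  generalize (scaleSeq (k + 1) : ℝ) = y at *
  rw [norm_eq_abs, norm_eq_abs, abs_of_nonneg (by positivity), abs_exp, one_div, inv_mul_eq_div,
    le_div_iff₀ (by positivity)] at hpow
  have hexpScale : expScale q (scaleSeq k) ≤ exp (1 / 2 * y) := by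
    refine exp_le_exp.2 ?_
    have h2k : (1 : ℝ) ≤ 2 ^ k := one_le_pow₀ one_le_two
    nlinarith [pow_pos (by linarith : (0 : ℝ) < scaleSeq k) q]
  calc C * (expScale q (scaleSeq k) * y ^ p) * 2 ^ k
      ≤ (|C| + 1) * (exp (1 / 2 * y) * y ^ p) * y := by
        have hC : C ≤ |C| + 1 := by linarith [le_abs_self C]
        have hE : 0 ≤ expScale q (scaleSeq k) := (exp_pos _).le
        gcongr
    _ = (y ^ (p + 1) * (|C| + 1)) * exp (1 / 2 * y) := by ring
    _ ≤ exp (1 / 2 * y) * exp (1 / 2 * y) := by gcongr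
    _ = exp y := by rw [← exp_add]; ring_nf

end Scales

/-- The parameters of the construction: a badly approximable frequency `ω`, with constant `c`, and
the exponent `lam` of the constant diagonal cocycle one starts from. -/
structure ConjScheme where
  ω : ℝ
  c : ℝ
  lam : ℝ
  badlyApproximable : BadlyApproximable ω c
  one_le_lam : 1 ≤ lam

namespace ConjScheme

/-- The cutoff `χ_k` localising the `k`-th perturbation. Its width makes the first `2 m_k + 1`
translates of its support disjoint. -/
noncomputable def cutoff (S : ConjScheme) (k : ℕ) : ℝ → ℝ := bump (S.c / (12 * truncOrder k))

/-- The function `f_k = a_k χ_k`, where `a` is the sequence of weights. -/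
noncomputable def perturbation (S : ConjScheme) (a : ℕ → ℝ) (k : ℕ) (y : ℝ) : ℝ :=
  a k * S.cutoff k y

/-- The diagonal exponent `g_k` to which the `k`-th approximation is conjugate. -/
noncomputable def exponent (S : ConjScheme) (a : ℕ → ℝ) : ℕ → ℝ → ℝ
  | 0, _ => S.lam
  | k + 1, y =>
    S.exponent a k y - S.perturbation a k y / 2 - S.perturbation a k (y + S.ω) / 2

/-- The conjugacy `V_k` between the `k`-th approximation and its diagonal form. -/
noncomputable def conj (S : ConjScheme) (a : ℕ → ℝ) : ℕ → ℝ → Mat2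
  | 0, _ => 1
  | k + 1, y =>
    S.conj a k y * stepConj S.ω (S.perturbation a k) (S.exponent a k) (truncOrder k) y

/-- The `k`-th approximation `D_k(y) = V_k(y + ω) diag(e^{g_k(y)}, e^{-g_k(y)}) V_k(y)⁻¹`. The
adjugate stands for the inverse, since `V_k` has determinant one. -/
noncomputable def approx (S : ConjScheme) (a : ℕ → ℝ) (k : ℕ) (y : ℝ) : Mat2 :=
  S.conj a k (y + S.ω) * expDiag (S.exponent a k y) * (S.conj a k y).adjugate

/-- The difference between the `k`-th step and a pure perturbation along `nilp`; it comes from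
truncating the series for the conjugacy. -/
noncomputable def truncError (S : ConjScheme) (a : ℕ → ℝ) (k : ℕ) (y : ℝ) : Mat2 :=
  S.conj a k (y + S.ω) * expDiag (S.exponent a k y) *
      offDiag (upperTerm S.ω (S.perturbation a k) (S.exponent a k) (truncOrder k + 1) y)
        (lowerTerm S.ω (S.perturbation a k) (S.exponent a k) (truncOrder k) y) *
    (S.conj a k y).adjugate

variable (S : ConjScheme) (a : ℕ → ℝ) {b : ℕ → ℝ} (k : ℕ) {y : ℝ}

theorem width_pos : 0 < S.c / (12 * truncOrder k) := by
  have := S.badlyApproximable.pos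
  have := truncOrder_pos k
  positivity

theorem periodic_cutoff : Function.Periodic (S.cutoff k) 1 := periodic_bump _

theorem contDiff_cutoff : ContDiff ℝ (⊤ : ℕ∞) (S.cutoff k) := contDiff_bump _

theorem cutoff_nonneg (x : ℝ) : 0 ≤ S.cutoff k x := bump_nonneg _ _

theorem cutoff_le_one (x : ℝ) : S.cutoff k x ≤ 1 := bump_le_one _ _

theorem orbitSeparated_cutoff : OrbitSeparated S.ω (2 * truncOrder k + 1) (S.cutoff k) := by
  refine S.badlyApproximable.orbitSeparated_bump (S.width_pos k) ?_
  have hm : (1 : ℝ) ≤ truncOrder k := by exact_mod_cast truncOrder_pos k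
  have hc := S.badlyApproximable.pos
  rw [mul_div_assoc', div_mul_eq_mul_div, div_le_iff₀ (by positivity)]
  push_cast
  nlinarith

theorem cutoff_eq_one_of_ne_zero {i : ℕ} (hik : i < k) (hy : S.cutoff k y ≠ 0) :
    S.cutoff i y = 1 := by
  refine bump_eq_one_of_bump_ne_zero (S.width_pos k) ?_ hy
  have hm : (2 : ℝ) * truncOrder i ≤ truncOrder k := by exact_mod_cast two_mul_truncOrder_le hik
  have hi : (0 : ℝ) < truncOrder i := by exact_mod_cast truncOrder_pos i
  have hk : (0 : ℝ) < truncOrder k := by exact_mod_cast truncOrder_pos k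
  have hc := S.badlyApproximable.pos
  rw [mul_div_assoc', div_le_div_iff₀ (by positivity) (by positivity)]
  nlinarith

theorem orbitSeparated_perturbation :
    OrbitSeparated S.ω (2 * truncOrder k + 1) (S.perturbation a k) :=
  (S.orbitSeparated_cutoff k).const_mul (a k)

theorem periodic_perturbation : Function.Periodic (S.perturbation a k) 1 := fun y => by
  rw [perturbation, perturbation, S.periodic_cutoff k y]

theorem periodic_exponent : Function.Periodic (S.exponent a k) 1 := by
  induction k with
  | zero => exact fun y => rfl
  | succ k ih =>
    intro y
    rw [exponent, exponent, ih y, S.periodic_perturbation a k y, add_right_comm,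
      S.periodic_perturbation a k]

theorem periodic_conj : Function.Periodic (S.conj a k) 1 := by
  induction k with
  | zero => exact fun y => rfl
  | succ k ih =>
    intro y
    rw [conj, conj, ih y,
      periodic_stepConj (S.periodic_perturbation a k) (S.periodic_exponent a k)]

theorem periodic_approx : Function.Periodic (S.approx a k) 1 := fun y => by
  rw [approx, approx, add_right_comm, S.periodic_conj a k, S.periodic_conj a k,
    S.periodic_exponent a k]

theorem det_conj (y : ℝ) : (S.conj a k y).det = 1 := by
  induction k with
  | zero => simp [conj]
  | succ k ih => rw [conj, Matrix.det_mul, ih, det_stepConj, one_mul]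

theorem det_approx (y : ℝ) : (S.approx a k y).det = 1 := by
  simp [approx, Matrix.det_mul, Matrix.det_adjugate, det_conj, det_expDiag]

variable {a k}

theorem perturbation_congr (h : a k = b k) : S.perturbation a k = S.perturbation b k := by
  funext y
  rw [perturbation, perturbation, h]

theorem exponent_congr (h : ∀ i < k, a i = b i) : S.exponent a k = S.exponent b k := by
  induction k with
  | zero => rfl
  | succ k ih =>
    funext y
    simp only [exponent, ih fun i hi => h i (hi.trans k.lt_succ_self),
      S.perturbation_congr (h k k.lt_succ_self)]

theorem conj_congr (h : ∀ i < k, a i = b i) : S.conj a k = S.conj b k := by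
  induction k with
  | zero => rfl
  | succ k ih =>
    have h' : ∀ i < k, a i = b i := fun i hi => h i (hi.trans k.lt_succ_self)
    funext y
    rw [conj, conj, ih h', S.exponent_congr h', S.perturbation_congr (h k k.lt_succ_self)]

theorem approx_congr (h : ∀ i < k, a i = b i) : S.approx a k = S.approx b k := by
  funext y
  rw [approx, approx, S.conj_congr h, S.exponent_congr h]

theorem approx_zero (y : ℝ) : S.approx a 0 y = expDiag S.lam := by
  simp [approx, conj, exponent]

variable (a k) in
theorem approx_succ_eq_conj (y : ℝ) :
    S.approx a (k + 1) y = S.approx a k y + (1 - exp (-S.perturbation a k y)) •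
        (S.conj a k (y + S.ω) * expDiag (S.exponent a k y) *
          (nilp * (S.conj a k y).adjugate)) + S.truncError a k y := by
  have hstep := stepConj_mul_expDiag_mul_adjugate (truncOrder_pos k)
    (S.orbitSeparated_perturbation a k) (S.exponent a k) y
  calc S.approx a (k + 1) y
      = S.conj a k (y + S.ω) *
          (stepConj S.ω (S.perturbation a k) (S.exponent a k) (truncOrder k) (y + S.ω) *
            expDiag (S.exponent a k y - S.perturbation a k y / 2
              - S.perturbation a k (y + S.ω) / 2) *
            (stepConj S.ω (S.perturbation a k) (S.exponent a k) (truncOrder k) y).adjugate) *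
          (S.conj a k y).adjugate := by
        simp only [approx, conj, exponent, Matrix.adjugate_mul_distrib, Matrix.mul_assoc]
    _ = _ := by
        rw [hstep, approx, truncError]
        simp only [Matrix.mul_add, Matrix.add_mul, Matrix.mul_one, Matrix.mul_smul,
          Matrix.smul_mul, Matrix.mul_assoc]

theorem perturbation_ne_zero (ha : ∀ i, a i ≠ 0) (hy : S.cutoff k y = 1) :
    S.perturbation a k y ≠ 0 := by
  rw [perturbation, hy, mul_one]
  exact ha k

theorem truncError_of_ne_zero (hy : S.perturbation a k y ≠ 0) : S.truncError a k y = 0 := by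
  have hsep := S.orbitSeparated_perturbation a k
  rw [truncError, upperTerm_last_of_ne_zero hsep hy,
    lowerTerm_last_of_ne_zero (truncOrder_pos k) hsep hy, offDiag_zero]
  simp only [Matrix.mul_zero, Matrix.zero_mul]

theorem conj_mul_nilp_mul_adjugate (ha : ∀ i, a i ≠ 0) (hy : ∀ i < k, S.cutoff i y = 1) :
    S.conj a k y * nilp * (S.conj a k y).adjugate =
      exp (-∑ i ∈ Finset.range k, a i) • nilp := by
  induction k with
  | zero => simp [conj]
  | succ k ih =>
    have hk := hy k k.lt_succ_self
    have hstep := stepConj_mul_nilp_mul_adjugate (g := S.exponent a k)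
      (S.orbitSeparated_perturbation a k) (S.perturbation_ne_zero ha hk)
    rw [show S.perturbation a k y = a k by rw [perturbation, hk, mul_one]] at hstep
    calc S.conj a (k + 1) y * nilp * (S.conj a (k + 1) y).adjugate
        = S.conj a k y *
            (stepConj S.ω (S.perturbation a k) (S.exponent a k) (truncOrder k) y * nilp *
              (stepConj S.ω (S.perturbation a k) (S.exponent a k) (truncOrder k) y).adjugate) *
            (S.conj a k y).adjugate := by
          simp only [conj, Matrix.adjugate_mul_distrib, Matrix.mul_assoc]
      _ = exp (-a k) • (S.conj a k y * nilp * (S.conj a k y).adjugate) := by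
          rw [hstep, Matrix.mul_smul, Matrix.smul_mul]
      _ = exp (-∑ i ∈ Finset.range (k + 1), a i) • nilp := by
          rw [ih fun i hi => hy i (hi.trans k.lt_succ_self), smul_smul, ← exp_add,
            Finset.sum_range_succ, neg_add_rev]

theorem nilp_mul_adjugate_conj (ha : ∀ i, a i ≠ 0) (hy : ∀ i < k, S.cutoff i y = 1) :
    nilp * (S.conj a k y).adjugate =
      exp (-∑ i ∈ Finset.range k, a i) • ((S.conj a k y).adjugate * nilp) := by
  have hinv : (S.conj a k y).adjugate * S.conj a k y = 1 := by
    rw [Matrix.adjugate_mul, det_conj, one_smul]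
  rw [← Matrix.mul_smul, ← S.conj_mul_nilp_mul_adjugate ha hy, ← Matrix.mul_assoc,
    ← Matrix.mul_assoc, hinv, Matrix.one_mul]

theorem approx_succ_of_cutoff_eq_one (ha : ∀ i, a i ≠ 0) (hy : ∀ i < k, S.cutoff i y = 1) :
    S.approx a (k + 1) y = S.approx a k y +
      (exp (-∑ i ∈ Finset.range k, a i) * (1 - exp (-S.perturbation a k y))) •
        (S.approx a k y * nilp) + S.truncError a k y := by
  rw [approx_succ_eq_conj, S.nilp_mul_adjugate_conj ha hy, Matrix.mul_smul, smul_smul,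
    mul_comm (1 - _), ← Matrix.mul_assoc]
  rfl

theorem approx_mul_nilp (ha : ∀ i, a i ≠ 0) (hy : ∀ i < k, S.cutoff i y = 1) :
    S.approx a k y * nilp = expDiag S.lam * nilp := by
  induction k with
  | zero => rw [approx_zero]
  | succ k ih =>
    have hy' : ∀ i < k, S.cutoff i y = 1 := fun i hi => hy i (hi.trans k.lt_succ_self)
    have hk := S.perturbation_ne_zero ha (hy k k.lt_succ_self)
    rw [S.approx_succ_of_cutoff_eq_one ha hy', S.truncError_of_ne_zero hk, add_zero,
      Matrix.add_mul, Matrix.smul_mul, Matrix.mul_assoc _ nilp nilp, nilp_mul_nilp,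
      Matrix.mul_zero, smul_zero, add_zero, ih hy']

-- The perturbation along `nilp` has size `exp (-∑ a_i)`, independently of how large `V_k` is.
theorem approx_succ (ha : ∀ i, a i ≠ 0) (k : ℕ) (y : ℝ) :
    S.approx a (k + 1) y = S.approx a k y +
      (exp (-∑ i ∈ Finset.range k, a i) * (1 - exp (-S.perturbation a k y))) •
        (expDiag S.lam * nilp) + S.truncError a k y := by
  by_cases hk : S.perturbation a k y = 0
  · rw [approx_succ_eq_conj]
    simp only [hk, neg_zero, exp_zero, sub_self, mul_zero, zero_smul]
  · have hy : ∀ i < k, S.cutoff i y = 1 := fun i hi =>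
      S.cutoff_eq_one_of_ne_zero k hi (right_ne_zero_of_mul hk)
    rw [S.approx_succ_of_cutoff_eq_one ha hy, S.approx_mul_nilp ha hy]

end ConjScheme

/-! ### Estimates uniform in the weights -/

namespace ConjScheme

/-- The mean `Λ_k` of the exponent `g_k`. -/
noncomputable def meanExponent (S : ConjScheme) (a : ℕ → ℝ) (k : ℕ) : ℝ :=
  S.lam - ∑ i ∈ Finset.range k, a i * ∫ x in (0 : ℝ)..1, S.cutoff i x

/-- Weights for which the construction converges: large enough for the conjugacies to contract
`nilp`, yet leaving at least half of the mean exponent at every step. -/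
structure Admissible (S : ConjScheme) (a : ℕ → ℝ) : Prop where
  scaleSeq_le : ∀ i, (scaleSeq (i + 1) : ℝ) ≤ a i
  le_meanExponent : ∀ i, a i ≤ S.meanExponent a i * truncOrder i / 2

/-- The indices over which the estimates are uniform: admissible weights and a step. -/
abbrev Index (S : ConjScheme) := {a : ℕ → ℝ // S.Admissible a} × ℕ

/-- The scale `N_k` at step `k`. -/
noncomputable def curScale (S : ConjScheme) (i : S.Index) : ℝ := scaleSeq i.2

/-- The scale `N_{k+1}` at step `k`. -/
noncomputable def nextScale (S : ConjScheme) (i : S.Index) : ℝ := scaleSeq (i.2 + 1)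

variable (S : ConjScheme) {a : ℕ → ℝ} (k : ℕ)

theorem two_le_curScale (i : S.Index) : 2 ≤ S.curScale i := two_le_cast_scaleSeq _

theorem two_le_nextScale (i : S.Index) : 2 ≤ S.nextScale i := two_le_cast_scaleSeq _

theorem curScale_le_nextScale (i : S.Index) : S.curScale i ≤ S.nextScale i :=
  Nat.cast_le.2 (strictMono_scaleSeq.monotone i.2.le_succ)

theorem integral_cutoff_nonneg : 0 ≤ ∫ x in (0 : ℝ)..1, S.cutoff k x :=
  intervalIntegral.integral_nonneg zero_le_one fun x _ => S.cutoff_nonneg k x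

theorem truncOrder_mul_integral_cutoff_le :
    truncOrder k * ∫ x in (0 : ℝ)..1, S.cutoff k x ≤ 1 := by
  have hle := (S.orbitSeparated_cutoff k).integral_le (S.periodic_cutoff k)
    (S.contDiff_cutoff k).continuous.measurable (S.cutoff_nonneg k) (S.cutoff_le_one k)
  have hm : (0 : ℝ) ≤ truncOrder k := Nat.cast_nonneg _
  rw [le_div_iff₀ (by positivity)] at hle
  push_cast at hle
  nlinarith [S.integral_cutoff_nonneg k]

theorem meanExponent_succ (a : ℕ → ℝ) : S.meanExponent a (k + 1) =
    S.meanExponent a k - a k * ∫ x in (0 : ℝ)..1, S.cutoff k x := by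
  rw [meanExponent, meanExponent, Finset.sum_range_succ, sub_sub]

theorem half_meanExponent_le_succ (hnonneg : 0 ≤ S.meanExponent a k)
    (hle : a k ≤ S.meanExponent a k * truncOrder k / 2) :
    S.meanExponent a k / 2 ≤ S.meanExponent a (k + 1) := by
  have hdrop : a k * ∫ x in (0 : ℝ)..1, S.cutoff k x ≤ S.meanExponent a k / 2 := by
    nlinarith [mul_le_mul_of_nonneg_right hle (S.integral_cutoff_nonneg k),
      mul_le_mul_of_nonneg_left (S.truncOrder_mul_integral_cutoff_le k) hnonneg]
  rw [meanExponent_succ]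
  linarith

theorem contDiff_exponent (a : ℕ → ℝ) : ContDiff ℝ (⊤ : ℕ∞) (S.exponent a k) := by
  induction k with
  | zero => exact contDiff_const
  | succ k ih =>
    have := S.contDiff_cutoff k
    simp only [exponent, perturbation]
    fun_prop

theorem integral_exponent (a : ℕ → ℝ) :
    ∫ x in (0 : ℝ)..1, S.exponent a k x = S.meanExponent a k := by
  induction k with
  | zero => simp [exponent, meanExponent]
  | succ k ih =>
    have hcont := (S.contDiff_exponent k a).continuous
    have hcutoff := (S.contDiff_cutoff k).continuous
    have hpert : Continuous (S.perturbation a k) := hcutoff.const_mul _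
    have hintegral : ∫ x in (0 : ℝ)..1, S.perturbation a k x / 2 =
        a k * (∫ x in (0 : ℝ)..1, S.cutoff k x) / 2 := by
      simp only [perturbation, intervalIntegral.integral_div, intervalIntegral.integral_const_mul]
    have hshift := integral_comp_add_of_periodic (F := fun x => S.perturbation a k x / 2)
      (fun x => by simp only [S.periodic_perturbation a k x]) S.ω
    simp only [exponent]
    rw [intervalIntegral.integral_sub, intervalIntegral.integral_sub, hshift, hintegral, ih,
      meanExponent_succ]
    · ring
    all_goals exact Continuous.intervalIntegrable (by fun_prop) _ _

namespace Admissible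

variable {S}

theorem pos (ha : S.Admissible a) : 0 < a k := by
  linarith [ha.scaleSeq_le k, two_le_cast_scaleSeq (k + 1)]

theorem two_pow_le_meanExponent (ha : S.Admissible a) : (1 / 2) ^ k ≤ S.meanExponent a k := by
  induction k with
  | zero => simpa [meanExponent] using S.one_le_lam
  | succ k ih =>
    have hhalf := S.half_meanExponent_le_succ k (le_trans (by positivity) ih) (ha.le_meanExponent k)
    rw [pow_succ]
    linarith

theorem meanExponent_le (ha : S.Admissible a) : S.meanExponent a k ≤ S.lam :=
  sub_le_self _ <| Finset.sum_nonneg fun i _ =>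
    mul_nonneg (ha.pos i).le (S.integral_cutoff_nonneg i)

theorem le_lam_mul_sq (ha : S.Admissible a) : a k ≤ S.lam * (scaleSeq (k + 1) : ℝ) ^ 2 := by
  have hle := ha.le_meanExponent k
  rw [cast_truncOrder] at hle
  have hsq : (0 : ℝ) ≤ (scaleSeq (k + 1) : ℝ) ^ 2 := by positivity
  nlinarith [ha.pos k, mul_le_mul_of_nonneg_right (ha.meanExponent_le k) hsq]

theorem exp_neg_sum_le (ha : S.Admissible a) :
    exp (-∑ i ∈ Finset.range k, a i) ≤ exp 2 * exp (-scaleSeq k) := by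
  rw [← exp_add]
  refine exp_le_exp.2 ?_
  cases k with
  | zero => simp [scaleSeq]
  | succ k =>
    have := Finset.single_le_sum (fun i _ => (ha.pos i).le) (Finset.self_mem_range_succ k)
    linarith [ha.scaleSeq_le k]

theorem perturbation_nonneg (ha : S.Admissible a) (y : ℝ) : 0 ≤ S.perturbation a k y :=
  mul_nonneg (ha.pos k).le (S.cutoff_nonneg k y)

theorem perturbation_le (ha : S.Admissible a) (y : ℝ) : S.perturbation a k y ≤ a k :=
  mul_le_of_le_one_right (ha.pos k).le (S.cutoff_le_one k y)

end Admissible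

theorem exists_truncOrder_succ_le :
    ∃ q, ∀ i : S.Index, ((truncOrder i.2 + 1 : ℕ) : ℝ) ≤ polyScale q (S.nextScale i) := by
  refine ⟨3, fun i => ?_⟩
  have hX := S.two_le_nextScale i
  rw [Nat.cast_add_one, cast_truncOrder, polyScale]
  change S.nextScale i ^ 2 + 1 ≤ S.nextScale i ^ 3
  nlinarith [sq_nonneg (S.nextScale i)]

theorem hasGrowth_perturbation (j : ℕ) :
    HasGrowth polyScale S.nextScale j fun i => S.perturbation i.1 i.2 := by
  have hΦ := isGrowthScale_polyScale
  have hc := S.badlyApproximable.pos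
  obtain ⟨q, hq⟩ := hΦ.exists_const_mul_le (144 / S.c ^ 2) 4
  have hcutoff : HasGrowth polyScale S.nextScale j fun i => S.cutoff i.2 := by
    refine HasGrowth.bump S.two_le_nextScale (q := q) (fun i => ?_) j
    refine le_trans (le_of_eq ?_) (hq _ (S.two_le_nextScale i))
    have hN := two_le_cast_scaleSeq (i.2 + 1)
    rw [cast_truncOrder, polyScale, nextScale]
    field_simp
    norm_num
  obtain ⟨r, hr⟩ := hΦ.exists_const_mul_le S.lam 2
  refine HasGrowth.mul hΦ ⟨S.two_le_nextScale, r, fun i => (DerivBound.const j _).mono ?_⟩ hcutoff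
  rw [norm_eq_abs, abs_of_pos (i.1.2.pos i.2)]
  exact (i.1.2.le_lam_mul_sq i.2).trans (hr _ (S.two_le_nextScale i))

theorem pow_add_pow_le_pow {x y : ℝ} (hx : 0 ≤ x) (hxy : 2 * x ≤ y) (hy : 2 ≤ y) {p q : ℕ}
    (hpq : p + 1 ≤ q) : x ^ q + y ^ p ≤ y ^ q := by
  have hxq : 2 * x ^ q ≤ y ^ q :=
    calc 2 * x ^ q ≤ 2 ^ q * x ^ q := by gcongr; exact le_self_pow₀ one_le_two (by lia)
      _ = (2 * x) ^ q := (mul_pow _ _ _).symm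
      _ ≤ y ^ q := by gcongr
  have hyp : 2 * y ^ p ≤ y ^ q :=
    calc 2 * y ^ p ≤ y * y ^ p := by gcongr
      _ = y ^ (p + 1) := (pow_succ' y p).symm
      _ ≤ y ^ q := pow_le_pow_right₀ (by linarith) hpq
  linarith

/- The scales at least double, so in both inductions below the bound at step `k` plus the growth
in terms of `N_{k+1}` of one more step is again of the form allowed at step `k + 1`. -/
theorem hasGrowth_exponent (j : ℕ) :
    HasGrowth polyScale S.curScale j fun i => S.exponent i.1 i.2 := by
  obtain ⟨p, hp⟩ := (S.hasGrowth_perturbation j).exists_derivBound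
  obtain ⟨r, hr⟩ := isGrowthScale_polyScale.exists_ge ‖S.lam‖
  refine ⟨S.two_le_curScale, p + 1 + r, fun ⟨a, k⟩ => ?_⟩
  simp only [curScale]
  induction k with
  | zero =>
    refine (DerivBound.const j S.lam).mono ((hr _ (two_le_cast_scaleSeq 0)).trans ?_)
    exact pow_le_pow_right₀ (by linarith [two_le_cast_scaleSeq 0]) (by lia)
  | succ k ih =>
    have hpert := (hp (a, k)).const_smul (1 / 2)
    have hstep := (ih.sub hpert).sub (hpert.comp_add_const S.ω)
    refine DerivBound.mono ?_ (pow_add_pow_le_pow (p := p) (by positivity)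
      (two_mul_cast_scaleSeq_le k) (two_le_cast_scaleSeq (k + 1)) (by lia))
    convert hstep using 1
    · funext y
      simp only [exponent, smul_eq_mul]
      ring
    · rw [abs_of_pos one_half_pos, polyScale, polyScale, nextScale]
      ring

theorem hasGrowth_stepConj (j : ℕ) : HasGrowth expScale S.nextScale j fun i =>
    stepConj S.ω (S.perturbation i.1 i.2) (S.exponent i.1 i.2) (truncOrder i.2) := by
  obtain ⟨q, hq⟩ := S.exists_truncOrder_succ_le
  exact (S.hasGrowth_perturbation j).stepConj S.ω
    ((S.hasGrowth_exponent j).mono isGrowthScale_polyScale S.curScale_le_nextScale) hq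

theorem hasGrowth_conj (j : ℕ) : HasGrowth expScale S.curScale j fun i => S.conj i.1 i.2 := by
  obtain ⟨p, hp⟩ := (S.hasGrowth_stepConj j).exists_derivBound
  obtain ⟨C, hmul⟩ := exists_derivBound_matMul j
  obtain ⟨p', hp'⟩ := isGrowthScale_expScale.exists_const_mul_le C p
  obtain ⟨r, hr⟩ := isGrowthScale_expScale.exists_ge ‖(1 : Mat2)‖
  refine ⟨S.two_le_curScale, p' + 1 + r, fun ⟨a, k⟩ => ?_⟩
  simp only [curScale]
  induction k with
  | zero =>
    refine (DerivBound.const j (1 : Mat2)).mono ((hr _ (two_le_cast_scaleSeq 0)).trans ?_)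
    exact exp_le_exp.2 (pow_le_pow_right₀ (by linarith [two_le_cast_scaleSeq 0]) (by lia))
  | succ k ih =>
    refine (hmul ih (hp (a, k))).mono ?_
    have hN := two_le_cast_scaleSeq (k + 1)
    calc C * (expScale (p' + 1 + r) (scaleSeq k) * expScale p (scaleSeq (k + 1)))
        = expScale (p' + 1 + r) (scaleSeq k) *
            (C * expScale p (scaleSeq (k + 1))) := by ring
      _ ≤ expScale (p' + 1 + r) (scaleSeq k) * expScale p' (scaleSeq (k + 1)) :=
          mul_le_mul_of_nonneg_left (hp' _ hN) (exp_pos _).le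
      _ ≤ expScale (p' + 1 + r) (scaleSeq (k + 1)) := by
          rw [expScale, expScale, ← exp_add]
          exact exp_le_exp.2 (pow_add_pow_le_pow (by positivity) (two_mul_cast_scaleSeq_le k) hN
            (by lia))

theorem hasGrowth_conj_mul_expDiag (j : ℕ) : HasGrowth expScale S.curScale j
    fun i y => S.conj i.1 i.2 (y + S.ω) * expDiag (S.exponent i.1 i.2 y) :=
  ((S.hasGrowth_conj j).comp_add_const fun _ => S.ω).matMul isGrowthScale_expScale
    (S.hasGrowth_exponent j).expDiag

theorem hasGrowth_approx (j : ℕ) : HasGrowth expScale S.curScale j fun i => S.approx i.1 i.2 :=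
  (S.hasGrowth_conj_mul_expDiag j).matMul isGrowthScale_expScale
    ((S.hasGrowth_conj j).adjugate isGrowthScale_expScale)

theorem hasGrowth_one_sub_exp_neg_perturbation (j : ℕ) :
    HasGrowth polyScale S.nextScale j fun i y => 1 - exp (-S.perturbation i.1 i.2 y) :=
  (HasGrowth.const isGrowthScale_polyScale S.two_le_nextScale j (1 : ℝ)).sub
    isGrowthScale_polyScale
    ((S.hasGrowth_perturbation j).neg.exp_of_nonpos fun i x => by
      linarith [i.1.2.perturbation_nonneg i.2 x])

theorem eventually_le_birkhoffSum_exponent : ∀ᶠ k in atTop, ∀ a, S.Admissible a →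
    ∀ n, truncOrder k ≤ n → n ≤ truncOrder k + 1 → ∀ y,
      S.meanExponent a k * truncOrder k / 2 ≤ birkhoffSum (· + S.ω) (S.exponent a k) n y := by
  obtain ⟨p, hp⟩ := (S.hasGrowth_exponent 1).exists_derivBound
  have hc := S.badlyApproximable.pos
  filter_upwards [const_mul_pow_le_scaleSeq_succ (2 * (4 * π / S.c + 1)) p]
    with k hk a ha n hmn hnm y
  have hlip := (hp (⟨a, ha⟩, k)).lipschitzWith
  have hequi := S.badlyApproximable.abs_birkhoffSum_sub_le (S.periodic_exponent a k) hlip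
    (zero_lt_two.trans_le (two_le_scaleSeq (k + 1))) n y
  have hmean := ha.two_pow_le_meanExponent k
  have hN := two_le_cast_scaleSeq (k + 1)
  have hm := cast_truncOrder k
  have hmn' : (truncOrder k : ℝ) ≤ n := mod_cast hmn
  have hnm' : (n : ℝ) ≤ truncOrder k + 1 := mod_cast hnm
  rw [integral_exponent, coe_toNNReal _ (hp (⟨a, ha⟩, k)).nonneg, polyScale, curScale] at hequi
  generalize S.meanExponent a k = L at *
  generalize (scaleSeq (k + 1) : ℝ) = N at *
  have hx : (0 : ℝ) ≤ (scaleSeq k : ℝ) ^ p := by positivity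
  generalize (scaleSeq k : ℝ) ^ p = X at *
  rw [hm] at hmn' hnm' ⊢
  have hLN : 2 * (4 * π / S.c + 1) * X ≤ L * N := by
    refine le_trans ?_ (mul_le_mul_of_nonneg_right hmean (by linarith))
    rw [one_div, inv_pow, inv_mul_eq_div, le_div_iff₀ (by positivity)]
    exact hk
  have herror : X * (2 * π * n / (S.c * N) + N) ≤ X * ((4 * π / S.c + 1) * N) := by
    gcongr
    have : 2 * π * n / (S.c * N) ≤ 4 * π / S.c * N := by
      rw [div_le_iff₀ (by positivity), show 4 * π / S.c * N * (S.c * N) = 2 * π * (2 * N ^ 2) by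
        field_simp; ring]
      gcongr
      nlinarith
    linarith
  have hL : 0 ≤ L := le_trans (by positivity) hmean
  nlinarith [(abs_le.1 hequi).1, mul_le_mul_of_nonneg_right hLN (by linarith : (0 : ℝ) ≤ N),
    mul_le_mul_of_nonneg_right hmn' hL]

end ConjScheme

/-! ### Convergence of the approximations -/

namespace ConjScheme

variable (S : ConjScheme) {a : ℕ → ℝ} (k : ℕ)

theorem eventually_derivBound_offDiag (j : ℕ) :
    ∃ p : ℕ, ∀ᶠ k in atTop, ∀ a, S.Admissible a →
      DerivBound j (fun y =>
          offDiag (upperTerm S.ω (S.perturbation a k) (S.exponent a k) (truncOrder k + 1) y)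
            (lowerTerm S.ω (S.perturbation a k) (S.exponent a k) (truncOrder k) y))
        (exp (-scaleSeq (k + 1)) * (scaleSeq (k + 1) : ℝ) ^ p) := by
  have hΦ := isGrowthScale_polyScale
  obtain ⟨K, hK⟩ := eventually_atTop.1 S.eventually_le_birkhoffSum_exponent
  obtain ⟨q, hq⟩ := S.exists_truncOrder_succ_le
  let e : {i : S.Index // K ≤ i.2} → S.Index := Subtype.val
  have hf := (S.hasGrowth_perturbation j).reindex e
  have hg := ((S.hasGrowth_exponent j).mono hΦ S.curScale_le_nextScale).reindex e
  have hf0 : ∀ i x, 0 ≤ S.perturbation (e i).1 (e i).2 x :=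
    fun i x => (e i).1.2.perturbation_nonneg _ x
  have hfg : ∀ i n, truncOrder (e i).2 ≤ n → n ≤ truncOrder (e i).2 + 1 → ∀ x y,
      S.nextScale (e i) + S.perturbation (e i).1 (e i).2 x ≤
        2 * birkhoffSum (· + S.ω) (S.exponent (e i).1 (e i).2) n y := fun i n hmn hnm x y => by
    have ha := (e i).1.2
    have hnext : S.nextScale (e i) ≤ (e i).1.1 (e i).2 := ha.scaleSeq_le _
    linarith [ha.le_meanExponent (e i).2, ha.perturbation_le (e i).2 x, hK _ i.2 _ ha n hmn hnm y]
  have hupper := hf.exp_mul_upperTerm S.ω hg (fun i => hq (e i)) hf0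
    fun i => hfg i _ (Nat.le_succ _) le_rfl
  have hlower := hf.exp_mul_lowerTerm S.ω hg
    (fun i => le_trans (mod_cast Nat.le_succ _) (hq (e i))) hf0
    fun i => hfg i _ le_rfl (Nat.le_succ _)
  obtain ⟨p, hp⟩ := (hupper.offDiag hΦ hlower).exists_derivBound
  refine ⟨p, eventually_atTop.2 ⟨K, fun k hk a ha => ?_⟩⟩
  have hbound := (hp ⟨(⟨a, ha⟩, k), hk⟩).const_smul (exp (-scaleSeq (k + 1)))
  rw [abs_exp] at hbound
  change DerivBound j _ (exp (-scaleSeq (k + 1)) * (scaleSeq (k + 1) : ℝ) ^ p) at hbound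
  convert hbound using 2 with y
  have hcancel : exp (-(scaleSeq (k + 1) : ℝ)) * exp (scaleSeq (k + 1)) = 1 := by
    rw [← exp_add, neg_add_cancel, exp_zero]
  apply mat2_ext <;> simp [offDiag, nextScale, e, ← mul_assoc, hcancel]

theorem eventually_derivBound_truncError (j : ℕ) :
    ∀ᶠ k in atTop, ∀ a, S.Admissible a → DerivBound j (S.truncError a k) ((1 / 2) ^ (k + 1)) := by
  obtain ⟨C, hmul⟩ := exists_derivBound_matMul j
  obtain ⟨p, hoff⟩ := S.eventually_derivBound_offDiag j
  obtain ⟨q, hq⟩ := (S.hasGrowth_conj_mul_expDiag j).exists_derivBound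
  obtain ⟨q', hq'⟩ := ((S.hasGrowth_conj j).adjugate isGrowthScale_expScale).exists_derivBound
  obtain ⟨r, hr⟩ := isGrowthScale_expScale.exists_mul_le q q'
  filter_upwards [hoff, const_mul_expScale_mul_pow_le_exp (2 * C ^ 2) r p] with k hoff hscale a ha
  let i : S.Index := (⟨a, ha⟩, k)
  refine (hmul (hmul (hq i) (hoff a ha)) (hq' i)).mono ?_
  have hE := hr _ (two_le_cast_scaleSeq k)
  have hN : (0 : ℝ) ≤ scaleSeq (k + 1) := Nat.cast_nonneg _
  change C * (C * (expScale q (scaleSeq k) * _) * expScale q' (scaleSeq k)) ≤ _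
  generalize (scaleSeq (k + 1) : ℝ) = N at *
  rw [one_div, inv_pow, ← one_div, le_div_iff₀ (by positivity)]
  calc C * (C * (expScale q (scaleSeq k) * (exp (-N) * N ^ p)) * expScale q' (scaleSeq k)) *
        2 ^ (k + 1)
      = 2 * C ^ 2 * ((expScale q (scaleSeq k) * expScale q' (scaleSeq k)) * N ^ p) * 2 ^ k *
          exp (-N) := by ring
    _ ≤ 2 * C ^ 2 * (expScale r (scaleSeq k) * N ^ p) * 2 ^ k * exp (-N) := by gcongr
    _ ≤ exp N * exp (-N) := by gcongr
    _ = 1 := by rw [← exp_add, add_neg_cancel, exp_zero]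

theorem eventually_derivBound_nilp (j : ℕ) : ∀ᶠ k in atTop, ∀ a, S.Admissible a →
    DerivBound j (fun y => (exp (-∑ i ∈ Finset.range k, a i) *
      (1 - exp (-S.perturbation a k y))) • (expDiag S.lam * nilp)) ((1 / 2) ^ (k + 1)) := by
  obtain ⟨p, hp⟩ := ((S.hasGrowth_one_sub_exp_neg_perturbation j).smul_const
    isGrowthScale_polyScale (expDiag S.lam * nilp)).exists_derivBound
  filter_upwards [const_mul_pow_scaleSeq_succ_le_exp (2 * exp 2) p] with k hscale a ha
  have hbound := (hp (⟨a, ha⟩, k)).const_smul (exp (-∑ i ∈ Finset.range k, a i))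
  simp only [smul_smul, abs_exp] at hbound
  refine hbound.mono ?_
  change _ * (scaleSeq (k + 1) : ℝ) ^ p ≤ _
  rw [one_div, inv_pow, ← one_div, le_div_iff₀ (by positivity)]
  calc exp (-∑ i ∈ Finset.range k, a i) * (scaleSeq (k + 1) : ℝ) ^ p * 2 ^ (k + 1)
      ≤ exp 2 * exp (-scaleSeq k) * (scaleSeq (k + 1) : ℝ) ^ p * 2 ^ (k + 1) := by
        gcongr
        exact ha.exp_neg_sum_le k
    _ = 2 * exp 2 * (scaleSeq (k + 1) : ℝ) ^ p * 2 ^ k * exp (-scaleSeq k) := by ring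
    _ ≤ exp (scaleSeq k) * exp (-scaleSeq k) := by gcongr
    _ = 1 := by rw [← exp_add, add_neg_cancel, exp_zero]

theorem eventually_derivBound_approx_succ_sub (j : ℕ) : ∀ᶠ k in atTop, ∀ a, S.Admissible a →
    DerivBound j (fun y => S.approx a (k + 1) y - S.approx a k y) ((1 / 2) ^ k) := by
  filter_upwards [S.eventually_derivBound_truncError j, S.eventually_derivBound_nilp j]
    with k htrunc hnilp a ha
  convert (hnilp a ha).add (htrunc a ha) using 1
  · funext y
    rw [S.approx_succ (fun i => (ha.pos i).ne'), add_assoc, add_sub_cancel_left]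
  · ring

theorem contDiff_approx (ha : S.Admissible a) : ContDiff ℝ (⊤ : ℕ∞) (S.approx a k) := by
  obtain ⟨p, hp⟩ := (S.hasGrowth_approx 0).exists_derivBound
  exact (hp (⟨a, ha⟩, k)).contDiff

end ConjScheme

section Series

variable {E : Type*} [NormedAddCommGroup E] [NormedSpace ℝ E] [CompleteSpace E] {f : ℕ → ℝ → E}
  {u : ℕ → ℝ} {U : ℝ} {j : ℕ}

theorem contDiff_tsum_of_eventually_derivBound (hu : Summable u)
    (hf : ∀ k, ContDiff ℝ (⊤ : ℕ∞) (f k)) (hbound : ∀ j, ∀ᶠ k in atTop, DerivBound j (f k) (u k)) :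
    ContDiff ℝ (⊤ : ℕ∞) fun x => ∑' k, f k x := by
  refine contDiff_tsum_of_eventually (v := fun _ => u) hf (fun _ _ => hu) fun j _ => ?_
  rw [Nat.cofinite_eq_atTop]
  filter_upwards [hbound j] with k hk x
  rw [norm_iteratedFDeriv_eq_norm_iteratedDeriv]
  exact hk.norm_le j le_rfl x

theorem derivBound_tsum (hu : HasSum u U) (hcd : ContDiff ℝ (⊤ : ℕ∞) fun x => ∑' k, f k x)
    (hf : ∀ k, DerivBound j (f k) (u k)) : DerivBound j (fun x => ∑' k, f k x) U := by
  refine ⟨hcd, fun i hi x => ?_⟩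
  have hderiv : ∀ (l k : ℕ) (x : ℝ), (l : ℕ∞) ≤ j → ‖iteratedFDeriv ℝ l (f k) x‖ ≤ u k :=
    fun l k x hl => by
      rw [norm_iteratedFDeriv_eq_norm_iteratedDeriv]
      exact (hf k).norm_le l (mod_cast hl) x
  rw [← norm_iteratedFDeriv_eq_norm_iteratedDeriv,
    iteratedFDeriv_tsum_apply (N := (j : ℕ∞)) (v := fun _ => u)
      (fun k => (hf k).contDiff.of_le (mod_cast le_top)) (fun _ _ => hu.summable) hderiv
      (mod_cast hi)]
  exact tsum_of_norm_bounded hu fun k => hderiv i k x (mod_cast hi)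

end Series

namespace ConjScheme

variable (S : ConjScheme) {a : ℕ → ℝ} (k : ℕ)

/-- The limit `D_∞` of the approximations, as a telescoping series. -/
noncomputable def limit (S : ConjScheme) (a : ℕ → ℝ) (y : ℝ) : Mat2 :=
  S.approx a 0 y + ∑' k, (S.approx a (k + 1) y - S.approx a k y)

theorem summable_approx_succ_sub (ha : S.Admissible a) (y : ℝ) :
    Summable fun k => S.approx a (k + 1) y - S.approx a k y := by
  refine Summable.of_norm_bounded_eventually_nat summable_geometric_two ?_
  filter_upwards [S.eventually_derivBound_approx_succ_sub 0] with k hk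
  exact (hk a ha).norm_apply_le y

theorem limit_sub_approx (ha : S.Admissible a) (y : ℝ) : S.limit a y - S.approx a k y =
    ∑' i, (S.approx a (i + k + 1) y - S.approx a (i + k) y) := by
  have hsplit := (S.summable_approx_succ_sub ha y).sum_add_tsum_nat_add k
  rw [Finset.sum_range_sub fun i => S.approx a i y] at hsplit
  rw [limit, ← hsplit]
  abel

theorem contDiff_limit (ha : S.Admissible a) : ContDiff ℝ (⊤ : ℕ∞) (S.limit a) :=
  (S.contDiff_approx 0 ha).add <| contDiff_tsum_of_eventually_derivBound summable_geometric_two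
    (fun k => (S.contDiff_approx (k + 1) ha).sub (S.contDiff_approx k ha))
    fun j => (S.eventually_derivBound_approx_succ_sub j).mono fun _ hk => hk a ha

theorem eventually_derivBound_limit_sub_approx (j : ℕ) : ∀ᶠ k in atTop, ∀ a, S.Admissible a →
    DerivBound j (fun y => S.limit a y - S.approx a k y) (2 * (1 / 2) ^ k) := by
  obtain ⟨K, hK⟩ := eventually_atTop.1 (S.eventually_derivBound_approx_succ_sub j)
  filter_upwards [eventually_ge_atTop K] with k hk a ha
  have hcd := (S.contDiff_limit ha).sub (S.contDiff_approx k ha)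
  have hgeom : HasSum (fun i : ℕ => ((1 : ℝ) / 2) ^ (i + k)) (2 * (1 / 2) ^ k) := by
    simpa only [pow_add] using hasSum_geometric_two.mul_right (((1 : ℝ) / 2) ^ k)
  simp only [S.limit_sub_approx k ha] at hcd ⊢
  exact derivBound_tsum hgeom hcd fun i => hK (i + k) (by lia) a ha

theorem periodic_limit (a : ℕ → ℝ) : Function.Periodic (S.limit a) 1 := fun y => by
  simp only [limit, S.periodic_approx a _ y]

theorem tendsto_approx (ha : S.Admissible a) (y : ℝ) :
    Tendsto (fun k => S.approx a k y) atTop (nhds (S.limit a y)) := by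
  have hsum := ((S.summable_approx_succ_sub ha y).hasSum.tendsto_sum_nat).const_add (S.approx a 0 y)
  refine hsum.congr fun k => ?_
  rw [Finset.sum_range_sub fun i => S.approx a i y, add_sub_cancel]

theorem det_limit (ha : S.Admissible a) (y : ℝ) : (S.limit a y).det = 1 := by
  have hdet := (continuous_id.matrix_det.tendsto (S.limit a y)).comp (S.tendsto_approx ha y)
  refine tendsto_nhds_unique (hdet.congr fun k => ?_) tendsto_const_nhds
  exact S.det_approx a k y

end ConjScheme

/-! ### Lyapunov exponents of cocycles -/

section OpNorm

theorem opNorm_nonneg (A : Mat2) : 0 ≤ opNorm A := norm_nonneg _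

theorem opNorm_mul_le (A B : Mat2) : opNorm (A * B) ≤ opNorm A * opNorm B := by
  rw [opNorm, map_mul]
  exact norm_mul_le _ _

theorem opNorm_mul_mul_le (A B C : Mat2) : opNorm (A * B * C) ≤ opNorm A * opNorm B * opNorm C :=
  (opNorm_mul_le _ _).trans (mul_le_mul_of_nonneg_right (opNorm_mul_le _ _) (opNorm_nonneg _))

theorem opNorm_one : opNorm (1 : Mat2) = 1 := by
  rw [opNorm, map_one]
  exact norm_one

theorem continuous_opNorm : Continuous opNorm :=
  (LinearMap.continuous_of_finiteDimensional
    (Matrix.toEuclideanCLM (n := Fin 2) (𝕜 := ℝ)).toAlgEquiv.toLinearMap).norm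

theorem exists_opNorm_le : ∃ C, 0 < C ∧ ∀ A : Mat2, opNorm A ≤ C * ‖A‖ :=
  (LinearMap.toContinuousLinearMap
    (Matrix.toEuclideanCLM (n := Fin 2) (𝕜 := ℝ)).toAlgEquiv.toLinearMap).bound

theorem sq_add_sq_le_opNorm_sq (A : Mat2) (j : Fin 2) :
    A 0 j ^ 2 + A 1 j ^ 2 ≤ opNorm A ^ 2 := by
  have hcol := (Matrix.toEuclideanCLM (n := Fin 2) (𝕜 := ℝ) A).le_opNorm
    (EuclideanSpace.single j 1)
  rw [PiLp.norm_single, norm_one, mul_one] at hcol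
  have hsq := pow_le_pow_left₀ (norm_nonneg _) hcol 2
  rw [EuclideanSpace.norm_sq_eq, Fin.sum_univ_two] at hsq
  simpa [opNorm, Matrix.ofLp_toEuclideanCLM] using hsq

theorem one_le_opNorm_of_det_eq_one {A : Mat2} (hA : A.det = 1) : 1 ≤ opNorm A := by
  have h0 := sq_add_sq_le_opNorm_sq A 0
  have h1 := sq_add_sq_le_opNorm_sq A 1
  rw [Matrix.det_fin_two] at hA
  have hsq : 1 ≤ opNorm A ^ 2 := by
    nlinarith [sq_nonneg (A 0 0 - A 1 1), sq_nonneg (A 0 1 + A 1 0)]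
  exact (one_le_sq_iff₀ (opNorm_nonneg A)).1 hsq

theorem log_opNorm_mul_le {A B : Mat2} (hA : A.det = 1) (hB : B.det = 1) :
    log (opNorm (A * B)) ≤ log (opNorm A) + log (opNorm B) := by
  have hA1 := one_le_opNorm_of_det_eq_one hA
  have hB1 := one_le_opNorm_of_det_eq_one hB
  have hAB : 1 ≤ opNorm (A * B) :=
    one_le_opNorm_of_det_eq_one (by rw [Matrix.det_mul, hA, hB, one_mul])
  rw [← log_mul (by linarith) (by linarith)]
  exact log_le_log (by linarith) (opNorm_mul_le A B)

theorem opNorm_expDiag_le (s : ℝ) : opNorm (expDiag s) ≤ exp |s| := by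
  have hdiag : expDiag s = Matrix.diagonal ![exp s, exp (-s)] := by
    apply mat2_ext <;> simp [expDiag]
  have hnorm : opNorm (expDiag s) = ‖![exp s, exp (-s)]‖ := by
    rw [hdiag]
    exact Matrix.l2_opNorm_diagonal _
  rw [hnorm, pi_norm_le_iff_of_nonneg (exp_pos _).le, Fin.forall_fin_two]
  simp [le_abs_self, neg_le_abs]

theorem exp_le_opNorm_expDiag (s : ℝ) : exp s ≤ opNorm (expDiag s) := by
  refine le_of_sq_le_sq ?_ (opNorm_nonneg _)
  simpa [expDiag] using sq_add_sq_le_opNorm_sq (expDiag s) 0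

theorem norm_adjugate_le (A : Mat2) : ‖A.adjugate‖ ≤ ‖A‖ := by
  rw [Matrix.norm_le_iff (norm_nonneg A), Matrix.adjugate_fin_two]
  simp [Fin.forall_fin_two, Matrix.norm_entry_le_entrywise_sup_norm, -Real.norm_eq_abs]

end OpNorm

section Cocycle

/-- A continuous `1`-periodic map into `SL(2, ℝ)`. -/
structure IsSL2Map (A : ℝ → Mat2) : Prop where
  periodic : Function.Periodic A 1
  continuous : Continuous A
  det_eq_one : ∀ x, (A x).det = 1

/-- The integral `∫₀¹ log ‖A^n(x)‖ dx`, that is `n L_n(A)`. -/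
noncomputable def integralLogNorm (ω : ℝ) (A : ℝ → Mat2) (n : ℕ) : ℝ :=
  ∫ x in (0 : ℝ)..1, log (opNorm (cocycle ω A n x))

variable {ω : ℝ} {A B : ℝ → Mat2}

theorem cocycle_add (ω : ℝ) (A : ℝ → Mat2) (m n : ℕ) (x : ℝ) :
    cocycle ω A (m + n) x = cocycle ω A m (x + n * ω) * cocycle ω A n x := by
  induction m with
  | zero => simp [cocycle]
  | succ m ih =>
    rw [Nat.add_right_comm, cocycle, cocycle, ih, ← mul_assoc]
    push_cast
    ring_nf

theorem cocycle_congr {n : ℕ} {x : ℝ} (h : ∀ i < n, A (x + i * ω) = B (x + i * ω)) :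
    cocycle ω A n x = cocycle ω B n x := by
  induction n with
  | zero => rfl
  | succ n ih =>
    rw [cocycle, cocycle, h n n.lt_succ_self, ih fun i hi => h i (hi.trans n.lt_succ_self)]

theorem tendsto_cocycle {ι : Type*} {l : Filter ι} {A : ι → ℝ → Mat2}
    (h : ∀ y, Tendsto (fun k => A k y) l (nhds (B y))) (ω : ℝ) (n : ℕ) (x : ℝ) :
    Tendsto (fun k => cocycle ω (A k) n x) l (nhds (cocycle ω B n x)) := by
  induction n with
  | zero => exact tendsto_const_nhds
  | succ n ih => exact (h _).mul ih

theorem LEn_eq_integralLogNorm_div (ω : ℝ) (A : ℝ → Mat2) (n : ℕ) :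
    LEn ω A n = integralLogNorm ω A n / n :=
  one_div_mul_eq_div _ _

namespace IsSL2Map

theorem det_cocycle (hA : IsSL2Map A) (ω : ℝ) (n : ℕ) (x : ℝ) : (cocycle ω A n x).det = 1 := by
  induction n with
  | zero => simp [cocycle]
  | succ n ih => simp [cocycle, hA.det_eq_one, ih]

theorem one_le_opNorm_cocycle (hA : IsSL2Map A) (ω : ℝ) (n : ℕ) (x : ℝ) :
    1 ≤ opNorm (cocycle ω A n x) :=
  one_le_opNorm_of_det_eq_one (hA.det_cocycle ω n x)

theorem continuous_cocycle (hA : IsSL2Map A) (ω : ℝ) (n : ℕ) : Continuous (cocycle ω A n) := by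
  induction n with
  | zero => exact continuous_const
  | succ n ih => exact (hA.continuous.comp (continuous_add_const _)).mul ih

theorem periodic_cocycle (hA : IsSL2Map A) (ω : ℝ) (n : ℕ) :
    Function.Periodic (cocycle ω A n) 1 := by
  induction n with
  | zero => exact fun x => rfl
  | succ n ih => exact fun x => by rw [cocycle, cocycle, ih x, add_right_comm, hA.periodic]

theorem log_opNorm_cocycle_nonneg (hA : IsSL2Map A) (ω : ℝ) (n : ℕ) (x : ℝ) :
    0 ≤ log (opNorm (cocycle ω A n x)) :=
  log_nonneg (hA.one_le_opNorm_cocycle ω n x)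

theorem continuous_log_opNorm_cocycle (hA : IsSL2Map A) (ω : ℝ) (n : ℕ) :
    Continuous fun x => log (opNorm (cocycle ω A n x)) :=
  (continuous_opNorm.comp (hA.continuous_cocycle ω n)).log fun x =>
    (zero_lt_one.trans_le (hA.one_le_opNorm_cocycle ω n x)).ne'

theorem log_opNorm_cocycle_le (hA : IsSL2Map A) {b : ℝ} (hb : ∀ x, opNorm (A x) ≤ b) (ω : ℝ)
    (n : ℕ) (x : ℝ) : log (opNorm (cocycle ω A n x)) ≤ n * log b := by
  induction n with
  | zero => simp [cocycle, opNorm_one]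
  | succ n ih =>
    have hstep := log_opNorm_mul_le (hA.det_eq_one (x + n * ω)) (hA.det_cocycle ω n x)
    have hlog := log_le_log
      (zero_lt_one.trans_le (one_le_opNorm_of_det_eq_one (hA.det_eq_one _))) (hb (x + n * ω))
    rw [cocycle]
    push_cast
    linarith

theorem subadditive_integralLogNorm (hA : IsSL2Map A) (ω : ℝ) :
    Subadditive (integralLogNorm ω A) := by
  intro m n
  have hm := hA.continuous_log_opNorm_cocycle ω m
  have hn := hA.continuous_log_opNorm_cocycle ω n
  have hmn := hA.continuous_log_opNorm_cocycle ω (m + n)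
  have hm_shift : Continuous fun x => log (opNorm (cocycle ω A m (x + n * ω))) :=
    hm.comp (continuous_add_const (n * ω))
  have hshift := integral_comp_add_of_periodic
    (F := fun x => log (opNorm (cocycle ω A m x)))
    (fun x => by simp only [hA.periodic_cocycle ω m x]) (n * ω)
  rw [integralLogNorm, integralLogNorm, integralLogNorm, ← hshift,
    ← intervalIntegral.integral_add (hm_shift.intervalIntegrable _ _) (hn.intervalIntegrable _ _)]
  refine intervalIntegral.integral_mono_on zero_le_one (hmn.intervalIntegrable _ _)
    ((hm_shift.add hn).intervalIntegrable _ _) fun x _ => ?_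
  rw [cocycle_add]
  exact log_opNorm_mul_le (hA.det_cocycle ω _ _) (hA.det_cocycle ω _ _)

theorem integralLogNorm_nonneg (hA : IsSL2Map A) (ω : ℝ) (n : ℕ) : 0 ≤ integralLogNorm ω A n :=
  intervalIntegral.integral_nonneg zero_le_one fun x _ => hA.log_opNorm_cocycle_nonneg ω n x

theorem bddBelow_integralLogNorm_div (hA : IsSL2Map A) (ω : ℝ) :
    BddBelow (Set.range fun n : ℕ => integralLogNorm ω A n / n) :=
  ⟨0, Set.forall_mem_range.2 fun n => div_nonneg (hA.integralLogNorm_nonneg ω n) n.cast_nonneg⟩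

theorem tendsto_LEn (hA : IsSL2Map A) (ω : ℝ) :
    Tendsto (LEn ω A) atTop (nhds (hA.subadditive_integralLogNorm ω).lim) := by
  simpa only [← LEn_eq_integralLogNorm_div] using
    (hA.subadditive_integralLogNorm ω).tendsto_lim (hA.bddBelow_integralLogNorm_div ω)

theorem mul_lim_le_integralLogNorm (hA : IsSL2Map A) (ω : ℝ) (n : ℕ) :
    n * (hA.subadditive_integralLogNorm ω).lim ≤ integralLogNorm ω A n := by
  rcases n.eq_zero_or_pos with rfl | hn
  · simpa using hA.integralLogNorm_nonneg ω 0
  · have hlim := (hA.subadditive_integralLogNorm ω).lim_le_div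
      (hA.bddBelow_integralLogNorm_div ω) hn.ne'
    rwa [le_div_iff₀ (by positivity), mul_comm] at hlim

theorem le_integralLogNorm_of_sub_le (hA : IsSL2Map A) {L C : ℝ}
    (h : ∀ n : ℕ, n * L - C ≤ integralLogNorm ω A n) (n : ℕ) : n * L ≤ integralLogNorm ω A n := by
  refine le_trans ?_ (hA.mul_lim_le_integralLogNorm ω n)
  gcongr
  have hlower : Tendsto (fun n : ℕ => L - C / n) atTop (nhds L) := by
    simpa using (tendsto_const_div_atTop_nhds_zero_nat C).const_sub L
  refine le_of_tendsto_of_tendsto hlower (hA.tendsto_LEn ω) ?_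
  filter_upwards [eventually_gt_atTop 0] with n hn
  have hn' : (0 : ℝ) < n := Nat.cast_pos.2 hn
  rw [LEn_eq_integralLogNorm_div, le_div_iff₀ hn', sub_mul, div_mul_cancel₀ _ hn'.ne']
  linarith [h n]

end IsSL2Map

theorem tendsto_integralLogNorm {A : ℕ → ℝ → Mat2} (hA : ∀ k, IsSL2Map (A k)) (hB : IsSL2Map B)
    (h : ∀ y, Tendsto (fun k => A k y) atTop (nhds (B y))) {b : ℝ}
    (hb : ∀ᶠ k in atTop, ∀ x, opNorm (A k x) ≤ b) (ω : ℝ) (n : ℕ) :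
    Tendsto (fun k => integralLogNorm ω (A k) n) atTop (nhds (integralLogNorm ω B n)) := by
  refine intervalIntegral.tendsto_integral_filter_of_dominated_convergence
    (fun _ => n * log b) (.of_forall fun k => ?_) ?_ (by simp) (.of_forall fun x _ => ?_)
  · exact ((hA k).continuous_log_opNorm_cocycle ω n).aestronglyMeasurable
  · filter_upwards [hb] with k hk
    refine .of_forall fun x _ => ?_
    rw [norm_of_nonneg ((hA k).log_opNorm_cocycle_nonneg ω n x)]
    exact (hA k).log_opNorm_cocycle_le hk ω n x
  · exact ((continuous_opNorm.tendsto _).comp (tendsto_cocycle h ω n x)).log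
      (zero_lt_one.trans_le (hB.one_le_opNorm_cocycle ω n x)).ne'

theorem intervalIntegrable_comp_add_of_periodic {F : ℝ → ℝ} (hF : Function.Periodic F 1)
    (hFi : IntervalIntegrable F volume 0 1) (a : ℝ) :
    IntervalIntegrable (fun x => F (x + a)) volume 0 1 := by
  simpa using (hF.intervalIntegrable₀ one_ne_zero hFi a (1 + a)).comp_add_right a

-- `F` majorises the indicator of the set on which `A` and `B` differ.
theorem log_opNorm_cocycle_le_add (hA : IsSL2Map A) (hB : IsSL2Map B) {b : ℝ} (hb1 : 1 ≤ b)
    (hb : ∀ x, opNorm (B x) ≤ b) {F : ℝ → ℝ} (hF0 : ∀ y, 0 ≤ F y)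
    (hAB : ∀ y, F y < 1 → B y = A y) (ω : ℝ) (n : ℕ) (x : ℝ) :
    log (opNorm (cocycle ω B n x)) ≤ log (opNorm (cocycle ω A n x)) +
      n * log b * ∑ i ∈ Finset.range n, F (x + i * ω) := by
  have hlog := log_nonneg hb1
  have hsum : 0 ≤ ∑ i ∈ Finset.range n, F (x + i * ω) := Finset.sum_nonneg fun i _ => hF0 _
  by_cases hsmall : ∀ i < n, F (x + i * ω) < 1
  · rw [cocycle_congr fun i hi => hAB _ (hsmall i hi)]
    exact le_add_of_nonneg_right (by positivity)
  · push Not at hsmall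
    obtain ⟨i, hi, hFi⟩ := hsmall
    have hone := hFi.trans (Finset.single_le_sum (f := fun i : ℕ => F (x + i * ω))
      (fun i _ => hF0 _) (Finset.mem_range.2 hi))
    have hB_le := hB.log_opNorm_cocycle_le hb ω n x
    have hA_nonneg := hA.log_opNorm_cocycle_nonneg ω n x
    nlinarith [mul_le_mul_of_nonneg_left hone (show 0 ≤ n * log b by positivity)]

theorem integralLogNorm_le_add (hA : IsSL2Map A) (hB : IsSL2Map B) {b : ℝ} (hb1 : 1 ≤ b)
    (hb : ∀ x, opNorm (B x) ≤ b) {F : ℝ → ℝ} (hF0 : ∀ y, 0 ≤ F y) (hFp : Function.Periodic F 1)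
    (hFi : IntervalIntegrable F volume 0 1) (hAB : ∀ y, F y < 1 → B y = A y) (ω : ℝ) (n : ℕ) :
    integralLogNorm ω B n ≤
      integralLogNorm ω A n + n ^ 2 * log b * ∫ x in (0 : ℝ)..1, F x := by
  have hshift := intervalIntegrable_comp_add_of_periodic hFp hFi
  have hsum : IntervalIntegrable (fun x => ∑ i ∈ Finset.range n, F (x + i * ω)) volume 0 1 := by
    simpa only [Finset.sum_fn] using IntervalIntegrable.sum _ fun (i : ℕ) _ => hshift (i * ω)
  have hA_int := (hA.continuous_log_opNorm_cocycle ω n).intervalIntegrable (μ := volume) 0 1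
  have hB_int := (hB.continuous_log_opNorm_cocycle ω n).intervalIntegrable (μ := volume) 0 1
  calc integralLogNorm ω B n
      ≤ ∫ x in (0 : ℝ)..1, (log (opNorm (cocycle ω A n x)) +
          n * log b * ∑ i ∈ Finset.range n, F (x + i * ω)) :=
        intervalIntegral.integral_mono_on zero_le_one hB_int (hA_int.add (hsum.const_mul _))
          fun x _ => log_opNorm_cocycle_le_add hA hB hb1 hb hF0 hAB ω n x
    _ = integralLogNorm ω A n + n * log b * (n * ∫ x in (0 : ℝ)..1, F x) := by
        rw [intervalIntegral.integral_add hA_int (hsum.const_mul _),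
          intervalIntegral.integral_const_mul,
          intervalIntegral.integral_finsetSum fun i _ => hshift _]
        simp [integral_comp_add_of_periodic hFp, integralLogNorm]
    _ = integralLogNorm ω A n + n ^ 2 * log b * ∫ x in (0 : ℝ)..1, F x := by ring

end Cocycle

/-! ### Exponents of the approximations and of their limit -/

/-- `A` is conjugate over `x ↦ x + ω`, by the `SL(2, ℝ)`-valued map `V`, to the diagonal cocycle
with exponent `g`. The inverse of `V y` is written as its adjugate. -/
structure IsConjToExpDiag (ω : ℝ) (A V : ℝ → Mat2) (g : ℝ → ℝ) : Prop where
  det_eq_one : ∀ y, (V y).det = 1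
  eq_conj : ∀ y, A y = V (y + ω) * expDiag (g y) * (V y).adjugate

namespace IsConjToExpDiag

variable {ω R T : ℝ} {A V : ℝ → Mat2} {g : ℝ → ℝ}

theorem adjugate_mul (h : IsConjToExpDiag ω A V g) (y : ℝ) : (V y).adjugate * V y = 1 := by
  rw [Matrix.adjugate_mul, h.det_eq_one, one_smul]

theorem cocycle_eq (h : IsConjToExpDiag ω A V g) (n : ℕ) (x : ℝ) : cocycle ω A n x =
    V (x + n * ω) * expDiag (birkhoffSum (· + ω) g n x) * (V x).adjugate := by
  induction n with
  | zero => simp [cocycle, expDiag_zero, Matrix.mul_adjugate, h.det_eq_one]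
  | succ n ih =>
    have hsum : birkhoffSum (· + ω) g (n + 1) x =
        g (x + n * ω) + birkhoffSum (· + ω) g n x := by
      rw [birkhoffSum_add_right, birkhoffSum_add_right, Finset.sum_range_succ, add_comm]
    rw [cocycle, ih, h.eq_conj, hsum, expDiag_add]
    simp only [← mul_assoc]
    rw [mul_assoc (_ * _) _ (V (x + n * ω)), h.adjugate_mul, mul_one]
    congr 4
    push_cast
    ring

theorem birkhoffSum_sub_le_log_opNorm_cocycle (h : IsConjToExpDiag ω A V g)
    (hV : ∀ x, opNorm (V x) ≤ exp R) (hV' : ∀ x, opNorm (V x).adjugate ≤ exp R) {n : ℕ} {x : ℝ}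
    (hpos : 0 < opNorm (cocycle ω A n x)) :
    birkhoffSum (· + ω) g n x - 2 * R ≤ log (opNorm (cocycle ω A n x)) := by
  have hdiag : expDiag (birkhoffSum (· + ω) g n x) =
      (V (x + n * ω)).adjugate * cocycle ω A n x * V x := by
    rw [h.cocycle_eq]
    simp only [mul_assoc, h.adjugate_mul, mul_one]
    rw [← mul_assoc, h.adjugate_mul, one_mul]
  have hexp : exp (birkhoffSum (· + ω) g n x) ≤ exp R * opNorm (cocycle ω A n x) * exp R :=
    calc exp (birkhoffSum (· + ω) g n x) ≤ opNorm (expDiag (birkhoffSum (· + ω) g n x)) :=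
        exp_le_opNorm_expDiag _
      _ ≤ opNorm (V (x + n * ω)).adjugate * opNorm (cocycle ω A n x) * opNorm (V x) := by
        rw [hdiag]
        exact opNorm_mul_mul_le _ _ _
      _ ≤ exp R * opNorm (cocycle ω A n x) * exp R := by
        gcongr
        exacts [opNorm_nonneg _, hV' _, hV _]
  have hlog := log_le_log (exp_pos _) hexp
  rw [log_mul (by positivity) (by positivity), log_mul (by positivity) hpos.ne', log_exp,
    log_exp] at hlog
  linarith

theorem log_opNorm_cocycle_le_birkhoffSum_add (h : IsConjToExpDiag ω A V g)
    (hV : ∀ x, opNorm (V x) ≤ exp R) (hV' : ∀ x, opNorm (V x).adjugate ≤ exp R) {n : ℕ} {x : ℝ}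
    (hpos : 0 < opNorm (cocycle ω A n x)) (hT : 0 ≤ T) (hS : -T ≤ birkhoffSum (· + ω) g n x) :
    log (opNorm (cocycle ω A n x)) ≤ birkhoffSum (· + ω) g n x + 2 * (T + R) := by
  set s := birkhoffSum (· + ω) g n x
  have habs : |s| ≤ s + 2 * T := abs_le.2 ⟨by linarith, by linarith⟩
  refine (log_le_iff_le_exp hpos).2 ?_
  calc opNorm (cocycle ω A n x)
      ≤ opNorm (V (x + n * ω)) * opNorm (expDiag s) * opNorm (V x).adjugate := by
        rw [h.cocycle_eq]
        exact opNorm_mul_mul_le _ _ _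
    _ ≤ exp R * exp (s + 2 * T) * exp R := by
        gcongr
        exacts [opNorm_nonneg _, opNorm_nonneg _, hV _,
          (opNorm_expDiag_le s).trans (exp_le_exp.2 habs), hV' _]
    _ = exp (s + 2 * (T + R)) := by
        rw [← exp_add, ← exp_add]
        ring_nf

theorem mul_integral_le_integralLogNorm (h : IsConjToExpDiag ω A V g) (hA : IsSL2Map A)
    (hg : Function.Periodic g 1) (hgc : Continuous g) (hV : ∀ x, opNorm (V x) ≤ exp R)
    (hV' : ∀ x, opNorm (V x).adjugate ≤ exp R) (n : ℕ) :
    n * ∫ x in (0 : ℝ)..1, g x ≤ integralLogNorm ω A n := by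
  refine hA.le_integralLogNorm_of_sub_le (C := 2 * R) (fun n => ?_) n
  have hS := continuous_birkhoffSum_add_right hgc ω n
  calc n * (∫ x in (0 : ℝ)..1, g x) - 2 * R
      = ∫ x in (0 : ℝ)..1, (birkhoffSum (· + ω) g n x - 2 * R) := by
        rw [intervalIntegral.integral_sub (hS.intervalIntegrable _ _) (by simp),
          integral_birkhoffSum hg hgc]
        simp
    _ ≤ integralLogNorm ω A n :=
        intervalIntegral.integral_mono_on zero_le_one
          ((hS.sub continuous_const).intervalIntegrable _ _)
          ((hA.continuous_log_opNorm_cocycle ω n).intervalIntegrable _ _) fun x _ =>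
          h.birkhoffSum_sub_le_log_opNorm_cocycle hV hV'
            (zero_lt_one.trans_le (hA.one_le_opNorm_cocycle ω n x))

theorem integralLogNorm_le (h : IsConjToExpDiag ω A V g) (hA : IsSL2Map A)
    (hg : Function.Periodic g 1) (hgc : Continuous g) (hV : ∀ x, opNorm (V x) ≤ exp R)
    (hV' : ∀ x, opNorm (V x).adjugate ≤ exp R) {n : ℕ} (hT : 0 ≤ T)
    (hS : ∀ x, -T ≤ birkhoffSum (· + ω) g n x) :
    integralLogNorm ω A n ≤ n * (∫ x in (0 : ℝ)..1, g x) + 2 * (T + R) := by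
  have hSc := continuous_birkhoffSum_add_right hgc ω n
  calc integralLogNorm ω A n
      ≤ ∫ x in (0 : ℝ)..1, (birkhoffSum (· + ω) g n x + 2 * (T + R)) :=
        intervalIntegral.integral_mono_on zero_le_one
          ((hA.continuous_log_opNorm_cocycle ω n).intervalIntegrable _ _)
          ((hSc.add continuous_const).intervalIntegrable _ _) fun x _ =>
          h.log_opNorm_cocycle_le_birkhoffSum_add hV hV'
            (zero_lt_one.trans_le (hA.one_le_opNorm_cocycle ω n x)) hT (hS x)
    _ = n * (∫ x in (0 : ℝ)..1, g x) + 2 * (T + R) := by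
        rw [intervalIntegral.integral_add (hSc.intervalIntegrable _ _) (by simp),
          integral_birkhoffSum hg hgc]
        simp

end IsConjToExpDiag

namespace ConjScheme

variable (S : ConjScheme) {a : ℕ → ℝ} (k : ℕ)

theorem isConjToExpDiag_approx (a : ℕ → ℝ) :
    IsConjToExpDiag S.ω (S.approx a k) (S.conj a k) (S.exponent a k) :=
  ⟨S.det_conj a k, fun _ => rfl⟩

theorem isSL2Map_approx (ha : S.Admissible a) : IsSL2Map (S.approx a k) :=
  ⟨S.periodic_approx a k, (S.contDiff_approx k ha).continuous, S.det_approx a k⟩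

theorem isSL2Map_limit (ha : S.Admissible a) : IsSL2Map (S.limit a) :=
  ⟨S.periodic_limit a, (S.contDiff_limit ha).continuous, S.det_limit ha⟩

theorem exists_opNorm_conj_le : ∃ p : ℕ, ∀ a, S.Admissible a → ∀ k x,
    opNorm (S.conj a k x) ≤ exp ((scaleSeq k : ℝ) ^ p) ∧
      opNorm (S.conj a k x).adjugate ≤ exp ((scaleSeq k : ℝ) ^ p) := by
  obtain ⟨C, hC, hopNorm⟩ := exists_opNorm_le
  obtain ⟨q, hq⟩ := (S.hasGrowth_conj 0).exists_derivBound
  obtain ⟨p, hp⟩ := isGrowthScale_expScale.exists_const_mul_le C q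
  refine ⟨p, fun a ha k x => ?_⟩
  have hconj : ‖S.conj a k x‖ ≤ expScale q (scaleSeq k) := (hq (⟨a, ha⟩, k)).norm_apply_le x
  have hbound := hp _ (two_le_cast_scaleSeq k)
  constructor
  · calc opNorm (S.conj a k x) ≤ C * ‖S.conj a k x‖ := hopNorm _
      _ ≤ C * expScale q (scaleSeq k) := by gcongr
      _ ≤ exp ((scaleSeq k : ℝ) ^ p) := hbound
  · calc opNorm (S.conj a k x).adjugate ≤ C * ‖(S.conj a k x).adjugate‖ := hopNorm _
      _ ≤ C * expScale q (scaleSeq k) := by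
        gcongr
        exact (norm_adjugate_le _).trans hconj
      _ ≤ exp ((scaleSeq k : ℝ) ^ p) := hbound

theorem exists_eventually_opNorm_approx_le (ha : S.Admissible a) :
    ∃ b, 1 ≤ b ∧ ∀ᶠ k in atTop, ∀ x, opNorm (S.approx a k x) ≤ b := by
  obtain ⟨C, hC, hopNorm⟩ := exists_opNorm_le
  obtain ⟨A, hA⟩ := exists_derivBound_of_periodic (S.contDiff_limit ha) (S.periodic_limit a) 0
  refine ⟨max 1 (C * (A + 2)), le_max_left _ _, ?_⟩
  filter_upwards [S.eventually_derivBound_limit_sub_approx 0] with k hk x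
  refine le_max_of_le_right ((hopNorm _).trans ?_)
  gcongr
  have hpow : ((1 : ℝ) / 2) ^ k ≤ 1 := pow_le_one₀ (by norm_num) (by norm_num)
  have hdist : ‖S.limit a x - S.approx a k x‖ ≤ 2 :=
    ((hk a ha).norm_apply_le x).trans (by linarith)
  calc ‖S.approx a k x‖ = ‖S.limit a x - (S.limit a x - S.approx a k x)‖ := by
        rw [sub_sub_cancel]
    _ ≤ ‖S.limit a x‖ + ‖S.limit a x - S.approx a k x‖ := norm_sub_le _ _
    _ ≤ A + 2 := add_le_add (hA.norm_apply_le x) hdist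

theorem tendsto_integralLogNorm_approx (ha : S.Admissible a) (n : ℕ) :
    Tendsto (fun k => integralLogNorm S.ω (S.approx a k) n) atTop
      (nhds (integralLogNorm S.ω (S.limit a) n)) := by
  obtain ⟨b, -, hb⟩ := S.exists_eventually_opNorm_approx_le ha
  exact tendsto_integralLogNorm (fun k => S.isSL2Map_approx k ha) (S.isSL2Map_limit ha)
    (S.tendsto_approx ha) hb S.ω n

theorem mul_meanExponent_le_integralLogNorm (ha : S.Admissible a) (n : ℕ) :
    n * S.meanExponent a k ≤ integralLogNorm S.ω (S.approx a k) n := by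
  obtain ⟨p, hp⟩ := S.exists_opNorm_conj_le
  rw [← S.integral_exponent]
  exact (S.isConjToExpDiag_approx k a).mul_integral_le_integralLogNorm (S.isSL2Map_approx k ha)
    (S.periodic_exponent a k) (S.contDiff_exponent k a).continuous (fun x => (hp a ha k x).1)
    (fun x => (hp a ha k x).2) n

theorem exists_tendsto_LEn_limit_of_le_meanExponent (ha : S.Admissible a) {κ : ℝ}
    (hκ : ∀ k, κ ≤ S.meanExponent a k) :
    ∃ L, κ ≤ L ∧ Tendsto (LEn S.ω (S.limit a)) atTop (nhds L) := by
  have hlim := (S.isSL2Map_limit ha).tendsto_LEn S.ω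
  refine ⟨_, ge_of_tendsto hlim ?_, hlim⟩
  filter_upwards [eventually_gt_atTop 0] with n hn
  rw [LEn_eq_integralLogNorm_div, le_div_iff₀' (Nat.cast_pos.2 hn)]
  refine ge_of_tendsto' (S.tendsto_integralLogNorm_approx ha n) fun k => ?_
  exact (mul_le_mul_of_nonneg_left (hκ k) n.cast_nonneg).trans
    (S.mul_meanExponent_le_integralLogNorm k ha n)

end ConjScheme

/-! ### Vanishing of the exponent -/

namespace ConjScheme

/-- The indicator of the set where the `k`-th perturbation acts. -/
noncomputable def cutoffIndicator (S : ConjScheme) (k : ℕ) : ℝ → ℝ :=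
  (Function.support (S.cutoff k)).indicator 1

/-- A majorant of the indicator of the set where `approx a (k + 1)` and `approx a k` differ. -/
noncomputable def changeMajorant (S : ConjScheme) (k : ℕ) (y : ℝ) : ℝ :=
  S.cutoffIndicator k y + S.cutoffIndicator k (y + -(truncOrder k * S.ω)) +
    S.cutoffIndicator k (y + (truncOrder k + 1 : ℕ) * S.ω)

variable (S : ConjScheme) {a : ℕ → ℝ} (k : ℕ)

theorem cutoffIndicator_nonneg (y : ℝ) : 0 ≤ S.cutoffIndicator k y :=
  Set.indicator_nonneg (fun _ _ => zero_le_one) y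

theorem periodic_cutoffIndicator : Function.Periodic (S.cutoffIndicator k) 1 := fun y => by
  simp only [cutoffIndicator, Set.indicator, Function.mem_support, S.periodic_cutoff k y,
    Pi.one_apply]

theorem intervalIntegrable_cutoffIndicator :
    IntervalIntegrable (S.cutoffIndicator k) volume 0 1 := by
  have hopen : IsOpen (Function.support (S.cutoff k)) :=
    isOpen_ne_fun (S.contDiff_cutoff k).continuous continuous_const
  rw [intervalIntegrable_iff]
  exact (integrableOn_const (by simp)).indicator hopen.measurableSet

theorem cutoff_eq_zero_of_cutoffIndicator_lt_one {k : ℕ} {y : ℝ}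
    (hy : S.cutoffIndicator k y < 1) : S.cutoff k y = 0 := by
  by_contra hne
  exact hy.ne (Set.indicator_of_mem hne _)

theorem changeMajorant_nonneg (y : ℝ) : 0 ≤ S.changeMajorant k y :=
  add_nonneg (add_nonneg (S.cutoffIndicator_nonneg k _) (S.cutoffIndicator_nonneg k _))
    (S.cutoffIndicator_nonneg k _)

theorem periodic_changeMajorant : Function.Periodic (S.changeMajorant k) 1 := fun y => by
  simp only [changeMajorant, add_right_comm y 1, S.periodic_cutoffIndicator k _]

theorem intervalIntegrable_changeMajorant :
    IntervalIntegrable (S.changeMajorant k) volume 0 1 := by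
  have hshift := intervalIntegrable_comp_add_of_periodic (S.periodic_cutoffIndicator k)
    (S.intervalIntegrable_cutoffIndicator k)
  exact ((S.intervalIntegrable_cutoffIndicator k).add (hshift _)).add (hshift _)

theorem integral_changeMajorant_le :
    ∫ x in (0 : ℝ)..1, S.changeMajorant k x ≤ 3 / truncOrder k := by
  have hintegrable := S.intervalIntegrable_cutoffIndicator k
  have hper := S.periodic_cutoffIndicator k
  have hshift := intervalIntegrable_comp_add_of_periodic hper hintegrable
  have hm : (0 : ℝ) < truncOrder k := Nat.cast_pos.2 (truncOrder_pos k)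
  have hone : ∫ x in (0 : ℝ)..1, S.cutoffIndicator k x ≤ 1 / truncOrder k := by
    refine ((S.orbitSeparated_cutoff k).volume_support_le (S.periodic_cutoff k)
      (S.contDiff_cutoff k).continuous).trans ?_
    gcongr
    push_cast
    linarith
  calc ∫ x in (0 : ℝ)..1, S.changeMajorant k x
      = 3 * ∫ x in (0 : ℝ)..1, S.cutoffIndicator k x := by
        simp only [changeMajorant]
        rw [intervalIntegral.integral_add (hintegrable.add (hshift _)) (hshift _),
          intervalIntegral.integral_add hintegrable (hshift _), integral_comp_add_of_periodic hper,
          integral_comp_add_of_periodic hper]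
        ring
    _ ≤ 3 * (1 / truncOrder k) := by gcongr
    _ = 3 / truncOrder k := mul_one_div _ _

theorem approx_succ_eq_approx (a : ℕ → ℝ) {y : ℝ} (hy : S.changeMajorant k y < 1) :
    S.approx a (k + 1) y = S.approx a k y := by
  have h0 := S.cutoffIndicator_nonneg k y
  have h1 := S.cutoffIndicator_nonneg k (y + -(truncOrder k * S.ω))
  have h2 := S.cutoffIndicator_nonneg k (y + (truncOrder k + 1 : ℕ) * S.ω)
  rw [changeMajorant] at hy
  have hzero : ∀ {z}, S.cutoffIndicator k z < 1 → S.perturbation a k z = 0 := fun hz => by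
    rw [perturbation, S.cutoff_eq_zero_of_cutoffIndicator_lt_one hz, mul_zero]
  have hupper := upperTerm_eq_zero (ω := S.ω) (g := S.exponent a k)
    (hzero (show S.cutoffIndicator k (y + (truncOrder k + 1 : ℕ) * S.ω) < 1 by linarith))
  have hlower := lowerTerm_eq_zero (ω := S.ω) (g := S.exponent a k)
    (hzero (show S.cutoffIndicator k (y - truncOrder k * S.ω) < 1 by
      rw [sub_eq_add_neg]; linarith))
  rw [approx_succ_eq_conj, truncError, hupper, hlower, offDiag_zero,
    hzero (show S.cutoffIndicator k y < 1 by linarith)]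
  simp

theorem integralLogNorm_approx_succ_le (ha : S.Admissible a) {b : ℝ} (hb1 : 1 ≤ b)
    (hb : ∀ x, opNorm (S.approx a (k + 1) x) ≤ b) (n : ℕ) :
    integralLogNorm S.ω (S.approx a (k + 1)) n ≤
      integralLogNorm S.ω (S.approx a k) n + n ^ 2 * log b * (3 / truncOrder k) := by
  have hlog := log_nonneg hb1
  refine (integralLogNorm_le_add (S.isSL2Map_approx k ha) (S.isSL2Map_approx (k + 1) ha) hb1 hb
    (S.changeMajorant_nonneg k) (S.periodic_changeMajorant k)
    (S.intervalIntegrable_changeMajorant k) (fun y => S.approx_succ_eq_approx k a) S.ω n).trans ?_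
  gcongr
  exact S.integral_changeMajorant_le k

theorem two_pow_mul_truncOrder_le (i : ℕ) : 2 ^ i * truncOrder k ≤ truncOrder (k + i) := by
  induction i with
  | zero => simp
  | succ i ih =>
    calc 2 ^ (i + 1) * truncOrder k = 2 * (2 ^ i * truncOrder k) := by ring
      _ ≤ 2 * truncOrder (k + i) := by gcongr
      _ ≤ truncOrder (k + (i + 1)) := two_mul_truncOrder_le (by lia)

theorem integralLogNorm_approx_add_le (ha : S.Admissible a) {b : ℝ} (hb1 : 1 ≤ b)
    (hb : ∀ i ≥ k, ∀ x, opNorm (S.approx a i x) ≤ b) (n i : ℕ) :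
    integralLogNorm S.ω (S.approx a (k + i)) n ≤ integralLogNorm S.ω (S.approx a k) n +
      n ^ 2 * (6 * log b) / truncOrder k * (1 - (1 / 2) ^ i) := by
  induction i with
  | zero => simp
  | succ i ih =>
    have hlog := log_nonneg hb1
    have hm : (0 : ℝ) < truncOrder k := Nat.cast_pos.2 (truncOrder_pos k)
    have hgeom : 3 / (truncOrder (k + i) : ℝ) ≤ 3 / truncOrder k * (1 / 2) ^ i := by
      rw [div_pow, one_pow, div_mul_div_comm, mul_one, mul_comm (truncOrder k : ℝ)]
      gcongr
      exact_mod_cast two_pow_mul_truncOrder_le k i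
    calc integralLogNorm S.ω (S.approx a (k + i + 1)) n
        ≤ integralLogNorm S.ω (S.approx a (k + i)) n +
            n ^ 2 * log b * (3 / truncOrder (k + i)) :=
          S.integralLogNorm_approx_succ_le (k + i) ha hb1 (hb _ (by lia)) n
      _ ≤ integralLogNorm S.ω (S.approx a k) n +
            n ^ 2 * (6 * log b) / truncOrder k * (1 - (1 / 2) ^ i) +
            n ^ 2 * log b * (3 / truncOrder k * (1 / 2) ^ i) := by gcongr
      _ = integralLogNorm S.ω (S.approx a k) n +
            n ^ 2 * (6 * log b) / truncOrder k * (1 - (1 / 2) ^ (i + 1)) := by ring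

theorem exists_eventually_integralLogNorm_limit_le (ha : S.Admissible a) :
    ∃ C, 0 ≤ C ∧ ∀ᶠ k in atTop, ∀ n : ℕ, integralLogNorm S.ω (S.limit a) n ≤
      integralLogNorm S.ω (S.approx a k) n + n ^ 2 * C / truncOrder k := by
  obtain ⟨b, hb1, hb⟩ := S.exists_eventually_opNorm_approx_le ha
  have hlog := log_nonneg hb1
  refine ⟨6 * log b, by positivity, (eventually_forall_ge_atTop.2 hb).mono fun k hk n => ?_⟩
  have hlim := (tendsto_add_atTop_iff_nat k).2 (S.tendsto_integralLogNorm_approx ha n)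
  refine le_of_tendsto' hlim fun i => ?_
  rw [add_comm i k]
  refine (S.integralLogNorm_approx_add_le k ha hb1 hk n i).trans ?_
  gcongr
  exact mul_le_of_le_one_right (by positivity) (sub_le_self _ (by positivity))

theorem exists_neg_le_birkhoffSum_exponent : ∃ p : ℕ, ∀ a, S.Admissible a → ∀ r k x,
    -(2 * π / S.c * (scaleSeq k : ℝ) ^ r + (scaleSeq k : ℝ) ^ (2 * p + 1)) ≤
      birkhoffSum (· + S.ω) (S.exponent a k) (scaleSeq k ^ (r + 1)) x := by
  obtain ⟨p, hp⟩ := (S.hasGrowth_exponent 1).exists_derivBound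
  refine ⟨p, fun a ha r k x => ?_⟩
  have hc := S.badlyApproximable.pos
  have hN : (0 : ℝ) < scaleSeq k := zero_lt_two.trans_le (two_le_cast_scaleSeq k)
  have hQ : 0 < scaleSeq k ^ (p + 1) := pow_pos (zero_lt_two.trans_le (two_le_scaleSeq k)) _
  have hLip := (hp (⟨a, ha⟩, k)).lipschitzWith
  have hdev := S.badlyApproximable.abs_birkhoffSum_sub_le (S.periodic_exponent a k) hLip hQ
    (scaleSeq k ^ (r + 1)) x
  have hmean : 0 ≤ (scaleSeq k ^ (r + 1) : ℕ) * S.meanExponent a k :=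
    mul_nonneg (Nat.cast_nonneg _) (le_trans (by positivity) (ha.two_pow_le_meanExponent k))
  rw [S.integral_exponent, Real.coe_toNNReal _ (hp (⟨a, ha⟩, k)).nonneg] at hdev
  have herror : polyScale p (scaleSeq k) * (2 * π * (scaleSeq k ^ (r + 1) : ℕ) /
      (S.c * (scaleSeq k ^ (p + 1) : ℕ)) + (scaleSeq k ^ (p + 1) : ℕ)) =
      2 * π / S.c * (scaleSeq k : ℝ) ^ r + (scaleSeq k : ℝ) ^ (2 * p + 1) := by
    rw [polyScale]
    push_cast
    field_simp
    ring
  rw [← herror]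
  exact (neg_le_neg hdev).trans (by linarith [neg_abs_le (birkhoffSum (· + S.ω)
    (S.exponent a k) (scaleSeq k ^ (r + 1)) x - (scaleSeq k ^ (r + 1) : ℕ) * S.meanExponent a k)])

-- At time `n = N_k ^ (r + 1)` the conjugacies and the fluctuations of the Birkhoff sums contribute
-- only `O(N_k ^ r)`.
theorem exists_integralLogNorm_approx_le : ∃ (r : ℕ) (C : ℝ), ∀ a, S.Admissible a → ∀ k,
    integralLogNorm S.ω (S.approx a k) (scaleSeq k ^ (r + 1)) ≤
      (scaleSeq k : ℝ) ^ (r + 1) * S.meanExponent a k + C * (scaleSeq k : ℝ) ^ r := by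
  obtain ⟨p, hp⟩ := S.exists_neg_le_birkhoffSum_exponent
  obtain ⟨q, hq⟩ := S.exists_opNorm_conj_le
  refine ⟨2 * p + 1 + q, 4 * π / S.c + 4, fun a ha k => ?_⟩
  have hN := two_le_cast_scaleSeq k
  have hc := S.badlyApproximable.pos
  have hle := (S.isConjToExpDiag_approx k a).integralLogNorm_le (S.isSL2Map_approx k ha)
    (S.periodic_exponent a k) (S.contDiff_exponent k a).continuous (fun x => (hq a ha k x).1)
    (fun x => (hq a ha k x).2) (by positivity) (hp a ha (2 * p + 1 + q) k)
  rw [S.integral_exponent, Nat.cast_pow] at hle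
  have hp_le : (scaleSeq k : ℝ) ^ (2 * p + 1) ≤ (scaleSeq k : ℝ) ^ (2 * p + 1 + q) :=
    pow_le_pow_right₀ (by linarith) (by lia)
  have hq_le : (scaleSeq k : ℝ) ^ q ≤ (scaleSeq k : ℝ) ^ (2 * p + 1 + q) :=
    pow_le_pow_right₀ (by linarith) (by lia)
  have hsplit : 4 * π / S.c = 2 * (2 * π / S.c) := by ring
  rw [hsplit, add_mul]
  linarith

theorem exists_eventually_lim_le_meanExponent_add (ha : S.Admissible a) : ∃ C, ∀ᶠ k in atTop,
    ((S.isSL2Map_limit ha).subadditive_integralLogNorm S.ω).lim ≤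
      S.meanExponent a k + C / scaleSeq k := by
  obtain ⟨b, hb, hfar⟩ := S.exists_eventually_integralLogNorm_limit_le ha
  obtain ⟨r, C, hnear⟩ := S.exists_integralLogNorm_approx_le
  refine ⟨C + b, ?_⟩
  filter_upwards [hfar, eventually_ge_atTop r] with k hfar hk
  have hlower := (S.isSL2Map_limit ha).mul_lim_le_integralLogNorm S.ω (scaleSeq k ^ (r + 1))
  have hupper := hfar (scaleSeq k ^ (r + 1))
  have happrox := hnear a ha k
  have hN := two_le_cast_scaleSeq k
  rw [cast_truncOrder, cast_scaleSeq_succ] at hupper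
  push_cast at hlower hupper
  generalize (scaleSeq k : ℝ) = N at *
  have hchange : (N ^ (r + 1)) ^ 2 * b / (N ^ (k + 2)) ^ 2 ≤ b * N ^ r := by
    have hpow : N ^ (r + 1) ≤ N ^ (k + 2) := pow_le_pow_right₀ (by linarith) (by lia)
    rw [div_le_iff₀ (by positivity)]
    calc (N ^ (r + 1)) ^ 2 * b ≤ (N ^ (k + 2)) ^ 2 * b := by gcongr
      _ = b * 1 * (N ^ (k + 2)) ^ 2 := by ring
      _ ≤ b * N ^ r * (N ^ (k + 2)) ^ 2 := by gcongr; exact one_le_pow₀ (by linarith)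
  have hsum : N ^ (r + 1) * (S.meanExponent a k + (C + b) / N) =
      N ^ (r + 1) * S.meanExponent a k + C * N ^ r + b * N ^ r := by
    field_simp
    ring
  refine le_of_mul_le_mul_left ?_ (show 0 < N ^ (r + 1) by positivity)
  linarith

theorem tendsto_LEn_limit_zero (ha : S.Admissible a)
    (hmean : Tendsto (S.meanExponent a) atTop (nhds 0)) :
    Tendsto (LEn S.ω (S.limit a)) atTop (nhds 0) := by
  have hlimit := S.isSL2Map_limit ha
  have hlim := hlimit.tendsto_LEn S.ω
  have hnonneg : 0 ≤ (hlimit.subadditive_integralLogNorm S.ω).lim :=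
    ge_of_tendsto' hlim fun n => by
      rw [LEn_eq_integralLogNorm_div]
      exact div_nonneg (hlimit.integralLogNorm_nonneg S.ω n) n.cast_nonneg
  suffices hle : (hlimit.subadditive_integralLogNorm S.ω).lim ≤ 0 by
    rwa [hle.antisymm hnonneg] at hlim
  obtain ⟨C, hC⟩ := S.exists_eventually_lim_le_meanExponent_add ha
  refine ge_of_tendsto ?_ hC
  simpa using hmean.add (tendsto_cast_scaleSeq.const_div_atTop C)

end ConjScheme

/-! ### Keeping or destroying the exponent -/

namespace ConjScheme

/-- The mean exponent at step `k` when the smallest admissible weight `N_{k+1}` is used before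
step `n`, and the largest one, `Λ_k m_k / 2`, from step `n` on. -/
noncomputable def switchedMean (S : ConjScheme) (n : ℕ∞) : ℕ → ℝ
  | 0 => S.lam
  | k + 1 => S.switchedMean n k -
    (if (k : ℕ∞) < n then (scaleSeq (k + 1) : ℝ) else S.switchedMean n k * truncOrder k / 2) *
      ∫ x in (0 : ℝ)..1, S.cutoff k x

/-- The weights that are smallest possible before step `n` and largest possible from then on. The
value `n = ⊤` gives the limit cocycle with large exponent, and finite `n` the ones with zero
exponent that approach it. -/
noncomputable def switchedWeights (S : ConjScheme) (n : ℕ∞) (k : ℕ) : ℝ :=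
  if (k : ℕ∞) < n then (scaleSeq (k + 1) : ℝ) else S.switchedMean n k * truncOrder k / 2

variable (S : ConjScheme) {n : ℕ∞} {k : ℕ}

variable (n k) in
theorem meanExponent_switchedWeights :
    S.meanExponent (S.switchedWeights n) k = S.switchedMean n k := by
  induction k with
  | zero => simp [meanExponent, switchedMean]
  | succ k ih => rw [meanExponent_succ, ih, switchedWeights, switchedMean]

theorem switchedWeights_of_lt (h : (k : ℕ∞) < n) : S.switchedWeights n k = scaleSeq (k + 1) :=
  if_pos h

theorem switchedWeights_eq_top (n k : ℕ) (h : k < n) :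
    S.switchedWeights n k = S.switchedWeights ⊤ k := by
  rw [S.switchedWeights_of_lt (by exact_mod_cast h),
    S.switchedWeights_of_lt (ENat.natCast_lt_top k)]

theorem switchedWeights_of_le (h : n ≤ k) :
    S.switchedWeights n k = S.meanExponent (S.switchedWeights n) k * truncOrder k / 2 := by
  rw [meanExponent_switchedWeights, switchedWeights, if_neg h.not_gt]

theorem cast_scaleSeq_succ_le_mul_truncOrder {L : ℝ} (hL : (1 / 2) ^ k ≤ L) :
    (scaleSeq (k + 1) : ℝ) ≤ L * truncOrder k / 2 := by
  have hpow : (2 : ℝ) ^ (k + 1) ≤ scaleSeq (k + 1) := two_pow_le_cast_scaleSeq (k + 1)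
  have hLN : 2 ≤ L * scaleSeq (k + 1) :=
    calc (2 : ℝ) = (1 / 2) ^ k * 2 ^ (k + 1) := by rw [pow_succ, ← mul_assoc, ← mul_pow]; norm_num
      _ ≤ L * scaleSeq (k + 1) := by gcongr; exact le_trans (by positivity) hL
  rw [cast_truncOrder]
  nlinarith

theorem switchedWeights_mem_Icc
    (hL : (1 / 2) ^ k ≤ S.meanExponent (S.switchedWeights n) k) :
    S.switchedWeights n k ∈ Set.Icc (scaleSeq (k + 1) : ℝ)
      (S.meanExponent (S.switchedWeights n) k * truncOrder k / 2) := by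
  rcases lt_or_ge (k : ℕ∞) n with h | h
  · rw [S.switchedWeights_of_lt h]
    exact ⟨le_rfl, cast_scaleSeq_succ_le_mul_truncOrder hL⟩
  · rw [← S.switchedWeights_of_le h]
    exact ⟨(cast_scaleSeq_succ_le_mul_truncOrder hL).trans_eq (S.switchedWeights_of_le h).symm,
      le_rfl⟩

variable (n k) in
theorem two_pow_le_meanExponent_switchedWeights :
    (1 / 2) ^ k ≤ S.meanExponent (S.switchedWeights n) k := by
  induction k with
  | zero => simpa [meanExponent] using S.one_le_lam
  | succ k ih =>
    have hhalf := S.half_meanExponent_le_succ k (le_trans (by positivity) ih)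
      (S.switchedWeights_mem_Icc ih).2
    rw [pow_succ]
    linarith

variable (n) in
theorem admissible_switchedWeights : S.Admissible (S.switchedWeights n) where
  scaleSeq_le k := (S.switchedWeights_mem_Icc (S.two_pow_le_meanExponent_switchedWeights n k)).1
  le_meanExponent k :=
    (S.switchedWeights_mem_Icc (S.two_pow_le_meanExponent_switchedWeights n k)).2

variable (k) in
theorem scaleSeq_succ_mul_integral_cutoff_le :
    scaleSeq (k + 1) * ∫ x in (0 : ℝ)..1, S.cutoff k x ≤ (1 / 2) ^ (k + 1) := by
  have hle := S.truncOrder_mul_integral_cutoff_le k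
  have hN := two_le_cast_scaleSeq (k + 1)
  rw [cast_truncOrder] at hle
  calc scaleSeq (k + 1) * ∫ x in (0 : ℝ)..1, S.cutoff k x
      ≤ 1 / scaleSeq (k + 1) := by
        rw [le_div_iff₀ (by positivity)]
        linarith
    _ ≤ 1 / 2 ^ (k + 1) := by gcongr; exact two_pow_le_cast_scaleSeq (k + 1)
    _ = (1 / 2) ^ (k + 1) := (one_div_pow _ _).symm

variable (k) in
theorem lam_sub_one_add_le_meanExponent_switchedWeights_top :
    S.lam - 1 + (1 / 2) ^ k ≤ S.meanExponent (S.switchedWeights ⊤) k := by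
  induction k with
  | zero => simp [meanExponent]
  | succ k ih =>
    have hdrop := S.scaleSeq_succ_mul_integral_cutoff_le k
    rw [meanExponent_succ, S.switchedWeights_of_lt (ENat.natCast_lt_top k)]
    linarith [pow_succ (1 / 2 : ℝ) k]

theorem le_truncOrder_mul_integral_cutoff (k : ℕ) :
    S.c / 48 ≤ truncOrder k * ∫ x in (0 : ℝ)..1, S.cutoff k x := by
  have hm : (1 : ℝ) ≤ truncOrder k := by exact_mod_cast truncOrder_pos k
  have hwidth : S.c / (12 * truncOrder k) ≤ 1 := by
    rw [div_le_one (by positivity)]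
    linarith [S.badlyApproximable.le_one]
  have hle := le_integral_bump (S.width_pos k) hwidth
  calc S.c / 48 = truncOrder k * (S.c / (12 * truncOrder k) / 4) := by field_simp; ring
    _ ≤ truncOrder k * ∫ x in (0 : ℝ)..1, S.cutoff k x := by gcongr; exact hle

theorem meanExponent_switchedWeights_succ_le (h : n ≤ k) :
    S.meanExponent (S.switchedWeights n) (k + 1) ≤
      (1 - S.c / 96) * S.meanExponent (S.switchedWeights n) k := by
  have hmean : 0 ≤ S.meanExponent (S.switchedWeights n) k :=
    le_trans (by positivity) (S.two_pow_le_meanExponent_switchedWeights n k)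
  have hdrop := mul_le_mul_of_nonneg_left (S.le_truncOrder_mul_integral_cutoff k) hmean
  rw [meanExponent_succ, S.switchedWeights_of_le h]
  linarith

theorem tendsto_meanExponent_switchedWeights (n : ℕ) :
    Tendsto (S.meanExponent (S.switchedWeights n)) atTop (nhds 0) := by
  have hc := S.badlyApproximable.pos
  have hc1 := S.badlyApproximable.le_one
  have hgeom : ∀ k, S.meanExponent (S.switchedWeights n) (k + n) ≤
      (1 - S.c / 96) ^ k * S.meanExponent (S.switchedWeights n) (0 + n) := fun k =>
    le_geom (u := fun k => S.meanExponent (S.switchedWeights n) (k + n)) (by linarith) k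
      fun i _ => by
        rw [add_right_comm]
        exact S.meanExponent_switchedWeights_succ_le (by exact_mod_cast n.le_add_left i)
  rw [← tendsto_add_atTop_iff_nat n]
  refine squeeze_zero
    (fun k => le_trans (by positivity) (S.two_pow_le_meanExponent_switchedWeights n _)) hgeom ?_
  simpa using (tendsto_pow_atTop_nhds_zero_of_lt_one (r := 1 - S.c / 96)
    (by linarith) (by linarith)).mul_const (S.meanExponent (S.switchedWeights n) (0 + n))

variable {S} in
theorem eventually_opNorm_iteratedDeriv_limit_sub_le {a : ℕ → ℝ} {b : ℕ → ℕ → ℝ}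
    (ha : S.Admissible a) (hb : ∀ k, S.Admissible (b k)) (hab : ∀ k, ∀ i < k, b k i = a i)
    (j : ℕ) {ε : ℝ} (hε : 0 < ε) :
    ∀ᶠ k in atTop, ∀ x,
      opNorm (iteratedDeriv j (fun y => S.limit (b k) y - S.limit a y) x) ≤ ε := by
  obtain ⟨C, hC, hop⟩ := exists_opNorm_le
  have hpow : Tendsto (fun k : ℕ => C * (2 * (1 / 2) ^ k + 2 * (1 / 2) ^ k)) atTop (nhds 0) := by
    have := (tendsto_pow_atTop_nhds_zero_of_lt_one (r := (1 / 2 : ℝ)) (by norm_num)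
      (by norm_num)).const_mul 2
    simpa using (this.add this).const_mul C
  filter_upwards [S.eventually_derivBound_limit_sub_approx j, hpow.eventually_le_const hε]
    with k hclose hk x
  have hdiff := (hclose (b k) (hb k)).sub (hclose a ha)
  simp only [S.approx_congr (hab k), sub_sub_sub_cancel_right] at hdiff
  calc opNorm (iteratedDeriv j (fun y => S.limit (b k) y - S.limit a y) x)
      ≤ C * ‖iteratedDeriv j (fun y => S.limit (b k) y - S.limit a y) x‖ := hop _
    _ ≤ C * (2 * (1 / 2) ^ k + 2 * (1 / 2) ^ k) := by gcongr; exact hdiff.norm_le j le_rfl x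
    _ ≤ ε := hk

end ConjScheme

theorem sl2_positive_LE_not_Cinf_open_approx
    (ω : ℝ) (hω : Irrational ω)
    (M : ℝ) (hM : 1 ≤ M) (hbt : ∀ k : ℕ, cfDen ω (k + 1) ≤ M * cfDen ω k)
    (κ : ℝ) (hκ : 0 < κ) :
    ∃ (D : ℝ → Matrix (Fin 2) (Fin 2) ℝ) (C : ℕ → ℝ → Matrix (Fin 2) (Fin 2) ℝ),
      Function.Periodic D 1 ∧ ContDiff ℝ (⊤ : ℕ∞) D ∧ (∀ x, (D x).det = 1) ∧
      (∀ k, Function.Periodic (C k) 1 ∧ ContDiff ℝ (⊤ : ℕ∞) (C k) ∧ ∀ x, ((C k) x).det = 1) ∧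
      -- (i) L(D) ≥ κ
      (∃ L : ℝ, κ ≤ L ∧ Tendsto (fun m => LEn ω D m) atTop (nhds L)) ∧
      -- (ii) L(C_k) = 0 for every k
      (∀ k, Tendsto (fun m => LEn ω (C k) m) atTop (nhds 0)) ∧
      -- (iii) for every j, sup_x ‖(C_k − D)^{(j)}(x)‖ → 0 as k → ∞
      (∀ j : ℕ, ∀ ε : ℝ, 0 < ε → ∃ K : ℕ, ∀ k ≥ K, ∀ x : ℝ,
        opNorm (iteratedDeriv j (fun y => C k y - D y) x) ≤ ε) := by
  let S : ConjScheme := ⟨ω, 1 / (2 * M ^ 2), κ + 1, badlyApproximable_of_boundedType hω hM hbt,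
    by linarith⟩
  have hadm := S.admissible_switchedWeights
  have hmean : ∀ k, κ ≤ S.meanExponent (S.switchedWeights ⊤) k := fun k => by
    have hpow : (0 : ℝ) ≤ (1 / 2) ^ k := by positivity
    linarith [S.lam_sub_one_add_le_meanExponent_switchedWeights_top k, show S.lam = κ + 1 from rfl]
  exact ⟨S.limit (S.switchedWeights ⊤), fun k => S.limit (S.switchedWeights k),
    S.periodic_limit _, S.contDiff_limit (hadm ⊤), S.det_limit (hadm ⊤),
    fun k => ⟨S.periodic_limit _, S.contDiff_limit (hadm k), S.det_limit (hadm k)⟩,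
    S.exists_tendsto_LEn_limit_of_le_meanExponent (hadm ⊤) hmean,
    fun k => S.tendsto_LEn_limit_zero (hadm k) (S.tendsto_meanExponent_switchedWeights k),
    fun j ε hε => eventually_atTop.1 <| ConjScheme.eventually_opNorm_iteratedDeriv_limit_sub_le
      (hadm ⊤) (fun k => hadm k) S.switchedWeights_eq_top j hε⟩
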